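/- Let B > 0, α > 1, and C > 0. There exist δ > 0 and ε = ε(δ) > 0 such that the following holds: for each open set V ⊆ ℂ containing [-1,1] there exists N = N(B, α, C, V) ≥ 1 such that if (φ, t) is a unimodal pair that is M-times renormalizable with combinatorics bounded by B for some M > N, with critical order α̃ satisfying |α - α̃| < δ, if φ extends to a univalent map on V which is real on the real line, and |φ|_{C^3([-1,1])} ≤ C, then for all N ≤ n < M the maps φ_0^n = Z_{φ^{-1}(I_1^n)}(φ), q_j^n = Z_{I_j^n}(q_t) and φ_j^n = Z_{φ^{-1}(I_{j+1}^n)}(φ), for j = 1, ..., q_n - 1, have univalent extensions to maps defined on the ε-stadium D_ε. -/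

import Mathlib

/-!
The zooms of `φ` extend because `φ` extends to `V`: once the intervals of the cycle are short
compared with the distance from `[-1,1]` to the complement of `V`, the rescaled `ε`-stadium lies in
`V`. The zoom of `q_t` on an interval extends because the power map is univalent on a thin sector
around the half-line, as soon as the length of the interval is at most a fixed multiple `X` of its
distance to the critical point `0`. So the content is twofold: the intervals of the `n`-th cycle
become short at a rate depending only on `α`, `C` and `V` (`IsRenTower.length_le`), and for large
`n` their relative distance to `0` is bounded in terms of `α` alone (`RenCycle.away`).

*Distortion of `φ`.* The derivative of `φ` is bounded below by a constant depending only on `V` and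
`C` (`UnivExt.deriv_lower`). On a small disc about a point of `[-1,1]` the extension `Φ`, being
injective, omits a slit contained in `[-1,1]`; composing with a conformal map of the complement of
the slit into the disc gives a bounded univalent function comparable with `φ` on the reals, to which
a Harnack inequality applies. The bound is propagated from a point where `φ' = 1`. With the `C³`
bound it follows that `φ` decreases cross ratios by at most a factor exponential in the square of
the size of the image (`C3Data.cr_le`), while power maps do not decrease them (`cr_rpow`).

*Space.* Suppose that a cycle has a deeper cycle nested inside it. Then `0` lies between the returns
of `0` and of the boundary point of the central interval (`RenCycle.Deeper.zero_between`), so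
neighbourhoods of an interval that surround no other hull of these two orbits can be pulled back
along the cycle without meeting `0` (`RenCycle.Tup.pull`). The pulled back neighbourhoods cover
each point at most three times, so the accumulated distortion is bounded, and is as close to `1` as
desired if the intervals are short (`RenCycle.koebe`). The shortest hull has space around it for
trivial reasons; this space is transported to the first interval (`RenCycle.space_first`), through
the critical point to the central interval (`RenCycle.space_central`), and from there to all
intervals (`RenCycle.space_all`). An interval with space around it is definitely shorter than the
interval of the previous cycle containing it (`RenCycle.shrink`), which gives geometric decay with a
rate depending on `V`. From some level on the distortion is therefore at most `e`, and the same
argument yields space with constants depending on `α` only.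
-/

noncomputable section

/-- The interval `[-1,1]` viewed as a subset of `ℂ`. -/
def realSeg : Set ℂ := (fun x : ℝ => (x : ℂ)) '' Set.Icc (-1 : ℝ) 1

/-- The `a`-stadium: points at distance `< a` from `[-1,1]`. -/
def stadium (a : ℝ) : Set ℂ := {z : ℂ | Metric.infDist z realSeg < a}

/-- The unimodal maps `q_t(x) = -2t|x|^α + 2t - 1` (real critical order `α`). -/
def qmapR (α t x : ℝ) : ℝ := -2 * t * |x| ^ α + 2 * t - 1

/-- A cycle of period `q` for a unimodal map `f : [-1,1] → [-1,1]`: closed intervals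
`I_1, …, I_q ⊆ [-1,1]` (here `0`-indexed, interval `k` being `I_{k+1} = [a k, b k]`) with
pairwise disjoint interiors, a repelling periodic point `p` with central interval
`I_q = [-|p|, |p|]`, such that `f` maps `I_i` diffeomorphically onto `I_{i+1}` for
`i = 1, …, q-1`, and `f(I_q) ⊆ I_1` with `f(p) ∈ ∂I_1`. -/
structure RenCycle (f : ℝ → ℝ) where
  q : ℕ
  one_lt : 1 < q
  a : ℕ → ℝ
  b : ℕ → ℝ
  lt : ∀ k < q, a k < b k
  sub : ∀ k < q, Set.Icc (a k) (b k) ⊆ Set.Icc (-1 : ℝ) 1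
  p : ℝ
  hp : p ∈ Set.Ioo (-1 : ℝ) 1
  periodic : f^[q] p = p
  repelling : 1 < |deriv (f^[q]) p|
  central_a : a (q - 1) = -|p|
  central_b : b (q - 1) = |p|
  maps_img : ∀ k, k + 1 < q → f '' Set.Icc (a k) (b k) = Set.Icc (a (k + 1)) (b (k + 1))
  maps_inj : ∀ k, k + 1 < q → Set.InjOn f (Set.Icc (a k) (b k))
  ret : f '' Set.Icc (a (q - 1)) (b (q - 1)) ⊆ Set.Icc (a 0) (b 0)
  ret_p : f p = a 0 ∨ f p = b 0
  disj : ∀ k < q, ∀ l < q, k ≠ l →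
    Set.Ioo (a k) (b k) ∩ Set.Ioo (a l) (b l) = ∅

/-- `(φ, t)` is a unimodal pair: `t ∈ [0,1]` and `φ` is an orientation-preserving `C¹`
diffeomorphism of `[-1,1]` fixing `-1` and `1`. -/
def UnimodalPair (φ : ℝ → ℝ) (t : ℝ) : Prop :=
  t ∈ Set.Icc (0 : ℝ) 1 ∧ φ (-1) = -1 ∧ φ 1 = 1 ∧
  StrictMonoOn φ (Set.Icc (-1 : ℝ) 1) ∧
  ContDiffOn ℝ 1 φ (Set.Icc (-1 : ℝ) 1) ∧
  φ '' Set.Icc (-1 : ℝ) 1 = Set.Icc (-1 : ℝ) 1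

/-- `|φ|_{C³([-1,1])} ≤ C`. -/
def C3Bound (φ : ℝ → ℝ) (C : ℝ) : Prop :=
  ∀ k ≤ 3, ∀ x ∈ Set.Icc (-1 : ℝ) 1,
    |iteratedDerivWithin k φ (Set.Icc (-1 : ℝ) 1) x| ≤ C

/-- A tower of nested renormalization cycles for `f`, witnessing that `f` is `M`-times
renormalizable with combinatorics bounded by `B`:  `T n` is the cycle of the `n`-th
renormalization (`1 ≤ n ≤ M`), each interval of `T (n+1)` is contained in an interval of
`T n`, the periods `q_n` satisfy `q_n ∣ q_{n+1}`, `q_n < q_{n+1}` and `q_{n+1}/q_n ≤ B`. -/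
def IsRenTower (f : ℝ → ℝ) (B : ℝ) (M : ℕ) (T : ℕ → RenCycle f) : Prop :=
  ∀ n, 1 ≤ n → n < M →
    (T n).q ∣ (T (n + 1)).q ∧ (T n).q < (T (n + 1)).q ∧
    ((T (n + 1)).q : ℝ) ≤ B * (T n).q ∧
    ∀ i < (T (n + 1)).q, ∃ j < (T n).q,
      Set.Icc ((T (n + 1)).a i) ((T (n + 1)).b i) ⊆ Set.Icc ((T n).a j) ((T n).b j)

/-- `A` is a (nonconstant) real affine map. -/
def IsAffine (A : ℝ → ℝ) : Prop := ∃ c d : ℝ, c ≠ 0 ∧ A = fun x => c * x + d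

/-- `G` is a univalent extension to the `ε`-stadium of the zoom `Z_src(g)`:
there are affine bijections `A : src → [-1,1]` and `B : g(src) → [-1,1]` with
`G ∘ A = B ∘ g` on `src`, and `G` is holomorphic and injective on `D_ε`. -/
def IsZoomExtOf (G : ℂ → ℂ) (g : ℝ → ℝ) (src : Set ℝ) (ε : ℝ) : Prop :=
  ∃ A B : ℝ → ℝ, IsAffine A ∧ A '' src = Set.Icc (-1 : ℝ) 1 ∧
    IsAffine B ∧ B '' (g '' src) = Set.Icc (-1 : ℝ) 1 ∧
    DifferentiableOn ℂ G (stadium ε) ∧ Set.InjOn G (stadium ε) ∧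
    ∀ y ∈ src, G ((A y : ℝ) : ℂ) = ((B (g y) : ℝ) : ℂ)

/-- The zoom `Z_src(g)` admits a univalent extension to the `ε`-stadium. -/
def UnivZoomExt (g : ℝ → ℝ) (src : Set ℝ) (ε : ℝ) : Prop :=
  ∃ G : ℂ → ℂ, IsZoomExtOf G g src ε

open Metric Set

/-! ### A Harnack inequality and the conformal model of a slit complement -/

/-- The lower bound in the Harnack inequality below, for a function bounded by `A` with value of
modulus at least `μ` at the centre. -/
def psi (A μ : ℝ) : ℝ := μ * Real.exp (-2 * (Real.log (A / μ) + 1))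

lemma psi_pos {A μ : ℝ} (hμ : 0 < μ) : 0 < psi A μ := by
  unfold psi; positivity

/-- A nonvanishing function on a disc, bounded by `A` and of modulus at least `μ` at the centre, is
bounded below on the half disc: the Borel–Carathéodory theorem applied to its logarithm. -/
lemma harnack {h : ℂ → ℂ} {c : ℂ} {R A μ : ℝ} (hR : 0 < R)
    (hd : DifferentiableOn ℂ h (ball c R)) (hne : ∀ z ∈ ball c R, h z ≠ 0)
    (hA : ∀ z ∈ ball c R, ‖h z‖ ≤ A) (hμ : 0 < μ) (hc : μ ≤ ‖h c‖) {z : ℂ}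
    (hz : ‖z - c‖ ≤ R / 2) : psi A μ ≤ ‖h z‖ := by
  have hd' : DifferentiableOn ℂ (fun z => deriv h z / h z) (ball c R) :=
    (hd.deriv isOpen_ball).div hd hne
  obtain ⟨l, hl0, hl⟩ := (hd'.isExactOn_ball).with_val_at c 0
  have hzR : z ∈ ball c R := by rw [mem_ball, dist_eq_norm]; linarith
  have hcR : c ∈ ball c R := mem_ball_self hR
  have key : ∀ w ∈ ball c R, h w = h c * Complex.exp (l w) := by
    have hder : ∀ w ∈ ball c R, HasDerivAt (fun w => h w * Complex.exp (-l w)) 0 w := by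
      intro w hw
      have h1 : HasDerivAt h (deriv h w) w :=
        (hd.differentiableAt (isOpen_ball.mem_nhds hw)).hasDerivAt
      have h2 := (hl w hw).neg.cexp
      have := hne w hw
      exact (h1.mul h2).congr_deriv (by field_simp; ring)
    intro w hw
    have hconst := isOpen_ball.is_const_of_deriv_eq_zero (s := ball c R)
      (convex_ball c R).isPreconnected
      (fun w hw => (hder w hw).differentiableAt.differentiableWithinAt)
      (fun w hw => (hder w hw).deriv) hw hcR
    simp only [hl0, neg_zero, Complex.exp_zero, mul_one] at hconst
    rw [← hconst, mul_assoc, ← Complex.exp_add]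
    simp
  have hnorm : ∀ w ∈ ball c R, ‖h w‖ = ‖h c‖ * Real.exp (l w).re := by
    intro w hw
    rw [key w hw, norm_mul, Complex.norm_exp]
  have hcA := hA c hcR
  have hL : 0 ≤ Real.log (A / μ) := Real.log_nonneg (by rw [le_div_iff₀ hμ]; linarith)
  set Mx := Real.log (A / μ) + 1 with hMx
  have hre : ∀ w ∈ ball c R, (l w).re ≤ Mx := by
    intro w hw
    have h1 := hA w hw
    rw [hnorm w hw] at h1
    have h2 : μ * Real.exp (l w).re ≤ A :=
      (mul_le_mul_of_nonneg_right hc (Real.exp_pos _).le).trans h1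
    have h3 : Real.exp (l w).re ≤ A / μ := by rw [le_div_iff₀ hμ]; linarith
    have h4 : (l w).re ≤ Real.log (A / μ) := by
      rw [← Real.log_exp (l w).re]
      exact Real.log_le_log (Real.exp_pos _) h3
    linarith
  have hmem : ∀ w ∈ ball (0:ℂ) R, c + w ∈ ball c R := by
    intro w hw
    simpa [mem_ball, dist_eq_norm] using hw
  have hBC := Complex.borelCaratheodory (f := fun w => l (c + w)) (M := Mx) (R := R) (z := z - c)
    (by linarith) (by
      intro w hw
      have := (hl (c + w) (hmem w hw)).differentiableAt
      exact (DifferentiableAt.comp w this (by fun_prop)).differentiableWithinAt)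
    (by intro w hw; exact hre _ (hmem w hw)) hR
    (by simpa [mem_ball, dist_eq_norm] using hzR)
  simp only [add_sub_cancel, add_zero, hl0, norm_zero, zero_mul, zero_div] at hBC
  have h5 : ‖l z‖ ≤ 2 * Mx := by
    refine hBC.trans ?_
    rw [div_le_iff₀ (by linarith)]
    have : ‖z - c‖ ≤ R - ‖z - c‖ := by linarith
    have h0 : 0 ≤ 2 * Mx := by linarith
    nlinarith
  have h6 : -(2 * Mx) ≤ (l z).re := by
    have := Complex.abs_re_le_norm (l z)
    have := neg_le_of_abs_le this
    linarith
  rw [hnorm z hzR, psi]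
  apply mul_le_mul hc _ (Real.exp_pos _).le (norm_nonneg _)
  apply Real.exp_le_exp.mpr
  linarith

/-- A conformal map of the complement of the slit `[1/2, 1]` into the unit disc: a Möbius map sends
the slit to the negative axis, the square root maps to the right half-plane, and `ζ ↦ 1 / (ζ + 1)`
maps the half-plane into the disc. -/
def theta (w : ℂ) : ℂ := 1 / (((1 / 2 - w) / (1 - w)) ^ (1 / 2 : ℂ) + 1)

/-- The slit `[1/2, 1]`. -/
def cut : Set ℂ := {w | w.im = 0 ∧ 1 / 2 ≤ w.re ∧ w.re ≤ 1}

lemma zeta_slit {w : ℂ} (hw : w ∉ cut) : (1 / 2 - w) / (1 - w) ∈ Complex.slitPlane := by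
  have h1 : 1 - w ≠ 0 := by
    intro h
    apply hw
    have : w = 1 := by linear_combination -h
    subst this; norm_num [cut]
  rw [Complex.mem_slitPlane_iff]
  by_contra! hcon
  obtain ⟨hre, him⟩ := hcon
  apply hw
  set ζ := (1 / 2 - w) / (1 - w) with hζ
  have hζr : ζ = (ζ.re : ℂ) := by
    apply Complex.ext <;> simp [him]
  have h2 : w * (1 - ζ) = 1 / 2 - ζ := by
    have : ζ * (1 - w) = 1 / 2 - w := by rw [hζ]; field_simp
    linear_combination this
  set s := ζ.re
  have hs : (0:ℝ) < 1 - s := by linarith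
  have h3 : w = (((1 / 2 - s) / (1 - s) : ℝ) : ℂ) := by
    have : (1 - (s:ℂ)) ≠ 0 := by exact_mod_cast hs.ne'
    rw [hζr] at h2
    push_cast
    rw [eq_div_iff this]; exact h2
  rw [h3]
  refine ⟨Complex.ofReal_im _, ?_, ?_⟩
  · rw [Complex.ofReal_re, le_div_iff₀ hs]; linarith
  · rw [Complex.ofReal_re, div_le_iff₀ hs]; linarith

lemma sqrt_re_pos {ζ : ℂ} (h : ζ ∈ Complex.slitPlane) : 0 < (ζ ^ (1 / 2 : ℂ)).re := by
  have h0 := Complex.slitPlane_ne_zero h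
  rw [Complex.cpow_def_of_ne_zero h0, Complex.exp_re]
  have h1 : ((Complex.log ζ) * (1 / 2)).im = Complex.arg ζ / 2 := by
    rw [show (1 / 2 : ℂ) = ((1 / 2 : ℝ) : ℂ) by norm_num, Complex.im_mul_ofReal, Complex.log_im]
    ring
  rw [h1]
  apply mul_pos (Real.exp_pos _)
  have h2 := Complex.neg_pi_lt_arg ζ
  have h3 := Complex.arg_le_pi ζ
  have h4 : Complex.arg ζ ≠ Real.pi := (Complex.mem_slitPlane_iff_arg.mp h).1
  have h5 : Complex.arg ζ < Real.pi := lt_of_le_of_ne h3 h4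
  apply Real.cos_pos_of_mem_Ioo
  constructor <;> linarith

lemma sqrt_sq {ζ : ℂ} : (ζ ^ (1 / 2 : ℂ)) ^ 2 = ζ := by
  simp

lemma theta_den {w : ℂ} (hw : w ∉ cut) : 1 ≤ ‖((1 / 2 - w) / (1 - w)) ^ (1 / 2 : ℂ) + 1‖ := by
  have := sqrt_re_pos (zeta_slit hw)
  have h2 := Complex.re_le_norm (((1 / 2 - w) / (1 - w)) ^ (1 / 2 : ℂ) + 1)
  rw [Complex.add_re, Complex.one_re] at h2
  linarith

lemma theta_norm {w : ℂ} (hw : w ∉ cut) : ‖theta w‖ ≤ 1 := by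
  rw [theta, norm_div, norm_one]
  exact div_le_one_of_le₀ (theta_den hw) (norm_nonneg _)

lemma one_sub_ne {w : ℂ} (hw : w ∉ cut) : 1 - w ≠ 0 := by
  intro h
  apply hw
  have : w = 1 := by linear_combination -h
  subst this; norm_num [cut]

lemma theta_diff {w : ℂ} (hw : w ∉ cut) : DifferentiableAt ℂ theta w := by
  unfold theta
  have h1 := one_sub_ne hw
  have h2 : ((1 / 2 - w) / (1 - w)) ^ (1 / 2 : ℂ) + 1 ≠ 0 := by
    intro h; have := theta_den hw; rw [h] at this; norm_num at this
  refine DifferentiableAt.div (by fun_prop) ?_ h2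
  refine DifferentiableAt.add_const _ ?_
  refine DifferentiableAt.cpow_const ?_ (zeta_slit hw)
  exact DifferentiableAt.div (by fun_prop) (by fun_prop) h1

lemma theta_inj {v w : ℂ} (hv : v ∉ cut) (hw : w ∉ cut) (h : theta v = theta w) : v = w := by
  have h1 : ∀ {w : ℂ}, w ∉ cut → ((1 / 2 - w) / (1 - w)) ^ (1 / 2 : ℂ) + 1 ≠ 0 := by
    intro w hw h; have := theta_den hw; rw [h] at this; norm_num at this
  have h2 := h1 hv
  have h3 := h1 hw
  unfold theta at h
  rw [div_eq_div_iff h2 h3, one_mul, one_mul, add_left_inj] at h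
  have h4 := congrArg (· ^ 2) h
  simp only [sqrt_sq] at h4
  have h5 := one_sub_ne hv
  have h6 := one_sub_ne hw
  rw [div_eq_div_iff h6 h5] at h4
  linear_combination 2 * h4

/-- `theta` is bi-Lipschitz on `[-1, 1/4]`. -/
lemma theta_real {p q : ℝ} (hp : p ∈ Icc (-1 : ℝ) (1 / 4)) (hq : q ∈ Icc (-1 : ℝ) (1 / 4)) :
    |p - q| / 64 ≤ ‖theta p - theta q‖ ∧ ‖theta p - theta q‖ ≤ |p - q| := by
  have hform : ∀ p ∈ Icc (-1 : ℝ) (1 / 4), ∃ g : ℝ, 1 / 2 ≤ g ∧ g ≤ 1 ∧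
      g ^ 2 * (1 - p) = 1 / 2 - p ∧ theta p = ((1 / (g + 1) : ℝ) : ℂ) := by
    intro p hp
    have hp1 : 0 < 1 - p := by linarith [hp.2]
    have hz : 0 ≤ (1 / 2 - p) / (1 - p) := div_nonneg (by linarith [hp.2]) hp1.le
    refine ⟨((1 / 2 - p) / (1 - p)) ^ (1 / 2 : ℝ), ?_, ?_, ?_, ?_⟩
    · rw [← Real.sqrt_eq_rpow]
      apply Real.le_sqrt_of_sq_le
      rw [le_div_iff₀ hp1]; linarith [hp.2]
    · rw [← Real.sqrt_eq_rpow]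
      apply Real.sqrt_le_one.mpr
      rw [div_le_one hp1]; linarith
    · rw [← Real.sqrt_eq_rpow, Real.sq_sqrt hz]
      field_simp
    · unfold theta
      push_cast
      rw [Complex.ofReal_cpow hz]
      push_cast
      rfl
  obtain ⟨g, hg1, hg2, hg3, hg4⟩ := hform p hp
  obtain ⟨k, hk1, hk2, hk3, hk4⟩ := hform q hq
  rw [hg4, hk4, ← Complex.ofReal_sub, Complex.norm_real, Real.norm_eq_abs]
  have hp1 : 0 < 1 - p := by linarith [hp.2]
  have hq1 : 0 < 1 - q := by linarith [hq.2]
  have e : (1 / (g + 1) - 1 / (k + 1)) =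
      (p - q) * (1 / (2 * (1 - p) * (1 - q) * (g + k) * (1 + g) * (1 + k))) := by
    have hgk : 0 < g + k := by linarith
    field_simp
    have e1 : (k - g) * ((g + k) * ((1 - p) * (1 - q))) = (p - q) / 2 := by
      linear_combination (1 - p) * hk3 - (1 - q) * hg3
    linear_combination 2 * (1 + g) * (1 + k) * e1
  rw [e, abs_mul]
  have hD : 0 < 2 * (1 - p) * (1 - q) * (g + k) * (1 + g) * (1 + k) := by positivity
  rw [abs_of_pos (one_div_pos.mpr hD)]
  have hab := abs_nonneg (p - q)
  have hp2 : 1 - p ≤ 2 := by linarith [hp.1]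
  have hq2 : 1 - q ≤ 2 := by linarith [hq.1]
  have hp3 : 3 / 4 ≤ 1 - p := by linarith [hp.2]
  have hq3 : 3 / 4 ≤ 1 - q := by linarith [hq.2]
  constructor
  · rw [div_eq_mul_one_div]
    apply mul_le_mul_of_nonneg_left _ hab
    apply one_div_le_one_div_of_le hD
    calc 2 * (1 - p) * (1 - q) * (g + k) * (1 + g) * (1 + k)
        ≤ 2 * 2 * 2 * (1 + 1) * (1 + 1) * (1 + 1) := by gcongr
      _ = 64 := by norm_num
  · apply mul_le_of_le_one_right hab
    rw [div_le_one hD]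
    calc (1:ℝ) ≤ 2 * (3 / 4) * (3 / 4) * (1 / 2 + 1 / 2) * (1 + 1 / 2) * (1 + 1 / 2) := by norm_num
      _ ≤ _ := by gcongr

/-! ### Lower bound for the derivative of a univalent diffeomorphism -/

/-- `φ` is an increasing homeomorphism of `[-1,1]` with Lipschitz constant `C` and with a univalent
extension `Φ` to a set `V` containing the `r`-balls about `[-1,1]`, where `r` is so small that
`φ` moves by at most `1/4` over a distance `r`. -/
structure UnivExt (φ : ℝ → ℝ) (Φ : ℂ → ℂ) (V : Set ℂ) (r C : ℝ) : Prop where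
  r_pos : 0 < r
  small : C * r ≤ 1 / 4
  ball_sub : ∀ x ∈ Icc (-1 : ℝ) 1, ball (x : ℂ) r ⊆ V
  hol : DifferentiableOn ℂ Φ V
  inj : InjOn Φ V
  ext : ∀ x ∈ Icc (-1 : ℝ) 1, Φ (x : ℂ) = (φ x : ℂ)
  left : φ (-1) = -1
  right : φ 1 = 1
  mono : StrictMonoOn φ (Icc (-1 : ℝ) 1)
  surj : φ '' Icc (-1 : ℝ) 1 = Icc (-1 : ℝ) 1
  lip : ∀ x ∈ Icc (-1 : ℝ) 1, ∀ y ∈ Icc (-1 : ℝ) 1, |φ x - φ y| ≤ C * |x - y|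

namespace UnivExt
variable {φ : ℝ → ℝ} {Φ : ℂ → ℂ} {V : Set ℂ} {r C : ℝ}

lemma mem_Icc (H : UnivExt φ Φ V r C) {x : ℝ} (hx : x ∈ Icc (-1 : ℝ) 1) :
    φ x ∈ Icc (-1 : ℝ) 1 := by
  rw [← H.surj]; exact mem_image_of_mem _ hx

lemma dist_real (x y : ℝ) : dist (x : ℂ) (y : ℂ) = |x - y| := by
  rw [Complex.dist_of_im_eq (by simp)]; simp [Real.dist_eq]

lemma close (H : UnivExt φ Φ V r C) (hC : 0 ≤ C) {x y : ℝ} (hx : x ∈ Icc (-1 : ℝ) 1)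
    (hy : y ∈ Icc (-1 : ℝ) 1) (hxy : |y - x| < r) : |φ y - φ x| ≤ 1 / 4 :=
  (H.lip y hy x hx).trans ((mul_le_mul_of_nonneg_left hxy.le hC).trans H.small)

/-- A bounded univalent function on `ball x r` which on the reals is comparable with `φ`. After a
change of sign `φ x ≤ 0`; then the values `[1/2, 1]` of `Φ` are attained outside the ball, hence by
injectivity omitted on it, and `theta ∘ Φ` is bounded by `1`. -/
lemma model (H : UnivExt φ Φ V r C) (hC : 0 ≤ C) {x : ℝ} (hx : x ∈ Icc (-1 : ℝ) 1) :
    ∃ G : ℂ → ℂ, DifferentiableOn ℂ G (ball (x : ℂ) r) ∧ InjOn G (ball (x : ℂ) r) ∧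
      (∀ z ∈ ball (x : ℂ) r, ‖G z‖ ≤ 1) ∧
      ∀ y ∈ Icc (-1 : ℝ) 1, ∀ z ∈ Icc (-1 : ℝ) 1, |y - x| < r → |z - x| < r →
        |φ y - φ z| / 64 ≤ ‖G y - G z‖ ∧ ‖G y - G z‖ ≤ |φ y - φ z| := by
  obtain ⟨s, hs, hsx⟩ : ∃ s : ℝ, (s = 1 ∨ s = -1) ∧ s * φ x ≤ 0 := by
    rcases le_total (φ x) 0 with h | h
    · exact ⟨1, Or.inl rfl, by linarith⟩
    · exact ⟨-1, Or.inr rfl, by linarith⟩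
  have hss : s * s = 1 := by rcases hs with h | h <;> rw [h] <;> norm_num
  have habs : |s| = 1 := by rcases hs with h | h <;> rw [h] <;> norm_num
  have hmem : ∀ y ∈ Icc (-1 : ℝ) 1, |y - x| < r → s * φ y ∈ Icc (-1 : ℝ) (1 / 4) := by
    intro y hy hyx
    have h1 := H.mem_Icc hy
    have h2 := abs_le.mp (H.close hC hx hy hyx)
    rcases hs with h | h <;> rw [h] at hsx ⊢ <;> constructor <;> linarith [h1.1, h1.2, h2.1, h2.2]
  have hcut : ∀ z ∈ ball (x : ℂ) r, (s : ℂ) * Φ z ∉ cut := by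
    intro z hz ⟨h1, h2, h3⟩
    have h1' : s * (Φ z).im = 0 := by simpa using h1
    have h2' : 1 / 2 ≤ s * (Φ z).re := by simpa using h2
    have h3' : s * (Φ z).re ≤ 1 := by simpa using h3
    have hs0 : s ≠ 0 := by rintro rfl; norm_num at hss
    have him : (Φ z).im = 0 := by
      rcases mul_eq_zero.mp h1' with h | h
      · exact absurd h hs0
      · exact h
    have hre : (Φ z).re ∈ Icc (-1 : ℝ) 1 := by
      rcases hs with h | h <;> rw [h] at h2' h3' <;> constructor <;> linarith
    rw [← H.surj] at hre
    obtain ⟨u, hu, hue⟩ := hre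
    have hzu : z = (u : ℂ) := by
      apply H.inj (H.ball_sub x hx hz) (H.ball_sub u hu (mem_ball_self H.r_pos))
      rw [H.ext u hu, hue]
      apply Complex.ext <;> simp [him]
    rw [hzu, mem_ball, dist_real] at hz
    have := (hmem u hu hz).2
    rw [hue] at this
    linarith
  refine ⟨fun z => theta (s * Φ z), ?_, ?_, ?_, ?_⟩
  · intro z hz
    have h1 : DifferentiableAt ℂ (fun z => (s : ℂ) * Φ z) z :=
      (((H.hol.mono (H.ball_sub x hx)).differentiableAt (isOpen_ball.mem_nhds hz))).const_mul _
    exact ((theta_diff (hcut z hz)).comp z h1).differentiableWithinAt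
  · intro z hz w hw h
    have h1 := theta_inj (hcut z hz) (hcut w hw) h
    have hs0 : (s : ℂ) ≠ 0 := by
      rw [Complex.ofReal_ne_zero]; rintro rfl; norm_num at hss
    exact H.inj (H.ball_sub x hx hz) (H.ball_sub x hx hw) (mul_left_cancel₀ hs0 h1)
  · intro z hz; exact theta_norm (hcut z hz)
  · intro y hy z hz hyx hzx
    have h1 := theta_real (hmem y hy hyx) (hmem z hz hzx)
    rw [← mul_sub, abs_mul, habs, one_mul] at h1
    simp only [H.ext y hy, H.ext z hz]
    exact_mod_cast h1

lemma mem_closure_punctured {x ρ : ℝ} (hx : x ∈ Icc (-1 : ℝ) 1) (hρ : 0 < ρ) :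
    x ∈ closure {y : ℝ | y ∈ Icc (-1 : ℝ) 1 ∧ |y - x| < ρ ∧ y ≠ x} := by
  rw [Metric.mem_closure_iff]
  intro e he
  set d := min (min e ρ) 1 / 2 with hd
  have hd0 : 0 < d := by positivity
  have hde : d < e := by
    have := (min_le_left (min e ρ) 1).trans (min_le_left _ _); linarith
  have hdρ : d < ρ := by
    have := (min_le_left (min e ρ) 1).trans (min_le_right _ _); linarith
  have hd1 : d ≤ 1 / 2 := by
    have := min_le_right (min e ρ) 1; linarith
  rcases le_total x 0 with h | h
  · refine ⟨x + d, ⟨⟨by linarith [hx.1], by linarith⟩, ?_, by linarith⟩, ?_⟩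
    · rw [add_sub_cancel_left, abs_of_pos hd0]; exact hdρ
    · rw [Real.dist_eq, sub_add_cancel_left, abs_neg, abs_of_pos hd0]; exact hde
  · refine ⟨x - d, ⟨⟨by linarith, by linarith [hx.2]⟩, ?_, by linarith⟩, ?_⟩
    · rw [sub_sub_cancel_left, abs_neg, abs_of_pos hd0]; exact hdρ
    · rw [Real.dist_eq, sub_sub_cancel, abs_of_pos hd0]; exact hde

/-- Comparison of increments at real points yields comparison of complex derivatives. -/
lemma deriv_compare {G K : ℂ → ℂ} {x ρ c : ℝ} (hx : x ∈ Icc (-1 : ℝ) 1) (hρ : 0 < ρ)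
    (hG : DifferentiableAt ℂ G x) (hK : DifferentiableAt ℂ K x)
    (h : ∀ y ∈ Icc (-1 : ℝ) 1, |y - x| < ρ → ‖G y - G x‖ ≤ c * ‖K y - K x‖) :
    ‖deriv G x‖ ≤ c * ‖deriv K x‖ := by
  have cont : ∀ {L : ℂ → ℂ}, DifferentiableAt ℂ L x → ContinuousAt (fun y : ℝ => dslope L x y) x := by
    intro L hL
    have h1 : ContinuousAt (dslope L (x : ℂ)) ((fun y : ℝ => (y : ℂ)) x) :=
      continuousAt_dslope_same.mpr hL
    exact h1.comp (f := fun y : ℝ => (y : ℂ)) Complex.continuous_ofReal.continuousAt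
  have := ContinuousWithinAt.closure_le (mem_closure_punctured hx hρ)
    (cont hG).norm.continuousWithinAt ((cont hK).norm.const_mul c).continuousWithinAt ?_
  · simpa using this
  · rintro y ⟨hy, hyx, hne⟩
    have hne' : (y : ℂ) ≠ x := by exact_mod_cast hne
    simp only [dslope_of_ne _ hne', slope_def_field, norm_div]
    have h2 := h y hy hyx
    have h3 : 0 < ‖(y : ℂ) - x‖ := norm_pos_iff.mpr (sub_ne_zero.mpr hne')
    rw [mul_div_assoc', div_le_div_iff_of_pos_right h3]
    exact h2

lemma diffAt (H : UnivExt φ Φ V r C) {x : ℝ} (hx : x ∈ Icc (-1 : ℝ) 1) :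
    DifferentiableAt ℂ Φ x :=
  (H.hol.mono (H.ball_sub x hx)).differentiableAt (isOpen_ball.mem_nhds (mem_ball_self H.r_pos))

/-- Lower bound for `|Φ'|` at distance at most `r/4` from a point where `|Φ'| ≥ μ`. -/
def step (r μ : ℝ) : ℝ := psi (4 / r) (psi (4 / r) (μ / 64))

lemma step_pos {r μ : ℝ} (hμ : 0 < μ) : 0 < step r μ := psi_pos (psi_pos (by positivity))

/-- The Harnack inequality is used twice for the bounded model `G`: on difference quotients
based at `x`, which do not vanish by injectivity, and then on difference quotients based at
`y`. -/
lemma step_le (H : UnivExt φ Φ V r C) (hC : 0 ≤ C) {x y μ : ℝ} (hx : x ∈ Icc (-1 : ℝ) 1)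
    (hy : y ∈ Icc (-1 : ℝ) 1) (hxy : |y - x| ≤ r / 4) (hμ : 0 < μ) (hμx : μ ≤ ‖deriv Φ x‖)
    (hy0 : deriv Φ y ≠ 0) : step r μ ≤ ‖deriv Φ y‖ := by
  obtain ⟨G, hGd, hGi, hGb, hGr⟩ := H.model hC hx
  have hr := H.r_pos
  have hyx : |y - x| < r := by linarith
  have hyb : (y : ℂ) ∈ ball (x : ℂ) r := by rw [mem_ball, dist_real]; exact hyx
  have hxb : (x : ℂ) ∈ ball (x : ℂ) r := mem_ball_self hr
  have hGat : ∀ z ∈ ball (x : ℂ) r, DifferentiableAt ℂ G z := fun z hz =>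
    hGd.differentiableAt (isOpen_ball.mem_nhds hz)
  -- derivative comparison at real points
  have cmp : ∀ u ∈ Icc (-1 : ℝ) 1, |u - x| < r →
      ‖deriv Φ u‖ ≤ 64 * ‖deriv G u‖ ∧ ‖deriv G u‖ ≤ ‖deriv Φ u‖ := by
    intro u hu hux
    have hub : (u : ℂ) ∈ ball (x : ℂ) r := by rw [mem_ball, dist_real]; exact hux
    have hρ : 0 < r - |u - x| := by linarith
    have hb : ∀ v : ℝ, |v - u| < r - |u - x| → |v - x| < r := by
      intro v hv
      have := abs_sub_le v u x
      linarith
    constructor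
    · refine deriv_compare hu hρ (H.diffAt hu) (hGat u hub) ?_
      intro v hv hvu
      have := (hGr v hv u hu (hb v hvu) hux).1
      rw [H.ext v hv, H.ext u hu, ← Complex.ofReal_sub, Complex.norm_real, Real.norm_eq_abs]
      linarith
    · have := deriv_compare (c := 1) hu hρ (hGat u hub) (H.diffAt hu) ?_
      · simpa using this
      intro v hv hvu
      have := (hGr v hv u hu (hb v hvu) hux).2
      rw [H.ext v hv, H.ext u hu, ← Complex.ofReal_sub, Complex.norm_real, Real.norm_eq_abs]
      linarith
  have hxx : |x - x| < r := by simpa using hr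
  have hne : ∀ u ∈ ball (x : ℂ) r, ∀ z ∈ ball (x : ℂ) r, deriv G u ≠ 0 → dslope G u z ≠ 0 := by
    intro u hu z hz h0
    by_cases h : z = u
    · rw [h, dslope_same]; exact h0
    · rw [dslope_of_ne _ h, slope_def_field]
      exact div_ne_zero (sub_ne_zero.mpr fun e => h (hGi hz hu e)) (sub_ne_zero.mpr h)
  have hcb : ∀ u ∈ ball (x : ℂ) r, ∀ z ∈ ball (x : ℂ) r, G z ∈ closedBall (G u) 2 := by
    intro u hu z hz
    rw [mem_closedBall, dist_eq_norm]
    have := norm_sub_le (G z) (G u)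
    linarith [hGb u hu, hGb z hz]
  have hGx : deriv G x ≠ 0 := by
    intro h
    have := (cmp x hx hxx).1
    rw [h, norm_zero, mul_zero] at this
    linarith
  have hGy : deriv G y ≠ 0 := by
    intro h
    have := (cmp y hy hyx).1
    rw [h, norm_zero, mul_zero] at this
    exact hy0 (norm_le_zero_iff.mp this)
  have h1 : psi (4 / r) (μ / 64) ≤ ‖dslope G x y‖ := by
    refine harnack (c := x) hr ((Complex.differentiableOn_dslope (isOpen_ball.mem_nhds hxb)).mpr hGd)
      (fun z hz => hne x hxb z hz hGx) (fun z hz => ?_) (by positivity) ?_ ?_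
    · refine (Complex.norm_dslope_le_div_of_mapsTo_ball hGd (fun w hw => hcb x hxb w hw) hz).trans ?_
      gcongr; norm_num
    · rw [dslope_same]; linarith [(cmp x hx hxx).1]
    · rw [← dist_eq_norm, dist_real]; linarith
  have hcomm : dslope G y x = dslope G x y := by
    by_cases h : (x : ℂ) = y
    · rw [h]
    · rw [dslope_of_ne _ h, dslope_of_ne _ (Ne.symm h), slope_comm]
  have hsub1 : ball (y : ℂ) (3 * r / 4) ⊆ ball (x : ℂ) r := by
    apply ball_subset_ball'; rw [dist_real]; linarith
  have hsub2 : ball (x : ℂ) (r / 2) ⊆ ball (y : ℂ) (3 * r / 4) := by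
    apply ball_subset_ball'; rw [dist_comm, dist_real]; linarith
  have h2 : step r μ ≤ ‖dslope G y y‖ := by
    refine harnack (c := x) (R := r / 2) (by positivity)
      (((Complex.differentiableOn_dslope (isOpen_ball.mem_nhds hyb)).mpr hGd).mono
        (hsub2.trans hsub1))
      (fun z hz => hne y hyb z (hsub1 (hsub2 hz)) hGy) (fun z hz => ?_) (psi_pos (by positivity)) ?_ ?_
    · refine (Complex.norm_dslope_le_div_of_mapsTo_ball (hGd.mono hsub1)
        (fun w hw => hcb y hyb w (hsub1 hw)) (hsub2 hz)).trans ?_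
      rw [div_le_div_iff₀ (by positivity) hr]; linarith
    · rw [hcomm]; exact h1
    · rw [← dist_eq_norm, dist_real]; linarith
  rw [dslope_same] at h2
  exact h2.trans (cmp y hy hyx).2

lemma continuousOn_deriv (H : UnivExt φ Φ V r C) :
    ContinuousOn (fun x : ℝ => ‖deriv Φ x‖) (Icc (-1) 1) := by
  intro x hx
  have hd := ((H.hol.mono (H.ball_sub x hx)).deriv isOpen_ball).differentiableAt
    (isOpen_ball.mem_nhds (mem_ball_self H.r_pos))
  have h1 : ContinuousAt (deriv Φ) ((fun y : ℝ => (y : ℂ)) x) := hd.continuousAt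
  exact (h1.comp (f := fun y : ℝ => (y : ℂ))
    Complex.continuous_ofReal.continuousAt).norm.continuousWithinAt

/-- The bound `step`, made at most `μ`. -/
def step' (r μ : ℝ) : ℝ := min μ (step r μ)

lemma step'_pos {r μ : ℝ} (hμ : 0 < μ) : 0 < step' r μ := lt_min hμ (step_pos hμ)

/-- Here `Φ' ≠ 0` need not be known at `y`: if `|Φ'|` were smaller at `y`, then by the intermediate
value theorem it would be small but nonzero at a point in between, contradicting `step_le`. -/
lemma step'_le (H : UnivExt φ Φ V r C) (hC : 0 ≤ C) {x y μ : ℝ} (hx : x ∈ Icc (-1 : ℝ) 1)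
    (hy : y ∈ Icc (-1 : ℝ) 1) (hxy : |y - x| ≤ r / 4) (hμ : 0 < μ) (hμx : μ ≤ ‖deriv Φ x‖) :
    step' r μ ≤ ‖deriv Φ y‖ := by
  by_contra! hlt
  have hsub : uIcc x y ⊆ Icc (-1 : ℝ) 1 := uIcc_subset_Icc hx hy
  set v := (‖deriv Φ y‖ + step' r μ) / 2 with hv
  have hv0 : 0 < v := by
    have := norm_nonneg (deriv Φ y)
    have := step'_pos (r := r) hμ
    positivity
  have hmem : v ∈ uIcc ‖deriv Φ x‖ ‖deriv Φ y‖ := by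
    have h1 : step' r μ ≤ μ := min_le_left _ _
    rw [mem_uIcc]; right; constructor <;> linarith
  obtain ⟨z, hz, hzv⟩ := intermediate_value_uIcc (H.continuousOn_deriv.mono hsub) hmem
  have hzx : |z - x| ≤ r / 4 := (abs_sub_left_of_mem_uIcc hz).trans hxy
  have h3 := H.step_le hC hx (hsub hz) hzx hμ hμx (by
    intro h; simp only [h, norm_zero] at hzv; linarith)
  have h4 : step' r μ ≤ step r μ := min_le_right _ _
  simp only at hzv
  linarith

lemma hasDerivWithin (H : UnivExt φ Φ V r C) {x : ℝ} (hx : x ∈ Icc (-1 : ℝ) 1) :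
    HasDerivWithinAt φ (deriv Φ x).re (Icc (-1) 1) x ∧ (deriv Φ x).im = 0 := by
  have h1 : HasDerivWithinAt (fun y : ℝ => Φ y) (deriv Φ x) (Icc (-1) 1) x :=
    ((H.diffAt hx).hasDerivAt.comp_ofReal).hasDerivWithinAt
  have h2 : HasDerivWithinAt (fun y : ℝ => (φ y : ℂ)) (deriv Φ x) (Icc (-1) 1) x :=
    h1.congr (fun y hy => (H.ext y hy).symm) (H.ext x hx).symm
  constructor
  · have := Complex.reCLM.hasFDerivAt.comp_hasDerivWithinAt x h2
    simpa [Function.comp_def] using this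
  · have := Complex.imCLM.hasFDerivAt.comp_hasDerivWithinAt x h2
    have h3 : HasDerivWithinAt (fun _ : ℝ => (0:ℝ)) (deriv Φ x).im (Icc (-1) 1) x := by
      simpa [Function.comp_def] using this
    exact (uniqueDiffOn_Icc (by norm_num) x hx).eq_deriv _ h3 (hasDerivWithinAt_const _ _ _)

lemma iterate_step_pos (r : ℝ) (n : ℕ) : 0 < (step' r)^[n] 1 := by
  induction n with
  | zero => simp
  | succ n ih => rw [Function.iterate_succ_apply']; exact step'_pos ih

/-- There is a point where `φ' = 1` by the mean value theorem, and `8/r` steps of length `r/4` lead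
from it to any point of `[-1,1]`. -/
lemma deriv_lower (H : UnivExt φ Φ V r C) (hC : 0 ≤ C) {y : ℝ} (hy : y ∈ Icc (-1 : ℝ) 1) :
    (step' r)^[⌈8 / r⌉₊] 1 ≤ ‖deriv Φ y‖ := by
  have hr := H.r_pos
  have hcont : ContinuousOn φ (Icc (-1 : ℝ) 1) := fun x hx => (H.hasDerivWithin hx).1.continuousWithinAt
  obtain ⟨x0, hx0, hx0'⟩ := exists_hasDerivAt_eq_slope φ (fun x => (deriv Φ (x : ℂ)).re)
    (by norm_num : (-1 : ℝ) < 1) hcont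
    (fun x hx => (H.hasDerivWithin (Ioo_subset_Icc_self hx)).1.hasDerivAt (Icc_mem_nhds hx.1 hx.2))
  have hx0i : x0 ∈ Icc (-1 : ℝ) 1 := Ioo_subset_Icc_self hx0
  have hstart : 1 ≤ ‖deriv Φ x0‖ := by
    rw [H.left, H.right] at hx0'
    norm_num at hx0'
    have := Complex.re_le_norm (deriv Φ x0)
    linarith
  have chain : ∀ n : ℕ, ∀ y ∈ Icc (-1 : ℝ) 1, |y - x0| ≤ n * (r / 4) →
      (step' r)^[n] 1 ≤ ‖deriv Φ y‖ := by
    intro n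
    induction n with
    | zero =>
      intro y hy h
      have : y = x0 := by
        have h' : |y - x0| ≤ 0 := by simpa using h
        linarith [abs_nonpos_iff.mp h']
      rw [this]; simpa using hstart
    | succ n ih =>
      intro y hy h
      have hn : (0:ℝ) < n + 1 := by positivity
      set x := x0 + (y - x0) * (n / (n + 1)) with hxdef
      have hx : x ∈ Icc (-1 : ℝ) 1 := by
        have hl0 : (0:ℝ) ≤ n / (n + 1) := by positivity
        have hl1 : (n:ℝ) / (n + 1) ≤ 1 := by rw [div_le_one hn]; linarith
        have := (convex_Icc (-1:ℝ) 1).add_smul_sub_mem hx0i hy ⟨hl0, hl1⟩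
        rw [smul_eq_mul] at this
        rw [hxdef, mul_comm (y - x0)]; exact this
      have e1 : |x - x0| = |y - x0| * (n / (n + 1)) := by
        rw [hxdef, add_sub_cancel_left, abs_mul, abs_of_nonneg (by positivity : (0:ℝ) ≤ n / (n + 1))]
      have e2 : |y - x| = |y - x0| * (1 / (n + 1)) := by
        rw [hxdef, show y - (x0 + (y - x0) * ((n:ℝ) / (n + 1))) = (y - x0) * (1 / (n + 1)) by
          field_simp; ring, abs_mul, abs_of_nonneg (by positivity : (0:ℝ) ≤ 1 / ((n:ℝ) + 1))]
      push_cast at h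
      have h1 : |x - x0| ≤ n * (r / 4) := by
        rw [e1]
        calc |y - x0| * (n / (n + 1)) ≤ ((n + 1) * (r / 4)) * (n / (n + 1)) := by gcongr
          _ = n * (r / 4) := by field_simp
      have h2 : |y - x| ≤ r / 4 := by
        rw [e2]
        calc |y - x0| * (1 / (n + 1)) ≤ ((n + 1) * (r / 4)) * (1 / (n + 1)) := by gcongr
          _ = r / 4 := by field_simp
      rw [Function.iterate_succ_apply']
      exact H.step'_le hC hx hy h2 (iterate_step_pos r n) (ih x hx h1)
  apply chain _ y hy
  have h1 : |y - x0| ≤ 2 := by rw [abs_le]; constructor <;> linarith [hy.1, hy.2, hx0i.1, hx0i.2]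
  have h2 : 8 / r ≤ ⌈8 / r⌉₊ := Nat.le_ceil _
  rw [div_le_iff₀ hr] at h2
  linarith

end UnivExt

/-! ### Cross ratios under a diffeomorphism with bounded third derivative -/

/-- The cross ratio `|ac| |bd| / (|ab| |cd|)` of a monotone quadruple. It is small when there is much
space on both sides of `[b, c]`. -/
def cr (a b c d : ℝ) : ℝ := ((c - a) * (d - b)) / ((b - a) * (d - c))

lemma cr_neg (a b c d : ℝ) : cr (-a) (-b) (-c) (-d) = cr a b c d := by
  unfold cr
  rw [show (-c - -a) * (-d - -b) = (c - a) * (d - b) by ring,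
    show (-b - -a) * (-d - -c) = (b - a) * (d - c) by ring]

lemma cr_rev (a b c d : ℝ) : cr d c b a = cr a b c d := by
  unfold cr
  rw [show (b - d) * (a - c) = (c - a) * (d - b) by ring,
    show (c - d) * (a - b) = (b - a) * (d - c) by ring]

/-- `φ1`, `φ2`, `φ3` are the derivatives of `φ` on `[-1,1]`, bounded by `C`, and `φ' ≥ m > 0`. -/
structure C3Data (φ φ1 φ2 φ3 : ℝ → ℝ) (m C : ℝ) : Prop where
  d0 : ∀ x ∈ Icc (-1 : ℝ) 1, HasDerivWithinAt φ (φ1 x) (Icc (-1) 1) x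
  d1 : ∀ x ∈ Icc (-1 : ℝ) 1, HasDerivWithinAt φ1 (φ2 x) (Icc (-1) 1) x
  d2 : ∀ x ∈ Icc (-1 : ℝ) 1, HasDerivWithinAt φ2 (φ3 x) (Icc (-1) 1) x
  b1 : ∀ x ∈ Icc (-1 : ℝ) 1, |φ1 x| ≤ C
  b2 : ∀ x ∈ Icc (-1 : ℝ) 1, |φ2 x| ≤ C
  b3 : ∀ x ∈ Icc (-1 : ℝ) 1, |φ3 x| ≤ C
  low : ∀ x ∈ Icc (-1 : ℝ) 1, m ≤ φ1 x
  m_pos : 0 < m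

namespace C3Data
variable {φ φ1 φ2 φ3 : ℝ → ℝ} {m C : ℝ}

lemma mvt {g g' : ℝ → ℝ} {s : Set ℝ} {A : ℝ} (hs : Convex ℝ s)
    (hg : ∀ x ∈ s, HasDerivWithinAt g (g' x) s x) (hb : ∀ x ∈ s, |g' x| ≤ A) {x y : ℝ}
    (hx : x ∈ s) (hy : y ∈ s) : |g y - g x| ≤ A * |y - x| :=
  hs.norm_image_sub_le_of_norm_hasDerivWithin_le hg hb hx hy

lemma C_pos (H : C3Data φ φ1 φ2 φ3 m C) : 0 < C := by
  have h0 : (0:ℝ) ∈ Icc (-1 : ℝ) 1 := by norm_num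
  have := (le_abs_self _).trans (H.b1 0 h0)
  linarith [H.low 0 h0, H.m_pos]

lemma m_le_C (H : C3Data φ φ1 φ2 φ3 m C) : m ≤ C := by
  have h0 : (0:ℝ) ∈ Icc (-1 : ℝ) 1 := by norm_num
  have := (le_abs_self _).trans (H.b1 0 h0)
  linarith [H.low 0 h0]

lemma upper (H : C3Data φ φ1 φ2 φ3 m C) {x y : ℝ} (hx : x ∈ Icc (-1 : ℝ) 1)
    (hy : y ∈ Icc (-1 : ℝ) 1) : |φ y - φ x| ≤ C * |y - x| :=
  mvt (convex_Icc _ _) H.d0 H.b1 hx hy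

lemma slope_ex (H : C3Data φ φ1 φ2 φ3 m C) {x y : ℝ} (hx : x ∈ Icc (-1 : ℝ) 1)
    (hy : y ∈ Icc (-1 : ℝ) 1) (hxy : x < y) :
    ∃ z ∈ Icc x y, φ y - φ x = φ1 z * (y - x) := by
  have hsub : Icc x y ⊆ Icc (-1 : ℝ) 1 := Icc_subset_Icc hx.1 hy.2
  obtain ⟨z, hz, h⟩ := exists_hasDerivAt_eq_slope φ φ1 hxy
    (fun z hz => ((H.d0 z (hsub hz)).mono hsub).continuousWithinAt)
    (fun z hz => (H.d0 z (hsub (Ioo_subset_Icc_self hz))).hasDerivAt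
      (Icc_mem_nhds (hx.1.trans_lt hz.1) (hz.2.trans_le hy.2)))
  refine ⟨z, Ioo_subset_Icc_self hz, ?_⟩
  rw [h]
  have : y - x ≠ 0 := by linarith
  field_simp

lemma lower (H : C3Data φ φ1 φ2 φ3 m C) {x y : ℝ} (hx : x ∈ Icc (-1 : ℝ) 1)
    (hy : y ∈ Icc (-1 : ℝ) 1) (hxy : x ≤ y) : m * (y - x) ≤ φ y - φ x := by
  rcases hxy.eq_or_lt with rfl | hlt
  · simp
  obtain ⟨z, hz, h⟩ := H.slope_ex hx hy hlt
  rw [h]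
  exact mul_le_mul_of_nonneg_right (H.low z ⟨hx.1.trans hz.1, hz.2.trans hy.2⟩) (by linarith)

/-- Difference quotients agree with an affine function of the two points up to second order. -/
lemma taylor (H : C3Data φ φ1 φ2 φ3 m C) {a d x y : ℝ} (ha : a ∈ Icc (-1 : ℝ) 1)
    (hd : d ∈ Icc (-1 : ℝ) 1) (hx : x ∈ Icc a d) (hy : y ∈ Icc a d) (hxy : x < y) :
    |(φ y - φ x) / (y - x) - (φ1 a + φ2 a * ((x - a) / 2 + (y - a) / 2))| ≤ C * (d - a) ^ 2 := by
  have hsub : Icc a d ⊆ Icc (-1 : ℝ) 1 := Icc_subset_Icc ha.1 hd.2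
  have haI : a ∈ Icc a d := ⟨le_rfl, hx.1.trans hx.2⟩
  have hC := H.C_pos
  have h2 : ∀ z ∈ Icc a d, |φ2 z - φ2 a| ≤ C * (d - a) := by
    intro z hz
    refine (mvt (convex_Icc _ _) H.d2 H.b3 ha (hsub hz)).trans ?_
    rw [abs_of_nonneg (by linarith [hz.1])]
    exact mul_le_mul_of_nonneg_left (by linarith [hz.2]) hC.le
  have h1 : ∀ z ∈ Icc a d, |φ1 z - φ1 a - φ2 a * (z - a)| ≤ C * (d - a) ^ 2 := by
    intro z hz
    have hg : ∀ w ∈ Icc a d, HasDerivWithinAt (fun w => φ1 w - φ2 a * w) (φ2 w - φ2 a)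
        (Icc a d) w := by
      intro w hw
      have := ((H.d1 w (hsub hw)).mono hsub).sub ((hasDerivWithinAt_id w (Icc a d)).const_mul (φ2 a))
      exact this.congr_deriv (by simp)
    have := mvt (convex_Icc a d) hg h2 haI hz
    rw [abs_of_nonneg (by linarith [hz.1] : 0 ≤ z - a)] at this
    rw [show φ1 z - φ1 a - φ2 a * (z - a) = φ1 z - φ2 a * z - (φ1 a - φ2 a * a) by ring]
    refine this.trans ?_
    rw [pow_two, ← mul_assoc]
    exact mul_le_mul_of_nonneg_left (by linarith [hz.2])
      (mul_nonneg hC.le (by linarith [hz.1, hz.2]))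
  have hg : ∀ w ∈ Icc a d, HasDerivWithinAt
      (fun w => φ w - φ1 a * w - φ2 a * ((w - a) ^ 2 / 2)) (φ1 w - φ1 a - φ2 a * (w - a))
      (Icc a d) w := by
    intro w hw
    have e1 := ((hasDerivWithinAt_id w (Icc a d)).const_mul (φ1 a))
    have e2 : HasDerivWithinAt (fun w => φ2 a * ((w - a) ^ 2 / 2)) (φ2 a * (w - a)) (Icc a d) w := by
      have := (((((hasDerivAt_id w).sub_const a).pow 2).div_const 2).const_mul (φ2 a))
      refine (this.hasDerivWithinAt).congr_deriv ?_
      simp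
    have := (((H.d0 w (hsub hw)).mono hsub).sub e1).sub e2
    exact this.congr_deriv (by simp)
  have := mvt (convex_Icc a d) hg h1 hx hy
  have hyx : 0 < y - x := by linarith
  rw [abs_of_pos hyx] at this
  have e : (φ y - φ x) / (y - x) - (φ1 a + φ2 a * ((x - a) / 2 + (y - a) / 2)) =
      (φ y - φ1 a * y - φ2 a * ((y - a) ^ 2 / 2) - (φ x - φ1 a * x - φ2 a * ((x - a) ^ 2 / 2)))
        / (y - x) := by
    field_simp; ring
  rw [e, abs_div, abs_of_pos hyx, div_le_iff₀ hyx]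
  exact this

lemma prod_err {C η S T l k : ℝ} (hC : 0 ≤ C) (hS : |S - l| ≤ C * η) (hT : |T - k| ≤ C * η)
    (hTb : |T| ≤ C) (hl : |l| ≤ 3 * C) (hη : 0 ≤ η) : |S * T - l * k| ≤ 4 * C ^ 2 * η := by
  rw [show S * T - l * k = (S - l) * T + l * (T - k) by ring]
  refine (abs_add_le _ _).trans ?_
  rw [abs_mul, abs_mul]
  have h1 : |S - l| * |T| ≤ C * η * C := mul_le_mul hS hTb (abs_nonneg _) (by positivity)
  have h2 : |l| * |T - k| ≤ 3 * C * (C * η) := mul_le_mul hl hT (abs_nonneg _) (by positivity)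
  nlinarith

/-- The zeroth and first order terms of the four difference quotients cancel in the cross ratio, so
its distortion is quadratic in the size of the quadruple. -/
lemma cr_le (H : C3Data φ φ1 φ2 φ3 m C) {a b c d : ℝ} (ha : a ∈ Icc (-1 : ℝ) 1)
    (hd : d ∈ Icc (-1 : ℝ) 1) (hab : a < b) (hbc : b < c) (hcd : c < d) :
    cr a b c d ≤ cr (φ a) (φ b) (φ c) (φ d) *
      Real.exp (10 * C ^ 2 / m ^ 4 * (φ d - φ a) ^ 2) := by
  have hC := H.C_pos
  have hm := H.m_pos
  have hsub : Icc a d ⊆ Icc (-1 : ℝ) 1 := Icc_subset_Icc ha.1 hd.2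
  have aI : a ∈ Icc a d := ⟨le_rfl, by linarith⟩
  have bI : b ∈ Icc a d := ⟨by linarith, by linarith⟩
  have cI : c ∈ Icc a d := ⟨by linarith, by linarith⟩
  have dI : d ∈ Icc a d := ⟨by linarith, by linarith⟩
  have hd2 : d - a ≤ 2 := by linarith [ha.1, hd.2]
  set h := d - a with hh
  have hpos : 0 < h := by linarith
  have slopeb : ∀ x ∈ Icc a d, ∀ y ∈ Icc a d, x < y →
      m ≤ (φ y - φ x) / (y - x) ∧ |(φ y - φ x) / (y - x)| ≤ C := by
    intro x hx y hy hxy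
    have hyx : 0 < y - x := by linarith
    constructor
    · rw [le_div_iff₀ hyx]; exact H.lower (hsub hx) (hsub hy) hxy.le
    · rw [abs_div, abs_of_pos hyx, div_le_iff₀ hyx]
      have := H.upper (hsub hx) (hsub hy)
      rwa [abs_of_pos hyx] at this
  have linb : ∀ x ∈ Icc a d, ∀ y ∈ Icc a d,
      |φ1 a + φ2 a * ((x - a) / 2 + (y - a) / 2)| ≤ 3 * C := by
    intro x hx y hy
    refine (abs_add_le _ _).trans ?_
    rw [abs_mul]
    have h1 : |(x - a) / 2 + (y - a) / 2| ≤ 2 := by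
      rw [abs_of_nonneg (by linarith [hx.1, hy.1])]; linarith [hx.2, hy.2]
    have h2 := mul_le_mul (H.b2 a ha) h1 (abs_nonneg _) hC.le
    linarith [H.b1 a ha]
  have t1 := H.taylor ha hd aI bI hab
  have t2 := H.taylor ha hd aI cI (hab.trans hbc)
  have t3 := H.taylor ha hd bI dI (hbc.trans hcd)
  have t4 := H.taylor ha hd cI dI hcd
  have s1 := slopeb a aI b bI hab
  have s2 := slopeb a aI c cI (hab.trans hbc)
  have s3 := slopeb b bI d dI (hbc.trans hcd)
  have s4 := slopeb c cI d dI hcd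
  have p1 := prod_err hC.le t1 t4 s4.2 (linb a aI b bI) (by positivity)
  have p2 := prod_err hC.le t2 t3 s3.2 (linb a aI c cI) (by positivity)
  set S1 := (φ b - φ a) / (b - a) with hS1
  set S2 := (φ c - φ a) / (c - a) with hS2
  set S3 := (φ d - φ b) / (d - b) with hS3
  set S4 := (φ d - φ c) / (d - c) with hS4
  have lin : (φ1 a + φ2 a * ((a - a) / 2 + (b - a) / 2)) * (φ1 a + φ2 a * ((c - a) / 2 + (d - a) / 2))
      - (φ1 a + φ2 a * ((a - a) / 2 + (c - a) / 2)) * (φ1 a + φ2 a * ((b - a) / 2 + (d - a) / 2))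
      ≤ 2 * C ^ 2 * h ^ 2 := by
    have e : (φ1 a + φ2 a * ((a - a) / 2 + (b - a) / 2)) *
        (φ1 a + φ2 a * ((c - a) / 2 + (d - a) / 2))
      - (φ1 a + φ2 a * ((a - a) / 2 + (c - a) / 2)) * (φ1 a + φ2 a * ((b - a) / 2 + (d - a) / 2))
      = (φ2 a) ^ 2 * (-((d - a) * (c - b) / 4)) := by ring
    rw [e]
    have : 0 ≤ (d - a) * (c - b) / 4 := by
      have : 0 ≤ c - b := by linarith
      have : 0 ≤ d - a := by linarith
      positivity
    have h3 : (φ2 a) ^ 2 * (-((d - a) * (c - b) / 4)) ≤ 0 :=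
      mul_nonpos_of_nonneg_of_nonpos (sq_nonneg _) (by linarith)
    have : 0 ≤ 2 * C ^ 2 * h ^ 2 := by positivity
    linarith
  have main : S1 * S4 ≤ S2 * S3 + 10 * C ^ 2 * h ^ 2 := by
    have := (abs_le.mp p1).2
    have := (abs_le.mp p2).1
    linarith
  have hφh : m * h ≤ φ d - φ a := H.lower ha hd (by linarith)
  have hexp : S1 * S4 ≤ S2 * S3 * Real.exp (10 * C ^ 2 / m ^ 4 * (φ d - φ a) ^ 2) := by
    have h23 : m ^ 2 ≤ S2 * S3 := by
      rw [pow_two]; exact mul_le_mul s2.1 s3.1 hm.le (hm.le.trans s2.1)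
    have h1 : S2 * S3 + 10 * C ^ 2 * h ^ 2 ≤ S2 * S3 * (1 + 10 * C ^ 2 / m ^ 2 * h ^ 2) := by
      have : 10 * C ^ 2 * h ^ 2 = m ^ 2 * (10 * C ^ 2 / m ^ 2 * h ^ 2) := by field_simp
      rw [this, mul_add, mul_one]
      have : 0 ≤ 10 * C ^ 2 / m ^ 2 * h ^ 2 := by positivity
      have := mul_le_mul_of_nonneg_right h23 this
      linarith
    have h2 : 10 * C ^ 2 / m ^ 2 * h ^ 2 ≤ 10 * C ^ 2 / m ^ 4 * (φ d - φ a) ^ 2 := by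
      have : (m * h) ^ 2 ≤ (φ d - φ a) ^ 2 := pow_le_pow_left₀ (by positivity) hφh 2
      have e : 10 * C ^ 2 / m ^ 2 * h ^ 2 = 10 * C ^ 2 / m ^ 4 * (m * h) ^ 2 := by
        field_simp
      rw [e]
      gcongr
    have h3 := Real.add_one_le_exp (10 * C ^ 2 / m ^ 4 * (φ d - φ a) ^ 2)
    refine main.trans (h1.trans (mul_le_mul_of_nonneg_left (by linarith) (by nlinarith)))
  have q1 : φ b - φ a = S1 * (b - a) := by rw [hS1]; field_simp [show b - a ≠ 0 by linarith]
  have q2 : φ c - φ a = S2 * (c - a) := by rw [hS2]; field_simp [show c - a ≠ 0 by linarith]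
  have q3 : φ d - φ b = S3 * (d - b) := by rw [hS3]; field_simp [show d - b ≠ 0 by linarith]
  have q4 : φ d - φ c = S4 * (d - c) := by rw [hS4]; field_simp [show d - c ≠ 0 by linarith]
  unfold cr
  rw [q1, q2, q3, q4]
  set Ex := Real.exp (10 * C ^ 2 / m ^ 4 * (φ d - φ a) ^ 2)
  have hS1p : 0 < S1 := hm.trans_le s1.1
  have hS4p : 0 < S4 := hm.trans_le s4.1
  have g1 : 0 < b - a := by linarith
  have g2 : 0 < d - c := by linarith
  have g3 : 0 < c - a := by linarith
  have g4 : 0 < d - b := by linarith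
  rw [div_mul_eq_mul_div, div_le_div_iff₀ (by positivity) (by positivity)]
  have := mul_le_mul_of_nonneg_left hexp
    (by positivity : 0 ≤ (c - a) * (d - b) * ((b - a) * (d - c)))
  linarith

/-- Bounded distortion of difference quotients. -/
lemma slope_le (H : C3Data φ φ1 φ2 φ3 m C) {x y u v : ℝ} (hx : x ∈ Icc (-1 : ℝ) 1)
    (hy : y ∈ Icc (-1 : ℝ) 1) (hu : u ∈ Icc (-1 : ℝ) 1)
    (hv : v ∈ Icc (-1 : ℝ) 1) (hxy : x < y) (huv : u < v) {h : ℝ}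
    (h1 : v - x ≤ h) (h2 : y - u ≤ h) :
    (φ y - φ x) * (v - u) ≤ (φ v - φ u) * (y - x) * Real.exp (C / m * h) := by
  obtain ⟨z, hz, ez⟩ := H.slope_ex hx hy hxy
  obtain ⟨w, hw, ew⟩ := H.slope_ex hu hv huv
  have hC := H.C_pos
  have hm := H.m_pos
  have zI : z ∈ Icc (-1 : ℝ) 1 := ⟨hx.1.trans hz.1, hz.2.trans hy.2⟩
  have wI : w ∈ Icc (-1 : ℝ) 1 := ⟨hu.1.trans hw.1, hw.2.trans hv.2⟩
  have hzw : |z - w| ≤ h := by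
    rw [abs_le]; constructor <;> linarith [hz.1, hz.2, hw.1, hw.2]
  have h3 : φ1 z ≤ φ1 w + C * h := by
    have := mvt (convex_Icc _ _) H.d1 H.b2 wI zI
    have := (le_abs_self _).trans (this.trans (mul_le_mul_of_nonneg_left hzw hC.le))
    linarith
  have hh : 0 ≤ h := (abs_nonneg _).trans hzw
  have h4 : φ1 z ≤ φ1 w * Real.exp (C / m * h) := by
    have e : C * h = m * (C / m * h) := by field_simp
    have h5 := Real.add_one_le_exp (C / m * h)
    have h6 := H.low w wI
    have h7 : m * (C / m * h) ≤ φ1 w * (C / m * h) := mul_le_mul_of_nonneg_right h6 (by positivity)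
    have h8 := mul_le_mul_of_nonneg_left h5 (hm.le.trans h6)
    linarith
  rw [ez, ew]
  have := mul_le_mul_of_nonneg_right h4 (mul_nonneg (sub_nonneg.mpr hxy.le) (sub_nonneg.mpr huv.le))
  nlinarith

end C3Data

namespace UnivExt
open scoped ContDiff
variable {φ : ℝ → ℝ} {Φ : ℂ → ℂ} {V : Set ℂ} {r C : ℝ}

lemma contDiffOn (H : UnivExt φ Φ V r C) : ContDiffOn ℝ 3 φ (Icc (-1) 1) := by
  intro x hx
  have h1 : ContDiffAt ℂ 3 Φ x :=
    ((H.hol.mono (H.ball_sub x hx)).analyticAt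
      (isOpen_ball.mem_nhds (mem_ball_self H.r_pos))).contDiffAt
  have h2 : ContDiffAt ℝ 3 Φ x := h1.restrict_scalars ℝ
  have h3 : ContDiffAt ℝ 3 (fun y : ℝ => (Φ y).re) x := by
    have e1 : ContDiffAt ℝ 3 (fun y : ℝ => Φ y) x :=
      h2.comp (f := fun y : ℝ => (y : ℂ)) x Complex.ofRealCLM.contDiff.contDiffAt
    exact Complex.reCLM.contDiff.contDiffAt.comp x e1
  refine h3.contDiffWithinAt.congr (fun y hy => ?_) ?_
  · rw [H.ext y hy, Complex.ofReal_re]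
  · rw [H.ext x hx, Complex.ofReal_re]

lemma c3data (H : UnivExt φ Φ V r C) (hC : 0 ≤ C)
    (hb : ∀ k ≤ 3, ∀ x ∈ Icc (-1 : ℝ) 1, |iteratedDerivWithin k φ (Icc (-1 : ℝ) 1) x| ≤ C) :
    C3Data φ (iteratedDerivWithin 1 φ (Icc (-1 : ℝ) 1)) (iteratedDerivWithin 2 φ (Icc (-1 : ℝ) 1))
      (iteratedDerivWithin 3 φ (Icc (-1 : ℝ) 1)) ((step' r)^[⌈8 / r⌉₊] 1) C := by
  have hu : UniqueDiffOn ℝ (Icc (-1 : ℝ) 1) := uniqueDiffOn_Icc (by norm_num)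
  have hd : ∀ k < 3, ∀ x ∈ Icc (-1 : ℝ) 1, HasDerivWithinAt (iteratedDerivWithin k φ (Icc (-1 : ℝ) 1))
      (iteratedDerivWithin (k + 1) φ (Icc (-1 : ℝ) 1) x) (Icc (-1 : ℝ) 1) x := by
    intro k hk x hx
    have := (H.contDiffOn.differentiableOn_iteratedDerivWithin (m := k)
      (by exact_mod_cast hk) hu x hx).hasDerivWithinAt
    rwa [← iteratedDerivWithin_succ] at this
  have hd0 : ∀ x ∈ Icc (-1 : ℝ) 1, HasDerivWithinAt φ
      (iteratedDerivWithin 1 φ (Icc (-1 : ℝ) 1) x) (Icc (-1 : ℝ) 1) x := by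
    intro x hx
    have := hd 0 (by norm_num) x hx
    simpa using this
  refine ⟨hd0, hd 1 (by norm_num), hd 2 (by norm_num), hb 1 (by norm_num), hb 2 (by norm_num),
    hb 3 (by norm_num), ?_, iterate_step_pos _ _⟩
  intro x hx
  have h1 := H.hasDerivWithin hx
  have h2 : iteratedDerivWithin 1 φ (Icc (-1 : ℝ) 1) x = (deriv Φ x).re :=
    (hu x hx).eq_deriv _ (hd0 x hx) h1.1
  have h3 : ‖deriv Φ x‖ = |(deriv Φ x).re| := (Complex.abs_re_eq_norm.mpr h1.2).symm
  have h4 : 0 ≤ (deriv Φ x).re := by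
    rw [← h1.1.derivWithin (hu x hx)]
    exact H.mono.monotoneOn.derivWithin_nonneg
  rw [h2, ← abs_of_nonneg h4, ← h3]
  exact H.deriv_lower hC hx

end UnivExt

/-! ### Cross ratios under power maps -/

lemma sinh_aux {α v : ℝ} (hα : 1 ≤ α) (hv : 0 ≤ v) :
    0 ≤ α * Real.cosh (α * v) * Real.sinh v - Real.sinh (α * v) * Real.cosh v := by
  have hd : ∀ x : ℝ, HasDerivAt
      (fun v => α * Real.cosh (α * v) * Real.sinh v - Real.sinh (α * v) * Real.cosh v)
      ((α ^ 2 - 1) * (Real.sinh (α * x) * Real.sinh x)) x := by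
    intro x
    have h0 : HasDerivAt (fun v : ℝ => α * v) α x := by
      simpa using (hasDerivAt_id x).const_mul α
    have h1 := (h0.cosh.const_mul α).mul (Real.hasDerivAt_sinh x)
    have h2 := h0.sinh.mul (Real.hasDerivAt_cosh x)
    exact (h1.sub h2).congr_deriv (by ring)
  have hmono : MonotoneOn
      (fun v => α * Real.cosh (α * v) * Real.sinh v - Real.sinh (α * v) * Real.cosh v) (Ici 0) := by
    apply monotoneOn_of_deriv_nonneg (convex_Ici 0)
    · exact fun x _ => (hd x).continuousAt.continuousWithinAt
    · exact fun x _ => (hd x).differentiableAt.differentiableWithinAt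
    · intro x hx
      rw [interior_Ici] at hx
      rw [(hd x).deriv]
      have hx0 : (0:ℝ) ≤ x := le_of_lt hx
      have e1 : 0 ≤ Real.sinh x := Real.sinh_nonneg_iff.mpr hx0
      have e2 : 0 ≤ Real.sinh (α * x) := Real.sinh_nonneg_iff.mpr (by positivity)
      have : 0 ≤ α ^ 2 - 1 := by nlinarith
      positivity
  have := hmono (mem_Ici.mpr (le_refl (0:ℝ))) (show v ∈ Ici (0:ℝ) from hv) hv
  simpa using this

/-- `sinh (α v) / sinh v` is nondecreasing in `v > 0`. -/
lemma sinh_ratio {α v w : ℝ} (hα : 1 ≤ α) (hv : 0 < v) (hvw : v ≤ w) :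
    Real.sinh w / Real.sinh v ≤ Real.sinh (α * w) / Real.sinh (α * v) := by
  have hmono : MonotoneOn (fun v => Real.sinh (α * v) / Real.sinh v) (Ioi 0) := by
    have hd : ∀ x ∈ Ioi (0:ℝ), HasDerivAt (fun v => Real.sinh (α * v) / Real.sinh v)
        ((α * Real.cosh (α * x) * Real.sinh x - Real.sinh (α * x) * Real.cosh x)
          / Real.sinh x ^ 2) x := by
      intro x hx
      have h0 : HasDerivAt (fun v : ℝ => α * v) α x := by
        simpa using (hasDerivAt_id x).const_mul α
      exact (h0.sinh.div (Real.hasDerivAt_sinh x) (Real.sinh_pos_iff.mpr hx).ne').congr_deriv (by ring)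
    apply monotoneOn_of_deriv_nonneg (convex_Ioi 0)
    · exact fun x hx => (hd x hx).continuousAt.continuousWithinAt
    · rw [interior_Ioi]; exact fun x hx => (hd x hx).differentiableAt.differentiableWithinAt
    · intro x hx
      rw [interior_Ioi] at hx
      rw [(hd x hx).deriv]
      exact div_nonneg (sinh_aux hα (le_of_lt hx)) (sq_nonneg _)
  have h := hmono (show v ∈ Ioi (0:ℝ) from hv) (show w ∈ Ioi (0:ℝ) from hv.trans_le hvw) hvw
  simp only at h
  have s1 : 0 < Real.sinh v := Real.sinh_pos_iff.mpr hv
  have s2 : 0 < Real.sinh w := Real.sinh_pos_iff.mpr (by linarith)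
  have s3 : 0 < Real.sinh (α * v) := Real.sinh_pos_iff.mpr (by positivity)
  rw [div_le_div_iff₀ s1 s2] at h
  rw [div_le_div_iff₀ s1 s3]
  linarith

lemma exp_sub_exp (X Y : ℝ) :
    Real.exp Y - Real.exp X = 2 * Real.exp ((X + Y) / 2) * Real.sinh ((Y - X) / 2) := by
  rw [Real.sinh_eq]
  have h1 : Real.exp Y = Real.exp ((X + Y) / 2) * Real.exp ((Y - X) / 2) := by
    rw [← Real.exp_add]; ring_nf
  have h2 : Real.exp X = Real.exp ((X + Y) / 2) * Real.exp (-((Y - X) / 2)) := by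
    rw [← Real.exp_add]; ring_nf
  rw [h1, h2]; ring

lemma cr_exp (A B C D : ℝ) (hab : A < B) (hcd : C < D) :
    cr (Real.exp A) (Real.exp B) (Real.exp C) (Real.exp D) =
      (Real.sinh ((C - A) / 2) / Real.sinh ((B - A) / 2)) *
      (Real.sinh ((D - B) / 2) / Real.sinh ((D - C) / 2)) := by
  unfold cr
  rw [exp_sub_exp A C, exp_sub_exp B D, exp_sub_exp A B, exp_sub_exp C D]
  have s1 : 0 < Real.sinh ((B - A) / 2) := Real.sinh_pos_iff.mpr (by linarith)
  have s2 : 0 < Real.sinh ((D - C) / 2) := Real.sinh_pos_iff.mpr (by linarith)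
  have e : Real.exp ((A + C) / 2) * Real.exp ((B + D) / 2) =
      Real.exp ((A + B) / 2) * Real.exp ((C + D) / 2) := by
    rw [← Real.exp_add, ← Real.exp_add]; ring_nf
  rw [div_mul_div_comm, div_eq_div_iff (by positivity) (by positivity)]
  linear_combination 4 * Real.sinh ((C - A) / 2) * Real.sinh ((D - B) / 2) *
    Real.sinh ((B - A) / 2) * Real.sinh ((D - C) / 2) * e

lemma cr_exp_zero (B C D : ℝ) (hcd : C < D) :
    cr 0 (Real.exp B) (Real.exp C) (Real.exp D) =
      Real.exp ((C - B) / 2) * (Real.sinh ((D - B) / 2) / Real.sinh ((D - C) / 2)) := by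
  unfold cr
  rw [exp_sub_exp B D, exp_sub_exp C D, sub_zero, sub_zero]
  have s2 : 0 < Real.sinh ((D - C) / 2) := Real.sinh_pos_iff.mpr (by linarith)
  have e : Real.exp C * Real.exp ((B + D) / 2) =
      Real.exp ((C - B) / 2) * (Real.exp B * Real.exp ((C + D) / 2)) := by
    rw [← Real.exp_add, ← Real.exp_add, ← Real.exp_add]; ring_nf
  rw [mul_div_assoc', div_eq_div_iff (by positivity) (by positivity)]
  linear_combination 2 * Real.sinh ((D - B) / 2) * Real.sinh ((D - C) / 2) * e

/-- power maps do not decrease cross ratios on `[0, ∞)`. -/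
lemma cr_rpow {α a b c d : ℝ} (hα : 1 ≤ α) (ha : 0 ≤ a) (hab : a < b) (hbc : b < c) (hcd : c < d) :
    cr a b c d ≤ cr (a ^ α) (b ^ α) (c ^ α) (d ^ α) := by
  have hb : 0 < b := by linarith
  have hc : 0 < c := by linarith
  have hd : 0 < d := by linarith
  have hBC := Real.log_lt_log hb hbc
  have hCD := Real.log_lt_log hc hcd
  have pw : ∀ {x : ℝ}, 0 < x → x ^ α = Real.exp (α * Real.log x) := by
    intro x hx; rw [Real.rpow_def_of_pos hx, mul_comm]
  have half : ∀ x y : ℝ, (α * Real.log x - α * Real.log y) / 2 =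
      α * ((Real.log x - Real.log y) / 2) := by intros; ring
  have r2 := sinh_ratio (v := (Real.log d - Real.log c) / 2) (w := (Real.log d - Real.log b) / 2) hα
    (by linarith) (by linarith)
  have p2 : 0 < Real.sinh ((Real.log d - Real.log b) / 2) / Real.sinh ((Real.log d - Real.log c) / 2) :=
    div_pos (Real.sinh_pos_iff.mpr (by linarith)) (Real.sinh_pos_iff.mpr (by linarith))
  have hα0 : 0 < α := by linarith
  rcases ha.eq_or_lt with rfl | ha'
  · rw [Real.zero_rpow hα0.ne', pw hb, pw hc, pw hd, cr_exp_zero _ _ _ (by gcongr)]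
    conv_lhs => rw [← Real.exp_log hb, ← Real.exp_log hc, ← Real.exp_log hd, cr_exp_zero _ _ _ hCD]
    apply mul_le_mul _ _ p2.le (Real.exp_pos _).le
    · apply Real.exp_le_exp.mpr; nlinarith
    · rw [half d b, half d c]; exact r2
  · have hAB := Real.log_lt_log ha' hab
    have r1 := sinh_ratio (v := (Real.log b - Real.log a) / 2) (w := (Real.log c - Real.log a) / 2) hα
      (by linarith) (by linarith)
    rw [pw ha', pw hb, pw hc, pw hd, cr_exp _ _ _ _ (by gcongr) (by gcongr)]
    conv_lhs => rw [← Real.exp_log ha', ← Real.exp_log hb, ← Real.exp_log hc, ← Real.exp_log hd,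
      cr_exp _ _ _ _ hAB hCD]
    apply mul_le_mul _ _ p2.le _
    · rw [half c a, half b a]; exact r1
    · rw [half d b, half d c]; exact r2
    · apply div_nonneg <;> rw [Real.sinh_nonneg_iff] <;> nlinarith

/-! ### Analytic properties of the unimodal map -/

/-- The properties of the unimodal map `f = φ ∘ q_t` of critical order `α` that enter the argument.
Besides symmetry and monotonicity these are: cross ratios on `[0,1]` decrease at most by a factor
`exp (K |image|²)` (`cr_step`); adjacent slopes compare as for a convex power, up to bounded
distortion (`slope_step`); and near the critical point `f` compares with the power `x ↦ x ^ α`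
(`final`). -/
structure UMap (f : ℝ → ℝ) (α K : ℝ) : Prop where
  one_lt : 1 < α
  K_nonneg : 0 ≤ K
  even : ∀ x, f (-x) = f x
  anti : StrictAntiOn f (Icc 0 1)
  cont : ContinuousOn f (Icc 0 1)
  f_one : f 1 = -1
  f_zero : f 0 ≤ 1
  cr_step : ∀ a b c d, 0 ≤ a → a < b → b < c → c < d → d ≤ 1 →
    cr a b c d ≤ cr (f a) (f b) (f c) (f d) * Real.exp (K * (f a - f d) ^ 2)
  slope_step : ∀ a b c, 0 ≤ a → a < b → b < c → c ≤ 1 →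
    (c - b) * (f a - f b) ≤ Real.exp (K * (f a - f c)) * ((b - a) * (f b - f c))
  final : ∀ P P', 0 < P → P < P' → P' ≤ 1 →
    (f P - f P') * P ^ α ≤ Real.exp (K * (f 0 - f P')) * ((f 0 - f P) * (P' ^ α - P ^ α))

lemma qmapR_of_nonneg {α t x : ℝ} (hx : 0 ≤ x) : qmapR α t x = -2 * t * x ^ α + 2 * t - 1 := by
  unfold qmapR; rw [abs_of_nonneg hx]

lemma cr_affine {k e : ℝ} (hk : k ≠ 0) (a b c d : ℝ) :
    cr (k * a + e) (k * b + e) (k * c + e) (k * d + e) = cr a b c d := by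
  unfold cr
  rw [show (k * c + e - (k * a + e)) * (k * d + e - (k * b + e)) =
      (k * k) * ((c - a) * (d - b)) by ring,
    show (k * b + e - (k * a + e)) * (k * d + e - (k * c + e)) =
      (k * k) * ((b - a) * (d - c)) by ring, mul_div_mul_left _ _ (mul_ne_zero hk hk)]

lemma umap_of {φ φ1 φ2 φ3 : ℝ → ℝ} {m C α t : ℝ} (H : C3Data φ φ1 φ2 φ3 m C) (hα : 1 < α)
    (ht : 0 < t) (ht1 : t ≤ 1) (hl : φ (-1) = -1) (hr : φ 1 = 1)
    (hmono : StrictMonoOn φ (Icc (-1 : ℝ) 1)) :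
    UMap (fun x => φ (qmapR α t x)) α (10 * C ^ 2 / m ^ 4 + C / m ^ 2) := by
  have hα0 : 0 < α := by linarith
  have hC := H.C_pos
  have hm := H.m_pos
  have qI : ∀ x, 0 ≤ x → x ≤ 1 → qmapR α t x ∈ Icc (-1 : ℝ) 1 := by
    intro x h0 h1
    rw [qmapR_of_nonneg h0]
    have e1 : x ^ α ≤ 1 := Real.rpow_le_one h0 h1 hα0.le
    have e0 : 0 ≤ x ^ α := Real.rpow_nonneg h0 _
    constructor <;> nlinarith
  have qanti : ∀ x y, 0 ≤ x → x < y → qmapR α t y < qmapR α t x := by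
    intro x y h0 hxy
    rw [qmapR_of_nonneg h0, qmapR_of_nonneg (h0.trans hxy.le)]
    have := Real.rpow_lt_rpow h0 hxy hα0
    nlinarith
  have hK1 : 10 * C ^ 2 / m ^ 4 ≤ 10 * C ^ 2 / m ^ 4 + C / m ^ 2 := by
    have : 0 ≤ C / m ^ 2 := by positivity
    linarith
  have hK2 : C / m ^ 2 ≤ 10 * C ^ 2 / m ^ 4 + C / m ^ 2 := by
    have : 0 ≤ 10 * C ^ 2 / m ^ 4 := by positivity
    linarith
  have hexp : ∀ x y, x ∈ Icc (-1 : ℝ) 1 → y ∈ Icc (-1 : ℝ) 1 → x ≤ y →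
      Real.exp (C / m * (y - x)) ≤
        Real.exp ((10 * C ^ 2 / m ^ 4 + C / m ^ 2) * (φ y - φ x)) := by
    intro x y hx hy hxy
    apply Real.exp_le_exp.mpr
    have h1 := H.lower hx hy hxy
    have h0 : 0 ≤ φ y - φ x := le_trans (mul_nonneg hm.le (by linarith)) h1
    calc C / m * (y - x) = C / m ^ 2 * (m * (y - x)) := by field_simp
      _ ≤ C / m ^ 2 * (φ y - φ x) := by gcongr
      _ ≤ _ := by gcongr
  refine ⟨hα, by positivity, ?_, ?_, ?_, ?_, ?_, ?_, ?_, ?_⟩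
  · intro x; simp only [qmapR, abs_neg]
  · intro x hx y hy hxy
    exact hmono (qI y hy.1 hy.2) (qI x hx.1 hx.2) (qanti x y hx.1 hxy)
  · have hφ : ContinuousOn φ (Icc (-1 : ℝ) 1) := fun x hx => (H.d0 x hx).continuousWithinAt
    refine hφ.comp ?_ (fun x hx => qI x hx.1 hx.2)
    unfold qmapR
    apply Continuous.continuousOn
    have : Continuous fun x : ℝ => |x| ^ α :=
      continuous_abs.rpow_const (fun _ => Or.inr hα0.le)
    fun_prop
  · simp only [qmapR, abs_one, Real.one_rpow]
    rw [show -2 * t * 1 + 2 * t - 1 = -1 by ring, hl]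
  · have h1 : (1:ℝ) ∈ Icc (-1 : ℝ) 1 := by norm_num
    have := hmono.monotoneOn (qI 0 le_rfl zero_le_one) h1 (qI 0 le_rfl zero_le_one).2
    rw [hr] at this; exact this
  · intro a b c d ha hab hbc hcd hd
    have hb : 0 ≤ b := by linarith
    have hc : 0 ≤ c := by linarith
    have hd0 : 0 ≤ d := by linarith
    have h1 := cr_rpow hα.le ha hab hbc hcd
    have h2 : cr (a ^ α) (b ^ α) (c ^ α) (d ^ α) =
        cr (qmapR α t d) (qmapR α t c) (qmapR α t b) (qmapR α t a) := by
      rw [cr_rev, qmapR_of_nonneg ha, qmapR_of_nonneg hb, qmapR_of_nonneg hc, qmapR_of_nonneg hd0,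
        ← cr_affine (k := -2 * t) (e := 2 * t - 1) (by linarith)]
      simp only [add_sub_assoc]
    have h3 := H.cr_le (qI d hd0 hd) (qI a ha (by linarith)) (qanti c d hc hcd) (qanti b c hb hbc)
      (qanti a b ha hab)
    rw [cr_rev (φ (qmapR α t a))] at h3
    refine h1.trans (h2 ▸ h3.trans ?_)
    apply mul_le_mul_of_nonneg_left
    · exact Real.exp_le_exp.mpr (mul_le_mul_of_nonneg_right hK1 (sq_nonneg _))
    · have f1 := hmono (qI b hb (by linarith)) (qI a ha (by linarith)) (qanti a b ha hab)
      have f2 := hmono (qI c hc (by linarith)) (qI b hb (by linarith)) (qanti b c hb hbc)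
      have f3 := hmono (qI d hd0 (by linarith)) (qI c hc (by linarith)) (qanti c d hc hcd)
      unfold cr
      apply div_nonneg
      · exact mul_nonneg_of_nonpos_of_nonpos (by linarith) (by linarith)
      · exact mul_nonneg_of_nonpos_of_nonpos (by linarith) (by linarith)
  · intro a b c ha hab hbc hc
    have hb : 0 ≤ b := by linarith
    have hc0 : 0 ≤ c := by linarith
    have qa := qI a ha (by linarith)
    have qb := qI b hb (by linarith)
    have qc := qI c hc0 hc
    have l1 := qanti a b ha hab
    have l2 := qanti b c hb hbc
    have h1 := H.slope_le qb qa qc qb l1 l2 (h := qmapR α t a - qmapR α t c) (by linarith) (by linarith)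
    have h2 := hexp _ _ qc qa (by linarith)
    have h3 : (c - b) * (qmapR α t a - qmapR α t b) ≤ (b - a) * (qmapR α t b - qmapR α t c) := by
      have := (convexOn_rpow hα.le).slope_mono_adjacent (show a ∈ Ici (0:ℝ) from ha)
        (show c ∈ Ici (0:ℝ) from hc0) hab hbc
      rw [div_le_div_iff₀ (by linarith) (by linarith)] at this
      rw [qmapR_of_nonneg ha, qmapR_of_nonneg hb, qmapR_of_nonneg hc0]
      nlinarith
    have fbc : 0 < φ (qmapR α t b) - φ (qmapR α t c) := by linarith [hmono qc qb l2]
    set e1 := Real.exp (C / m * (qmapR α t a - qmapR α t c))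
    set e2 := Real.exp ((10 * C ^ 2 / m ^ 4 + C / m ^ 2) * (φ (qmapR α t a) - φ (qmapR α t c)))
    set Qa := qmapR α t a
    set Qb := qmapR α t b
    set Qc := qmapR α t c
    have he1 : 0 < e1 := Real.exp_pos _
    have hcb : 0 < c - b := by linarith
    have hba : 0 < b - a := by linarith
    have hq : 0 < Qb - Qc := by linarith
    refine le_of_mul_le_mul_right ?_ hq
    calc (c - b) * (φ Qa - φ Qb) * (Qb - Qc) = (c - b) * ((φ Qa - φ Qb) * (Qb - Qc)) := by ring
      _ ≤ (c - b) * ((φ Qb - φ Qc) * (Qa - Qb) * e1) := by gcongr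
      _ = (φ Qb - φ Qc) * e1 * ((c - b) * (Qa - Qb)) := by ring
      _ ≤ (φ Qb - φ Qc) * e1 * ((b - a) * (Qb - Qc)) := by gcongr
      _ ≤ (φ Qb - φ Qc) * e2 * ((b - a) * (Qb - Qc)) := by gcongr
      _ = _ := by ring
  · intro P P' hP hPP hP'
    have q0 := qI 0 le_rfl zero_le_one
    have qP := qI P hP.le (by linarith)
    have qP' := qI P' (by linarith) hP'
    have l1 := qanti 0 P le_rfl hP
    have l2 := qanti P P' hP.le hPP
    have h1 := H.slope_le qP' qP qP q0 l2 l1 (h := qmapR α t 0 - qmapR α t P') (by linarith) (by linarith)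
    have h2 := hexp _ _ qP' q0 (by linarith)
    have f1 : 0 < φ (qmapR α t 0) - φ (qmapR α t P) := by linarith [hmono qP q0 l1]
    have e1 : qmapR α t 0 - qmapR α t P = (2 * t) * P ^ α := by
      rw [qmapR_of_nonneg le_rfl, qmapR_of_nonneg hP.le, Real.zero_rpow hα0.ne']; ring
    have e2 : qmapR α t P - qmapR α t P' = (2 * t) * (P' ^ α - P ^ α) := by
      rw [qmapR_of_nonneg hP.le, qmapR_of_nonneg (by linarith)]; ring
    rw [e1, e2] at h1
    have h3 := Real.rpow_lt_rpow hP.le hPP hα0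
    refine le_of_mul_le_mul_left (a := 2 * t) ?_ (by positivity)
    have h4 : (φ (qmapR α t 0) - φ (qmapR α t P)) * (2 * t * (P' ^ α - P ^ α)) *
        Real.exp (C / m * (qmapR α t 0 - qmapR α t P')) ≤
        (φ (qmapR α t 0) - φ (qmapR α t P)) * (2 * t * (P' ^ α - P ^ α)) *
        Real.exp ((10 * C ^ 2 / m ^ 4 + C / m ^ 2) * (φ (qmapR α t 0) - φ (qmapR α t P'))) := by
      apply mul_le_mul_of_nonneg_left h2
      have : 0 ≤ P' ^ α - P ^ α := by linarith
      positivity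
    linarith

/-! ### Combinatorics of a renormalization cycle -/

namespace UMap
variable {f : ℝ → ℝ} {α K : ℝ}

lemma f_abs (U : UMap f α K) (x : ℝ) : f |x| = f x := by
  rcases abs_choice x with h | h <;> rw [h]
  exact U.even x

lemma mono_neg (U : UMap f α K) : StrictMonoOn f (Icc (-1) 0) := by
  intro x hx y hy hxy
  rw [← U.even x, ← U.even y]
  exact U.anti ⟨by linarith [hy.2], by linarith [hy.1]⟩ ⟨by linarith [hx.2], by linarith [hx.1]⟩
    (by linarith)

lemma abs_mem {x : ℝ} (hx : x ∈ Icc (-1 : ℝ) 1) : |x| ∈ Icc (0 : ℝ) 1 :=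
  ⟨abs_nonneg x, abs_le.mpr hx⟩

lemma le_f0 (U : UMap f α K) {x : ℝ} (hx : x ∈ Icc (-1 : ℝ) 1) : f x ≤ f 0 := by
  rw [← U.f_abs x]
  exact U.anti.antitoneOn ⟨le_rfl, zero_le_one⟩ (abs_mem hx) (abs_nonneg x)

lemma lt_of_abs_lt (U : UMap f α K) {x y : ℝ} (hxy : |x| < y) (hy : y ≤ 1) : f y < f x := by
  rw [← U.f_abs x]
  exact U.anti ⟨abs_nonneg x, hxy.le.trans hy⟩ ⟨(abs_nonneg x).trans hxy.le, hy⟩ hxy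

/-- Every point of `[-1, f 0]` has a nonnegative preimage. -/
lemma exists_inv (U : UMap f α K) {v : ℝ} (hv : -1 ≤ v) (hv0 : v ≤ f 0) :
    ∃ u ∈ Icc (0 : ℝ) 1, f u = v := by
  have := intermediate_value_Icc' (zero_le_one' ℝ) U.cont
  rw [U.f_one] at this
  exact this ⟨hv, hv0⟩

end UMap

namespace RenCycle
variable {f : ℝ → ℝ} {α K : ℝ}

/-- The radius of the central interval. -/
def P (c : RenCycle f) : ℝ := |c.p|

/-- The orbit of the critical point; `x k` lies in the interval `k` of the cycle. -/
def x (_c : RenCycle f) (k : ℕ) : ℝ := f^[k + 1] 0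

/-- The orbit of the boundary point `P` of the central interval; `y k` lies in the interval `k`. The
*hull* of index `k` is the interval between `x k` and `y k`. -/
def y (c : RenCycle f) (k : ℕ) : ℝ := f^[k + 1] c.P

variable (c : RenCycle f)

lemma q_pos : 0 < c.q := by have := c.one_lt; omega

lemma q_pred_lt : c.q - 1 < c.q := by have := c.one_lt; omega

lemma P_pos : 0 < c.P := by
  have := c.lt (c.q - 1) c.q_pred_lt
  rw [c.central_a, c.central_b] at this
  unfold P; linarith

lemma P_lt_one : c.P < 1 := abs_lt.mpr c.hp

lemma a_last : c.a (c.q - 1) = -c.P := c.central_a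

lemma b_last : c.b (c.q - 1) = c.P := c.central_b

lemma x_succ (k : ℕ) : c.x (k + 1) = f (c.x k) := Function.iterate_succ_apply' f (k + 1) 0

lemma y_succ (k : ℕ) : c.y (k + 1) = f (c.y k) := Function.iterate_succ_apply' f (k + 1) c.P

lemma x_zero : c.x 0 = f 0 := rfl

lemma y_zero : c.y 0 = f c.P := rfl

lemma iter_mem {z : ℝ} (hz : z ∈ Icc (-c.P) c.P) {i : ℕ} (hi : i < c.q) :
    f^[i + 1] z ∈ Icc (c.a i) (c.b i) := by
  induction i with
  | zero =>
    apply c.ret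
    rw [c.a_last, c.b_last]
    exact mem_image_of_mem f hz
  | succ i ih =>
    rw [Function.iterate_succ_apply', ← c.maps_img i hi]
    exact mem_image_of_mem f (ih (by omega))

lemma x_mem {i : ℕ} (hi : i < c.q) : c.x i ∈ Icc (c.a i) (c.b i) :=
  c.iter_mem ⟨by linarith [c.P_pos], c.P_pos.le⟩ hi

lemma y_mem {i : ℕ} (hi : i < c.q) : c.y i ∈ Icc (c.a i) (c.b i) :=
  c.iter_mem ⟨by linarith [c.P_pos], le_rfl⟩ hi

lemma mem_unit {i : ℕ} (hi : i < c.q) {z : ℝ} (hz : z ∈ Icc (c.a i) (c.b i)) :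
    z ∈ Icc (-1 : ℝ) 1 := c.sub i hi hz

lemma a_ge {i : ℕ} (hi : i < c.q) : -1 ≤ c.a i := (c.mem_unit hi ⟨le_rfl, (c.lt i hi).le⟩).1

lemma b_le {i : ℕ} (hi : i < c.q) : c.b i ≤ 1 := (c.mem_unit hi ⟨(c.lt i hi).le, le_rfl⟩).2

/-- Intervals other than the central one do not contain `0` in their interior, as `f` is even and
injective on them. -/
lemma one_side (U : UMap f α K) {k : ℕ} (hk : k + 1 < c.q) : 0 ≤ c.a k ∨ c.b k ≤ 0 := by
  by_contra! h
  obtain ⟨h1, h2⟩ := h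
  set d := min (-c.a k) (c.b k) with hd
  have hd0 : 0 < d := lt_min (by linarith) h2
  have d1 : d ≤ -c.a k := min_le_left _ _
  have d2 : d ≤ c.b k := min_le_right _ _
  have := c.maps_inj k hk (⟨by linarith, by linarith⟩ : -d ∈ Icc (c.a k) (c.b k))
    (⟨by linarith, by linarith⟩ : d ∈ Icc (c.a k) (c.b k)) (U.even d)
  linarith

lemma mono_or_anti (U : UMap f α K) {k : ℕ} (hk : k + 1 < c.q) :
    StrictMonoOn f (Icc (c.a k) (c.b k)) ∨ StrictAntiOn f (Icc (c.a k) (c.b k)) := by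
  rcases c.one_side U hk with h | h
  · right; exact U.anti.mono (Icc_subset_Icc h (c.b_le (by omega)))
  · left; exact U.mono_neg.mono (Icc_subset_Icc (c.a_ge (by omega)) h)

lemma order {k l : ℕ} (hk : k < c.q) (hl : l < c.q) (hkl : k ≠ l) : c.b k ≤ c.a l ∨ c.b l ≤ c.a k := by
  by_contra! h
  have h1 := c.lt k hk
  have h2 := c.lt l hl
  have h3 : max (c.a k) (c.a l) < min (c.b k) (c.b l) :=
    max_lt (lt_min h1 h.2) (lt_min h.1 h2)
  obtain ⟨z, hz1, hz2⟩ := exists_between h3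
  have : z ∈ Ioo (c.a k) (c.b k) ∩ Ioo (c.a l) (c.b l) :=
    ⟨⟨(le_max_left _ _).trans_lt hz1, hz2.trans_le (min_le_left _ _)⟩,
      ⟨(le_max_right _ _).trans_lt hz1, hz2.trans_le (min_le_right _ _)⟩⟩
  rw [c.disj k hk l hl hkl] at this
  exact this

lemma iter_mono (U : UMap f α K) {k : ℕ} (hk : k < c.q) :
    StrictMonoOn f^[k + 1] (Icc 0 c.P) ∨ StrictAntiOn f^[k + 1] (Icc 0 c.P) := by
  have hmaps : ∀ k, k < c.q → MapsTo f^[k + 1] (Icc 0 c.P) (Icc (c.a k) (c.b k)) :=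
    fun k hk z hz => c.iter_mem ⟨by linarith [c.P_pos, hz.1], hz.2⟩ hk
  induction k with
  | zero => right; exact U.anti.mono (Icc_subset_Icc le_rfl c.P_lt_one.le)
  | succ k ih =>
    rw [Function.iterate_succ']
    have hm := hmaps k (by omega)
    rcases c.mono_or_anti U hk with h | h <;> rcases ih (by omega) with h' | h'
    · left; exact h.comp h' hm
    · right; exact h.comp_strictAntiOn h' hm
    · right; exact h.comp_strictMonoOn h' hm
    · left; exact h.comp h' hm

lemma x_ne_y (U : UMap f α K) {k : ℕ} (hk : k < c.q) : c.x k ≠ c.y k := by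
  intro h
  have hP := c.P_pos
  have h0 : (0:ℝ) ∈ Icc 0 c.P := ⟨le_rfl, hP.le⟩
  have h1 : c.P ∈ Icc 0 c.P := ⟨hP.le, le_rfl⟩
  rcases c.iter_mono U hk with h' | h'
  · exact hP.ne (h'.injOn h0 h1 h)
  · exact hP.ne (h'.injOn h0 h1 h)

lemma b_le_f0 (U : UMap f α K) {k : ℕ} (hk : k < c.q) (hk1 : 1 ≤ k) : c.b k ≤ f 0 := by
  obtain ⟨j, rfl⟩ : ∃ j, k = j + 1 := ⟨k - 1, by omega⟩
  have : c.b (j + 1) ∈ f '' Icc (c.a j) (c.b j) := by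
    rw [c.maps_img j hk]; exact ⟨(c.lt _ hk).le, le_rfl⟩
  obtain ⟨z, hz, hze⟩ := this
  rw [← hze]
  exact U.le_f0 (c.mem_unit (by omega) hz)

lemma b_le_a0 (U : UMap f α K) {k : ℕ} (hk : k < c.q) (hk1 : 1 ≤ k) : c.b k ≤ c.a 0 := by
  rcases c.order hk c.q_pos (by omega) with h | h
  · exact h
  · have h1 := c.b_le_f0 U hk hk1
    have h2 := (c.x_mem c.q_pos).2
    have h3 := c.lt k hk
    rw [c.x_zero] at h2
    linarith

lemma fP_lt_f0 (U : UMap f α K) : f c.P < f 0 :=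
  U.lt_of_abs_lt (by simpa using c.P_pos) c.P_lt_one.le

lemma le_fP (U : UMap f α K) {k : ℕ} (hk : k < c.q) (hk1 : 1 ≤ k) {z : ℝ}
    (hz : z ∈ Icc (c.a k) (c.b k)) : z ≤ f c.P :=
  hz.2.trans ((c.b_le_a0 U hk hk1).trans (c.y_mem c.q_pos).1)

lemma y_last (U : UMap f α K) : c.y (c.q - 1) = c.p := by
  have hq := c.one_lt
  have h1 : f c.P = f c.p := U.f_abs c.p
  unfold y
  rw [show c.q - 1 + 1 = (c.q - 1) + 1 from rfl, Function.iterate_succ_apply, h1,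
    ← Function.iterate_succ_apply, show (c.q - 1).succ = c.q by omega, c.periodic]

lemma x_last_le : |c.x (c.q - 1)| ≤ c.P := by
  have := c.x_mem c.q_pred_lt
  rw [c.a_last, c.b_last] at this
  exact abs_le.mpr this

/-- `c'` is a cycle of larger period, a multiple of that of `c`, nested inside `c`. -/
structure Deeper (c c' : RenCycle f) : Prop where
  dvd : c.q ∣ c'.q
  lt : c.q < c'.q
  nest : ∀ i < c'.q, ∃ j < c.q, Icc (c'.a i) (c'.b i) ⊆ Icc (c.a j) (c.b j)

variable {c} {c' : RenCycle f}

lemma Deeper.P_le (D : Deeper c c') (U : UMap f α K) : c'.P ≤ c.P := by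
  obtain ⟨j, hj, hsub⟩ := D.nest (c'.q - 1) c'.q_pred_lt
  rw [c'.a_last, c'.b_last] at hsub
  have hP := c'.P_pos
  have h1 := hsub (⟨le_rfl, by linarith⟩ : -c'.P ∈ Icc (-c'.P) c'.P)
  have h2 := hsub (⟨by linarith, le_rfl⟩ : c'.P ∈ Icc (-c'.P) c'.P)
  by_cases hjq : j + 1 < c.q
  · rcases c.one_side U hjq with h | h
    · linarith [h1.1]
    · linarith [h2.2]
  · have : j = c.q - 1 := by omega
    rw [this, c.b_last] at h2
    exact h2.2

lemma iter_q_mem (c : RenCycle f) {z : ℝ} (hz : z ∈ Icc (-c.P) c.P) (s : ℕ) :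
    (f^[c.q])^[s] z ∈ Icc (-c.P) c.P := by
  induction s with
  | zero => exact hz
  | succ s ih =>
    rw [Function.iterate_succ_apply']
    have := c.iter_mem ih c.q_pred_lt
    rw [c.a_last, c.b_last] at this
    rwa [show c.q - 1 + 1 = c.q by have := c.one_lt; omega] at this

lemma iter_mem_mod (c : RenCycle f) {z : ℝ} (hz : z ∈ Icc (-c.P) c.P) (i : ℕ) :
    f^[i + 1] z ∈ Icc (c.a (i % c.q)) (c.b (i % c.q)) := by
  have h1 := c.iter_q_mem hz (i / c.q)
  have h2 := c.iter_mem h1 (Nat.mod_lt i c.q_pos)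
  rw [← Function.iterate_mul, ← Function.iterate_add_apply] at h2
  convert h2 using 2
  have := Nat.div_add_mod i c.q
  omega

/-- A deeper cycle forces `0` to lie between the returns `x (q - 1)` of the critical point
and `y (q - 1)` of the boundary point to the central interval. -/
lemma Deeper.zero_between (D : Deeper c c') (U : UMap f α K) :
    (c.x (c.q - 1) ≤ 0 ∧ 0 ≤ c.y (c.q - 1)) ∨ (c.y (c.q - 1) ≤ 0 ∧ 0 ≤ c.x (c.q - 1)) := by
  by_contra hcon
  have hq := c.one_lt
  have hqe : c.q - 1 + 1 = c.q := by omega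
  set F := f^[c.q] with hF
  have hP := c.P_pos
  have hP' := c'.P_pos
  have hFP : F c.P = c.p := by
    have := c.y_last U; unfold y at this; rwa [hqe] at this
  have hyl : c.y (c.q - 1) = F c.P := by unfold y; rw [hqe]
  have hxl : c.x (c.q - 1) = F 0 := by unfold x; rw [hqe]
  have hmono := c.iter_mono U c.q_pred_lt
  rw [hqe] at hmono
  have hF0 : |F 0| ≤ c.P := by rw [← hxl]; exact c.x_last_le
  have hFeven : ∀ z, F |z| = F z := by
    intro z
    rw [hF, ← hqe, Function.iterate_succ_apply, Function.iterate_succ_apply, U.f_abs]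
  -- `|F|` exceeds its value at the critical point
  have habs : F 0 ≠ 0 ∧ ∀ z ∈ Icc (-c.P) c.P, z ≠ 0 → |F 0| < |F z| := by
    rw [hyl, hxl] at hcon
    push Not at hcon
    have h0 : (0:ℝ) ∈ Icc 0 c.P := ⟨le_rfl, hP.le⟩
    have h1 : c.P ∈ Icc 0 c.P := ⟨hP.le, le_rfl⟩
    have hpP : |F c.P| = c.P := by rw [hFP]; rfl
    obtain ⟨hc1, hc2⟩ := hcon
    have key : ∀ z ∈ Icc (-c.P) c.P, z ≠ 0 → |z| ∈ Icc 0 c.P ∧ 0 < |z| := by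
      intro z hz hz0
      exact ⟨⟨abs_nonneg z, abs_le.mpr hz⟩, abs_pos.mpr hz0⟩
    rcases le_or_gt 0 (F c.P) with hs | hs
    · have hx0 : 0 < F 0 := by
        by_contra! h; linarith [hc1 h]
      refine ⟨hx0.ne', fun z hz hz0 => ?_⟩
      rw [abs_of_nonneg hs] at hpP
      rw [abs_of_pos hx0] at hF0 ⊢
      obtain ⟨hz1, hz2⟩ := key z hz hz0
      rcases hmono with h | h
      · have : F 0 < F |z| := h h0 hz1 hz2
        rw [hFeven] at this
        exact this.trans_le (le_abs_self _)
      · have := h h0 h1 hP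
        linarith
    · have hx0 : F 0 < 0 := hc2 hs.le
      refine ⟨hx0.ne, fun z hz hz0 => ?_⟩
      rw [abs_of_neg hs] at hpP
      rw [abs_of_neg hx0] at hF0 ⊢
      obtain ⟨hz1, hz2⟩ := key z hz hz0
      rcases hmono with h | h
      · have := h h0 h1 hP
        linarith
      · have : F |z| < F 0 := h h0 hz1 hz2
        rw [hFeven] at this
        have := neg_abs_le (F z)
        linarith
  have hPP := D.P_le U
  -- the deeper cycle's critical orbit leaves the deeper central interval
  have h0P' : c'.P ≤ |F 0| := by
    have h1 : F 0 ∈ Icc (c'.a (c.q - 1)) (c'.b (c.q - 1)) := by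
      rw [← hxl]
      have := D.lt
      exact c'.x_mem (by omega)
    have hlt := D.lt
    rcases c'.order (k := c.q - 1) (l := c'.q - 1) (by omega) (by omega) (by omega) with h | h
    · rw [c'.a_last] at h
      have := neg_abs_le (F 0)
      linarith [h1.2]
    · rw [c'.b_last] at h
      have := le_abs_self (F 0)
      linarith [h1.1]
  obtain ⟨s, hs⟩ := D.dvd
  have hs2 : 2 ≤ s := by
    have := D.lt
    rw [hs] at this
    by_contra! h
    interval_cases s <;> omega
  have hper : |F^[s] c'.P| = c'.P := by
    have h1 := c'.y_last U
    unfold y at h1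
    rw [show c'.q - 1 + 1 = c'.q by have := c'.one_lt; omega, hs, Function.iterate_mul] at h1
    rw [hF, h1]; rfl
  have hP'mem : c'.P ∈ Icc (-c.P) c.P := ⟨by linarith, hPP⟩
  obtain ⟨s', rfl⟩ : ∃ s', s = s' + 1 + 1 := ⟨s - 2, by omega⟩
  rw [Function.iterate_succ_apply'] at hper
  set z := F^[s' + 1] c'.P with hz
  have hzmem : z ∈ Icc (-c.P) c.P := c.iter_q_mem hP'mem _
  have hz0 : z ≠ 0 := by
    rw [hz, Function.iterate_succ_apply']
    have hw := c.iter_q_mem hP'mem s'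
    intro h
    by_cases hw0 : F^[s'] c'.P = 0
    · rw [hw0] at h; exact habs.1 h
    · have := habs.2 _ hw hw0
      rw [h, abs_zero] at this
      linarith [abs_nonneg (F 0)]
  linarith [habs.2 z hzmem hz0]

end RenCycle

/-! ### Pulling back neighbourhoods along a cycle -/

/-- `z` lies strictly between `a` and `b`, in either order. -/
def Bt (a b z : ℝ) : Prop := (a < z ∧ z < b) ∨ (b < z ∧ z < a)

namespace UMap
variable {f : ℝ → ℝ} {α K : ℝ}

lemma bt_image (U : UMap f α K) {a b z : ℝ} (ha : a ∈ Icc (-1 : ℝ) 1) (hb : b ∈ Icc (-1 : ℝ) 1)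
    (hs : (0 ≤ a ∧ 0 ≤ b) ∨ (a ≤ 0 ∧ b ≤ 0)) (h : Bt a b z) : Bt (f a) (f b) (f z) := by
  have ha1 := ha.1
  have ha2 := ha.2
  have hb1 := hb.1
  have hb2 := hb.2
  rcases hs with ⟨h1, h2⟩ | ⟨h1, h2⟩ <;> rcases h with ⟨h3, h4⟩ | ⟨h3, h4⟩
  · exact Or.inr ⟨U.anti ⟨by linarith, by linarith⟩ ⟨by linarith, by linarith⟩ h4,
      U.anti ⟨by linarith, by linarith⟩ ⟨by linarith, by linarith⟩ h3⟩
  · exact Or.inl ⟨U.anti ⟨by linarith, by linarith⟩ ⟨by linarith, by linarith⟩ h4,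
      U.anti ⟨by linarith, by linarith⟩ ⟨by linarith, by linarith⟩ h3⟩
  · exact Or.inl ⟨U.mono_neg ⟨by linarith, by linarith⟩ ⟨by linarith, by linarith⟩ h3,
      U.mono_neg ⟨by linarith, by linarith⟩ ⟨by linarith, by linarith⟩ h4⟩
  · exact Or.inr ⟨U.mono_neg ⟨by linarith, by linarith⟩ ⟨by linarith, by linarith⟩ h3,
      U.mono_neg ⟨by linarith, by linarith⟩ ⟨by linarith, by linarith⟩ h4⟩

/-- The cross-ratio inequality on either side of the critical point and for either orientation. -/
lemma cr_step' (U : UMap f α K) {a b c d : ℝ} (ha : a ∈ Icc (-1 : ℝ) 1) (hd : d ∈ Icc (-1 : ℝ) 1)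
    (hs : (0 ≤ a ∧ 0 ≤ d) ∨ (a ≤ 0 ∧ d ≤ 0))
    (h : (a < b ∧ b < c ∧ c < d) ∨ (d < c ∧ c < b ∧ b < a)) :
    cr a b c d ≤ cr (f a) (f b) (f c) (f d) * Real.exp (K * (f a - f d) ^ 2) := by
  have ha1 := ha.1
  have ha2 := ha.2
  have hd1 := hd.1
  have hd2 := hd.2
  have hsq : (f a - f d) ^ 2 = (f d - f a) ^ 2 := by ring
  rcases hs with ⟨h1, h2⟩ | ⟨h1, h2⟩ <;> rcases h with ⟨h3, h4, h5⟩ | ⟨h3, h4, h5⟩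
  · exact U.cr_step a b c d h1 h3 h4 h5 (by linarith)
  · rw [← cr_rev, ← cr_rev (f a), hsq]
    exact U.cr_step d c b a h2 h3 h4 h5 (by linarith)
  · rw [← cr_rev, ← cr_rev (f a), hsq, ← cr_neg]
    have := U.cr_step (-d) (-c) (-b) (-a) (by linarith) (by linarith) (by linarith) (by linarith)
      (by linarith)
    simpa only [U.even] using this
  · rw [← cr_neg]
    have := U.cr_step (-a) (-b) (-c) (-d) (by linarith) (by linarith) (by linarith) (by linarith)
      (by linarith)
    simpa only [U.even] using this

end UMap

namespace RenCycle
variable {f : ℝ → ℝ} {α K : ℝ}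

/-- A monotone sextuple `m` in `[-1,1]` whose two middle entries are `s` and `e` and which
surrounds none of the hulls of `x k`, `y k` with `k ≠ j`. -/
structure Tup (c : RenCycle f) (j : ℕ) (s e : ℝ) (m : Fin 6 → ℝ) : Prop where
  mono : StrictMono m ∨ StrictAnti m
  mem : ∀ l, m l ∈ Icc (-1 : ℝ) 1
  ms : m 2 = s
  me : m 3 = e
  avoid : ∀ k < c.q, k ≠ j → ¬ (Bt (m 0) (m 5) (c.x k) ∧ Bt (m 0) (m 5) (c.y k))

/-- All entries lie on one side of the critical point. -/
def OneSided (m : Fin 6 → ℝ) : Prop := (∀ l, 0 ≤ m l) ∨ (∀ l, m l ≤ 0)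

variable {c c' : RenCycle f}

/-- A sextuple around an interval of the cycle can be pulled back along one step of the cycle:
it cannot contain the critical value in its hull without surrounding the first interval. -/
lemma Tup.pull (U : UMap f α K) (D : Deeper c c') {j : ℕ} (hj : j + 1 < c.q) {s e : ℝ}
    {m : Fin 6 → ℝ} (hs : s ∈ Icc (c.a j) (c.b j)) (he : e ∈ Icc (c.a j) (c.b j))
    (T : Tup c (j + 1) (f s) (f e) m) :
    ∃ m', Tup c j s e m' ∧ (∀ l, f (m' l) = m l) ∧ OneSided m' := by
  have hfs : f s ≤ f c.P := c.le_fP U hj (by omega)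
    (by rw [← c.maps_img j hj]; exact mem_image_of_mem f hs)
  have hfe : f e ≤ f c.P := c.le_fP U hj (by omega)
    (by rw [← c.maps_img j hj]; exact mem_image_of_mem f he)
  have hP := c.fP_lt_f0 U
  have hle : ∀ l, m l ≤ f 0 := by
    intro l
    by_contra! hl
    apply T.avoid 0 c.q_pos (by omega)
    rw [c.x_zero, c.y_zero]
    rcases T.mono with h | h
    · have h1 : m 0 < m 2 := h (by decide)
      have h2 : m l ≤ m 5 := h.monotone (Fin.le_last l)
      rw [T.ms] at h1
      exact ⟨Or.inl ⟨by linarith, by linarith⟩, Or.inl ⟨by linarith, by linarith⟩⟩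
    · have h1 : m 5 < m 3 := h (by decide)
      have h2 : m l ≤ m 0 := h.antitone (Fin.zero_le l)
      rw [T.me] at h1
      exact ⟨Or.inr ⟨by linarith, by linarith⟩, Or.inr ⟨by linarith, by linarith⟩⟩
  have hex : ∀ l, ∃ u ∈ Icc (0 : ℝ) 1, f u = m l := fun l => U.exists_inv (T.mem l).1 (hle l)
  choose w hw hfw using hex
  have hlt : ∀ l l', m l < m l' → w l' < w l := by
    intro l l' h
    rw [← hfw l, ← hfw l'] at h
    exact (U.anti.lt_iff_gt (hw l) (hw l')).1 h
  have hwabs : ∀ l z, z ∈ Icc (c.a j) (c.b j) → m l = f z → w l = |z| := by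
    intro l z hz hm
    refine U.anti.injOn (hw l) (UMap.abs_mem (c.mem_unit (by omega) hz)) ?_
    rw [hfw, U.f_abs, hm]
  have hw2 := hwabs 2 s hs T.ms
  have hw3 := hwabs 3 e he T.me
  have havoid : ∀ m' : Fin 6 → ℝ, (∀ l, m' l ∈ Icc (-1 : ℝ) 1) → OneSided m' →
      (∀ l, f (m' l) = m l) →
      ∀ k < c.q, k ≠ j → ¬ (Bt (m' 0) (m' 5) (c.x k) ∧ Bt (m' 0) (m' 5) (c.y k)) := by
    intro m' hm1 hm2 hm3 k hk hkj ⟨hx, hy⟩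
    have hos : (0 ≤ m' 0 ∧ 0 ≤ m' 5) ∨ (m' 0 ≤ 0 ∧ m' 5 ≤ 0) :=
      hm2.imp (fun h => ⟨h 0, h 5⟩) (fun h => ⟨h 0, h 5⟩)
    by_cases hkq : k + 1 < c.q
    · apply T.avoid (k + 1) hkq (by omega)
      rw [c.x_succ, c.y_succ, ← hm3 0, ← hm3 5]
      exact ⟨U.bt_image (hm1 0) (hm1 5) hos hx, U.bt_image (hm1 0) (hm1 5) hos hy⟩
    · have hk' : k = c.q - 1 := by omega
      subst hk'
      unfold Bt at hx hy
      have hz := D.zero_between U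
      rcases hos with ⟨h1, h2⟩ | ⟨h1, h2⟩ <;> rcases hx with ⟨h3, h4⟩ | ⟨h3, h4⟩ <;>
      rcases hy with ⟨h5, h6⟩ | ⟨h5, h6⟩ <;> rcases hz with ⟨h7, h8⟩ | ⟨h7, h8⟩ <;> linarith
  rcases c.one_side U hj with hside | hside
  · have hm1 : ∀ l, w l ∈ Icc (-1 : ℝ) 1 := fun l => ⟨by linarith [(hw l).1], (hw l).2⟩
    have hm2 : OneSided w := Or.inl fun l => (hw l).1
    refine ⟨w, ⟨?_, hm1, ?_, ?_, havoid w hm1 hm2 hfw⟩, hfw, hm2⟩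
    · rcases T.mono with h | h
      · right; intro l l' hl; exact hlt _ _ (h hl)
      · left; intro l l' hl; exact hlt _ _ (h hl)
    · rw [hw2, abs_of_nonneg (hside.trans hs.1)]
    · rw [hw3, abs_of_nonneg (hside.trans he.1)]
  · have hm1 : ∀ l, -w l ∈ Icc (-1 : ℝ) 1 := fun l =>
      ⟨by linarith [(hw l).2], by linarith [(hw l).1]⟩
    have hm2 : OneSided (fun l => -w l) := Or.inr fun l => by linarith [(hw l).1]
    have hfw' : ∀ l, f (-w l) = m l := fun l => by rw [U.even, hfw]
    refine ⟨fun l => -w l, ⟨?_, hm1, ?_, ?_, havoid (fun l => -w l) hm1 hm2 hfw'⟩, hfw', hm2⟩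
    · rcases T.mono with h | h
      · left; intro l l' hl; exact neg_lt_neg (hlt _ _ (h hl))
      · right; intro l l' hl; exact neg_lt_neg (hlt _ _ (h hl))
    · rw [hw2, abs_of_nonpos (hs.2.trans hside), neg_neg]
    · rw [hw3, abs_of_nonpos (he.2.trans hside), neg_neg]

/-- The whole chain of pullbacks down to the first interval. -/
lemma Tup.chain (U : UMap f α K) (D : Deeper c c') {s e : ℕ → ℝ} :
    ∀ {j : ℕ}, j < c.q → ∀ {m : Fin 6 → ℝ},
    (∀ i ≤ j, s i ∈ Icc (c.a i) (c.b i)) → (∀ i ≤ j, e i ∈ Icc (c.a i) (c.b i)) →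
    (∀ i < j, s (i + 1) = f (s i)) → (∀ i < j, e (i + 1) = f (e i)) →
    Tup c j (s j) (e j) m →
    ∃ M : ℕ → Fin 6 → ℝ, M j = m ∧ (∀ i ≤ j, Tup c i (s i) (e i) (M i)) ∧
      (∀ i < j, (∀ l, f (M i l) = M (i + 1) l) ∧ OneSided (M i)) := by
  intro j
  induction j with
  | zero =>
    intro hj m hs he hs1 he1 T
    refine ⟨fun _ => m, rfl, ?_, ?_⟩
    · intro i hi
      obtain rfl : i = 0 := by omega
      exact T
    · intro i hi; omega
  | succ j ih =>
    intro hj m hs he hs1 he1 T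
    rw [hs1 j (by omega), he1 j (by omega)] at T
    obtain ⟨m', T', hf, hos⟩ := T.pull U D hj (hs j (by omega)) (he j (by omega))
    obtain ⟨M, hMj, hM1, hM2⟩ := ih (by omega) (fun i hi => hs i (by omega))
      (fun i hi => he i (by omega)) (fun i hi => hs1 i (by omega)) (fun i hi => he1 i (by omega)) T'
    refine ⟨fun i => if i ≤ j then M i else m, by simp, ?_, ?_⟩
    · intro i hi
      by_cases h : i ≤ j
      · simp only [h, if_true]; exact hM1 i h
      · obtain rfl : i = j + 1 := by omega
        simp only [h, if_false]
        rw [hs1 j (by omega), he1 j (by omega)]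
        exact T
    · intro i hi
      by_cases h : i < j
      · simp only [show i ≤ j by omega, show i + 1 ≤ j by omega, if_true]
        exact hM2 i h
      · obtain rfl : i = j := by omega
        simp only [le_refl, if_true, show ¬ (i + 1 ≤ i) by omega, if_false]
        rw [hMj]
        exact ⟨hf, hos⟩

end RenCycle

/-- Telescoping of one-step inequalities with exponential error. -/
lemma telescope {u v : ℕ → ℝ} {K : ℝ} {j : ℕ}
    (h : ∀ i < j, u i ≤ u (i + 1) * Real.exp (K * v (i + 1))) {i : ℕ} (hi : i ≤ j) :
    u i ≤ u j * Real.exp (K * ∑ k ∈ Finset.Ico (i + 1) (j + 1), v k) := by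
  induction hi using Nat.decreasingInduction with
  | self => simp
  | of_succ i hi ih =>
    have h1 := h i hi
    rw [Finset.sum_eq_sum_Ico_succ_bot (by omega), mul_add, Real.exp_add]
    calc u i ≤ _ := h1
      _ ≤ (u j * Real.exp (K * ∑ k ∈ Finset.Ico (i + 1 + 1) (j + 1), v k))
          * Real.exp (K * v (i + 1)) := by gcongr
      _ = _ := by ring

open MeasureTheory in
/-- Disjoint intervals in `[-1,1]` have total length at most `2`. -/
lemma sum_disjoint_le {n : ℕ} {u v : ℕ → ℝ} (h1 : ∀ i < n, -1 ≤ u i) (h2 : ∀ i < n, v i ≤ 1)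
    (h3 : ∀ i < n, u i ≤ v i)
    (h4 : ∀ i < n, ∀ k < n, i ≠ k → ∀ z, u i < z → z < v i → u k < z → z < v k → False) :
    ∑ i ∈ Finset.range n, (v i - u i) ≤ 2 := by
  have hd : (↑(Finset.range n) : Set ℕ).PairwiseDisjoint (fun i => Ioo (u i) (v i)) := by
    intro i hi k hk hik
    rw [Function.onFun, Set.disjoint_left]
    intro z hz hz'
    simp only [Finset.coe_range, mem_Iio] at hi hk
    exact h4 i hi k hk hik z hz.1 hz.2 hz'.1 hz'.2
  have hm := measure_biUnion_finset (μ := volume) hd (fun i _ => measurableSet_Ioo)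
  have hle : volume (⋃ i ∈ Finset.range n, Ioo (u i) (v i)) ≤ volume (Icc (-1 : ℝ) 1) := by
    apply measure_mono
    intro z hz
    simp only [mem_iUnion, Finset.mem_range] at hz
    obtain ⟨i, hi, hz⟩ := hz
    exact ⟨(h1 i hi).trans hz.1.le, hz.2.le.trans (h2 i hi)⟩
  rw [hm] at hle
  simp only [Real.volume_Ioo, Real.volume_Icc] at hle
  rw [← ENNReal.ofReal_sum_of_nonneg
    (fun i hi => sub_nonneg.mpr (h3 i (Finset.mem_range.mp hi)))] at hle
  have := (ENNReal.ofReal_le_ofReal_iff (by norm_num)).1 hle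
  linarith

/-! ### The real Koebe principle along a cycle -/

namespace RenCycle
variable {f : ℝ → ℝ} {α K : ℝ} {c c' : RenCycle f}

lemma bt_iff {a b z : ℝ} : Bt a b z ↔ min a b < z ∧ z < max a b := by
  unfold Bt
  rcases le_total a b with h | h
  · rw [min_eq_left h, max_eq_right h]
    exact ⟨fun h' => h'.elim id fun h' => ⟨by linarith, by linarith⟩, Or.inl⟩
  · rw [min_eq_right h, max_eq_left h]
    exact ⟨fun h' => h'.elim (fun h' => ⟨by linarith, by linarith⟩) id, Or.inr⟩

/-- In a chain of pullbacks the hulls of the sextuples cover every point of `[-1,1]` at most three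
times: their left parts, middle parts and right parts are three disjoint families. -/
lemma sum_hull_le {s e : ℕ → ℝ} {j : ℕ} (hj : j < c.q) {M : ℕ → Fin 6 → ℝ}
    (hs : ∀ i ≤ j, s i ∈ Icc (c.a i) (c.b i)) (he : ∀ i ≤ j, e i ∈ Icc (c.a i) (c.b i))
    (hx : ∀ i ≤ j, c.x i ∈ uIcc (s i) (e i)) (hy : ∀ i ≤ j, c.y i ∈ uIcc (s i) (e i))
    (T : ∀ i ≤ j, Tup c i (s i) (e i) (M i)) :
    ∑ i ∈ Finset.range (j + 1), |M i 0 - M i 5| ≤ 6 := by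
  have hlt : ∀ i ≤ j, min (M i 0) (M i 5) < min (s i) (e i) ∧
      max (s i) (e i) < max (M i 0) (M i 5) := by
    intro i hi
    have t := T i hi
    rw [← t.ms, ← t.me]
    rcases t.mono with h | h
    · have h1 : M i 0 < M i 2 := h (by decide)
      have h2 : M i 2 < M i 3 := h (by decide)
      have h3 : M i 3 < M i 5 := h (by decide)
      rw [min_eq_left (by linarith), min_eq_left (by linarith), max_eq_right (by linarith),
        max_eq_right (by linarith)]
      exact ⟨h1, h3⟩
    · have h1 : M i 2 < M i 0 := h (by decide)
      have h2 : M i 3 < M i 2 := h (by decide)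
      have h3 : M i 5 < M i 3 := h (by decide)
      rw [min_eq_right (by linarith), min_eq_right (by linarith), max_eq_left (by linarith),
        max_eq_left (by linarith)]
      exact ⟨h3, h1⟩
  have hlo : ∀ i ≤ j, -1 ≤ min (M i 0) (M i 5) := fun i hi =>
    le_min ((T i hi).mem 0).1 ((T i hi).mem 5).1
  have hhi : ∀ i ≤ j, max (M i 0) (M i 5) ≤ 1 := fun i hi =>
    max_le ((T i hi).mem 0).2 ((T i hi).mem 5).2
  have hmn : ∀ i ≤ j, c.a i ≤ min (s i) (e i) := fun i hi => le_min (hs i hi).1 (he i hi).1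
  have hmx : ∀ i ≤ j, max (s i) (e i) ≤ c.b i := fun i hi => max_le (hs i hi).2 (he i hi).2
  have hmm : ∀ i ≤ j, min (s i) (e i) ≤ max (s i) (e i) := fun i hi => min_le_max
  -- no hull swallows the middle part of another one
  have hno : ∀ i ≤ j, ∀ k ≤ j, i ≠ k → min (M k 0) (M k 5) < min (s i) (e i) →
      max (s i) (e i) < max (M k 0) (M k 5) → False := by
    intro i hi k hk hik h1 h2
    apply (T k hk).avoid i (by omega) hik
    rw [bt_iff, bt_iff]
    have hx' := hx i hi
    have hy' := hy i hi
    rw [uIcc, mem_Icc] at hx' hy'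
    exact ⟨⟨h1.trans_le hx'.1, hx'.2.trans_lt h2⟩, ⟨h1.trans_le hy'.1, hy'.2.trans_lt h2⟩⟩
  have hord : ∀ i ≤ j, ∀ k ≤ j, i ≠ k → max (s i) (e i) ≤ min (s k) (e k) ∨
      max (s k) (e k) ≤ min (s i) (e i) := by
    intro i hi k hk hik
    rcases c.order (k := i) (l := k) (by omega) (by omega) hik with h | h
    · left; linarith [hmx i hi, hmn k hk]
    · right; linarith [hmx k hk, hmn i hi]
  have hL : ∑ i ∈ Finset.range (j + 1), (min (s i) (e i) - min (M i 0) (M i 5)) ≤ 2 := by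
    refine sum_disjoint_le (fun i hi => hlo i (by omega))
      (fun i hi => ?_) (fun i hi => (hlt i (by omega)).1.le) ?_
    · linarith [hmm i (by omega), (hlt i (by omega)).2, hhi i (by omega)]
    · intro i hi k hk hik z h1 h2 h3 h4
      have hi' : i ≤ j := by omega
      have hk' : k ≤ j := by omega
      rcases hord i hi' k hk' hik with h | h
      · exact hno i hi' k hk' hik (by linarith) (by linarith [hmm k hk', hlt k hk'])
      · exact hno k hk' i hi' hik.symm (by linarith) (by linarith [hmm i hi', hlt i hi'])
  have hR : ∑ i ∈ Finset.range (j + 1), (max (M i 0) (M i 5) - max (s i) (e i)) ≤ 2 := by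
    refine sum_disjoint_le (fun i hi => ?_)
      (fun i hi => hhi i (by omega)) (fun i hi => (hlt i (by omega)).2.le) ?_
    · linarith [hmm i (by omega), (hlt i (by omega)).1, hlo i (by omega)]
    · intro i hi k hk hik z h1 h2 h3 h4
      have hi' : i ≤ j := by omega
      have hk' : k ≤ j := by omega
      rcases hord i hi' k hk' hik with h | h
      · exact hno k hk' i hi' hik.symm (by linarith [hmm i hi', hlt i hi']) (by linarith)
      · exact hno i hi' k hk' hik (by linarith [hmm k hk', hlt k hk']) (by linarith)
  have hM : ∑ i ∈ Finset.range (j + 1), (max (s i) (e i) - min (s i) (e i)) ≤ 2 := by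
    refine sum_disjoint_le (fun i hi => ?_) (fun i hi => ?_) (fun i hi => hmm i (by omega)) ?_
    · linarith [(hlt i (by omega)).1, hlo i (by omega)]
    · linarith [(hlt i (by omega)).2, hhi i (by omega)]
    · intro i hi k hk hik z h1 h2 h3 h4
      rcases hord i (by omega) k (by omega) hik with h | h <;> linarith
  calc ∑ i ∈ Finset.range (j + 1), |M i 0 - M i 5|
      = ∑ i ∈ Finset.range (j + 1), ((min (s i) (e i) - min (M i 0) (M i 5)) +
        (max (M i 0) (M i 5) - max (s i) (e i)) + (max (s i) (e i) - min (s i) (e i))) := by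
        refine Finset.sum_congr rfl fun i _ => ?_
        have := max_sub_min_eq_abs (M i 0) (M i 5)
        rw [abs_sub_comm] at this
        linarith
    _ ≤ 6 := by
        rw [Finset.sum_add_distrib, Finset.sum_add_distrib]
        linarith

/-- What a bound on the cross ratio of an increasing quadruple says about gaps. -/
lemma cr_gap {a b c d Y : ℝ} (h : (a < b ∧ b < c ∧ c < d) ∨ (d < c ∧ c < b ∧ b < a))
    (hY : cr a b c d ≤ Y) :
    |c - b| ≤ Y * |d - c| ∧ |c - b| ≤ Y * |b - a| := by
  wlog h' : a < b ∧ b < c ∧ c < d generalizing a b c d with H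
  · obtain ⟨h1, h2, h3⟩ := h.resolve_left h'
    have := H (a := -a) (b := -b) (c := -c) (d := -d)
      (Or.inl ⟨by linarith, by linarith, by linarith⟩) (by rwa [cr_neg])
      ⟨by linarith, by linarith, by linarith⟩
    have e1 : |-c - -b| = |c - b| := by rw [show -c - -b = -(c - b) by ring, abs_neg]
    have e2 : |-d - -c| = |d - c| := by rw [show -d - -c = -(d - c) by ring, abs_neg]
    have e3 : |-b - -a| = |b - a| := by rw [show -b - -a = -(b - a) by ring, abs_neg]
    rwa [e1, e2, e3] at this
  obtain ⟨h1, h2, h3⟩ := h'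
  rw [abs_of_pos (by linarith), abs_of_pos (by linarith), abs_of_pos (by linarith)]
  unfold cr at hY
  have p1 : 0 < b - a := by linarith
  have p2 : 0 < c - b := by linarith
  have p3 : 0 < d - c := by linarith
  rw [div_le_iff₀ (mul_pos p1 p3)] at hY
  have hc : c - a = (c - b) + (b - a) := by ring
  have hd : d - b = (d - c) + (c - b) := by ring
  rw [hc, hd] at hY
  generalize c - b = v at *
  generalize b - a = u at *
  generalize d - c = w at *
  constructor
  · have : u * v ≤ u * (Y * w) := by nlinarith [mul_pos p1 p2, mul_pos p2 p3, mul_pos p2 p2]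
    exact le_of_mul_le_mul_left this p1
  · have : w * v ≤ w * (Y * u) := by nlinarith [mul_pos p1 p2, mul_pos p2 p3, mul_pos p2 p2]
    exact le_of_mul_le_mul_left this p3

lemma Tup.quad {j : ℕ} {s e : ℝ} {m : Fin 6 → ℝ} (T : Tup c j s e m) {A B C D : Fin 6}
    (h1 : A < B) (h2 : B < C) (h3 : C < D) :
    (m A < m B ∧ m B < m C ∧ m C < m D) ∨ (m D < m C ∧ m C < m B ∧ m B < m A) :=
  T.mono.imp (fun h => ⟨h h1, h h2, h h3⟩) (fun h => ⟨h h3, h h2, h h1⟩)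

lemma Tup.abs_sub_le {j : ℕ} {s e : ℝ} {m : Fin 6 → ℝ} (T : Tup c j s e m) (A D : Fin 6) :
    |m A - m D| ≤ |m 0 - m 5| := by
  have h0 : ∀ l : Fin 6, (0 : Fin 6) ≤ l := Fin.zero_le
  have h5 : ∀ l : Fin 6, l ≤ (5 : Fin 6) := fun l => Fin.le_last l
  rcases T.mono with h | h
  · have a1 := h.monotone (h0 A)
    have a2 := h.monotone (h5 A)
    have a3 := h.monotone (h0 D)
    have a4 := h.monotone (h5 D)
    rw [abs_le, abs_of_nonpos (show m 0 - m 5 ≤ 0 by linarith)]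
    constructor <;> linarith
  · have a1 := h.antitone (h0 A)
    have a2 := h.antitone (h5 A)
    have a3 := h.antitone (h0 D)
    have a4 := h.antitone (h5 D)
    rw [abs_le, abs_of_nonneg (show 0 ≤ m 0 - m 5 by linarith)]
    constructor <;> linarith

/-- Real Koebe principle along a cycle: definite space around `I_j` pulls back to definite
space around every earlier interval, up to the factor `E` bounding the accumulated distortion. The
hypothesis on `E` allows values close to `1` when the scale `η` of the cycle is small. -/
lemma koebe (U : UMap f α K) (D : Deeper c c') {s e : ℕ → ℝ} {j : ℕ} (hj : j < c.q)
    {m : Fin 6 → ℝ} {E Y η : ℝ}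
    (hs : ∀ i ≤ j, s i ∈ Icc (c.a i) (c.b i)) (he : ∀ i ≤ j, e i ∈ Icc (c.a i) (c.b i))
    (hs1 : ∀ i < j, s (i + 1) = f (s i)) (he1 : ∀ i < j, e (i + 1) = f (e i))
    (hx : ∀ i ≤ j, c.x i ∈ uIcc (s i) (e i)) (hy : ∀ i ≤ j, c.y i ∈ uIcc (s i) (e i))
    (hη : ∀ i < c.q, c.b i - c.a i ≤ η)
    (hE : ∀ u, u ≤ 12 → u ≤ 6 * ((8 * Real.exp (12 * K) + 1) * η) → Real.exp (K * u) ≤ E)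
    (T : Tup c j (s j) (e j) m)
    (h03 : cr (m 0) (m 1) (m 2) (m 3) ≤ 4) (h25 : cr (m 2) (m 3) (m 4) (m 5) ≤ 4)
    (h14 : cr (m 1) (m 2) (m 3) (m 4) ≤ Y) {i : ℕ} (hi : i ≤ j) :
    ∃ m', Tup c i (s i) (e i) m' ∧ |s i - e i| ≤ E * Y * |m' 1 - m' 2| ∧
      |s i - e i| ≤ E * Y * |m' 4 - m' 3| ∧ (i < j → OneSided m') := by
  obtain ⟨M, hMj, hT, hM⟩ := T.chain U D hj hs he hs1 he1
  have hsum := sum_hull_le hj hs he hx hy hT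
  have hK := U.K_nonneg
  have hcr : ∀ A B C D : Fin 6, A < B → B < C → C < D → ∀ i ≤ j,
      cr (M i A) (M i B) (M i C) (M i D) ≤ cr (m A) (m B) (m C) (m D) *
        Real.exp (K * ∑ k ∈ Finset.Ico (i + 1) (j + 1), (M k A - M k D) ^ 2) := by
    intro A B C D hAB hBC hCD i hi
    rw [← hMj]
    refine telescope (u := fun i => cr (M i A) (M i B) (M i C) (M i D))
      (v := fun k => (M k A - M k D) ^ 2) ?_ hi
    intro i hi
    obtain ⟨hf, hos⟩ := hM i hi
    have t := hT i hi.le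
    have := U.cr_step' (t.mem A) (t.mem D) (hos.imp (fun h => ⟨h A, h D⟩) (fun h => ⟨h A, h D⟩))
      (t.quad hAB hBC hCD)
    simpa only [hf] using this
  have hcrpos : ∀ A B C D : Fin 6, A < B → B < C → C < D →
      0 ≤ cr (m A) (m B) (m C) (m D) := by
    intro A B C D hAB hBC hCD
    unfold cr
    rcases T.quad hAB hBC hCD with ⟨h1, h2, h3⟩ | ⟨h1, h2, h3⟩
    · exact div_nonneg (mul_nonneg (by linarith) (by linarith))
        (mul_nonneg (by linarith) (by linarith))
    · exact div_nonneg (mul_nonneg_of_nonpos_of_nonpos (by linarith) (by linarith))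
        (mul_nonneg_of_nonpos_of_nonpos (by linarith) (by linarith))
  have hsub : ∀ i, ∑ k ∈ Finset.Ico (i + 1) (j + 1), |M k 0 - M k 5| ≤ 6 := by
    intro i
    refine le_trans (Finset.sum_le_sum_of_subset_of_nonneg ?_ fun _ _ _ => abs_nonneg _) hsum
    intro k hk
    simp only [Finset.mem_Ico, Finset.mem_range] at hk ⊢
    omega
  -- the sum of squares is controlled by the maximal size of the summands
  have hsq : ∀ A D : Fin 6, ∀ w, (∀ k ≤ j, |M k A - M k D| ≤ w) → ∀ i,
      ∑ k ∈ Finset.Ico (i + 1) (j + 1), (M k A - M k D) ^ 2 ≤ 6 * w := by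
    intro A D w hw i
    have hw0 : 0 ≤ w := (abs_nonneg _).trans (hw 0 (by omega))
    calc _ ≤ ∑ k ∈ Finset.Ico (i + 1) (j + 1), w * |M k 0 - M k 5| := by
          refine Finset.sum_le_sum fun k hk => ?_
          simp only [Finset.mem_Ico] at hk
          rw [← sq_abs, sq]
          exact mul_le_mul (hw k (by omega)) ((hT k (by omega)).abs_sub_le A D) (abs_nonneg _) hw0
      _ = w * ∑ k ∈ Finset.Ico (i + 1) (j + 1), |M k 0 - M k 5| := by rw [Finset.mul_sum]
      _ ≤ w * 6 := by gcongr; exact hsub i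
      _ = _ := by ring
  have htwo : ∀ A D : Fin 6, ∀ k ≤ j, |M k A - M k D| ≤ 2 := by
    intro A D k hk
    have h1 := (hT k hk).mem A
    have h2 := (hT k hk).mem D
    rw [abs_le]
    constructor <;> linarith [h1.1, h1.2, h2.1, h2.2]
  have hbig : ∀ A B C D : Fin 6, A < B → B < C → C < D → cr (m A) (m B) (m C) (m D) ≤ 4 →
      ∀ i ≤ j, cr (M i A) (M i B) (M i C) (M i D) ≤ 4 * Real.exp (12 * K) := by
    intro A B C D hAB hBC hCD h4 i hi
    refine (hcr A B C D hAB hBC hCD i hi).trans ?_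
    have h1 := hsq A D 2 (htwo A D) i
    have h2 : K * ∑ k ∈ Finset.Ico (i + 1) (j + 1), (M k A - M k D) ^ 2 ≤ 12 * K := by
      nlinarith
    gcongr
  -- the crude bound for the outer quadruples `0,1,2,3` and `2,3,4,5` shows that the inner
  -- quadruple `1,2,3,4` has size comparable with `η` all along the chain
  have hlen : ∀ k ≤ j, |M k 1 - M k 4| ≤ (8 * Real.exp (12 * K) + 1) * η := by
    intro k hk
    have t := hT k hk
    have g1 := (cr_gap (t.quad (by decide) (by decide) (by decide))
      (hbig 0 1 2 3 (by decide) (by decide) (by decide) h03 k hk)).1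
    have g2 := (cr_gap (t.quad (by decide) (by decide) (by decide))
      (hbig 2 3 4 5 (by decide) (by decide) (by decide) h25 k hk)).2
    have hse : |M k 3 - M k 2| ≤ η := by
      rw [t.ms, t.me, abs_le]
      have := hη k (by omega)
      have h1 := hs k hk
      have h2 := he k hk
      constructor <;> linarith [h1.1, h1.2, h2.1, h2.2]
    have e1 : |M k 1 - M k 4| ≤ |M k 2 - M k 1| + |M k 3 - M k 2| + |M k 4 - M k 3| := by
      rw [abs_sub_comm, show M k 4 - M k 1 =
        (M k 2 - M k 1) + (M k 3 - M k 2) + (M k 4 - M k 3) by ring]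
      exact abs_add_three _ _ _
    have hE1 := Real.exp_pos (12 * K)
    nlinarith [abs_nonneg (M k 3 - M k 2)]
  have hfin : cr (M i 1) (M i 2) (M i 3) (M i 4) ≤ E * Y := by
    refine (hcr 1 2 3 4 (by decide) (by decide) (by decide) i hi).trans ?_
    rw [mul_comm]
    have h1 := hsq 1 4 2 (htwo 1 4) i
    have h2 := hsq 1 4 _ hlen i
    have h3 := hE _ (by linarith) h2
    have h4 := hcrpos 1 2 3 4 (by decide) (by decide) (by decide)
    exact mul_le_mul h3 h14 h4 ((Real.exp_pos _).le.trans h3)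
  have t := hT i hi
  have g := cr_gap (t.quad (by decide) (by decide) (by decide)) hfin
  refine ⟨M i, t, ?_, ?_, fun h => (hM i h).2⟩
  · rw [← t.ms, ← t.me, abs_sub_comm (M i 2), abs_sub_comm (M i 1)]; rw [t.ms] at g ⊢; exact g.2
  · rw [← t.ms, ← t.me, abs_sub_comm (M i 2)]; exact g.1

end RenCycle

/-! ### Space around the intervals of a cycle -/

namespace RenCycle
variable {f : ℝ → ℝ} {α K : ℝ} {c c' : RenCycle f}

/-- `E` bounds the distortion accumulated along a cycle whose intervals have length at
most `η`. -/
def DistBound (K η E : ℝ) : Prop :=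
  ∀ u, u ≤ 12 → u ≤ 6 * ((8 * Real.exp (12 * K) + 1) * η) → Real.exp (K * u) ≤ E

lemma DistBound.one_le {η E : ℝ} (h : DistBound K η E) (hη : 0 ≤ η) : 1 ≤ E := by
  have := h 0 (by norm_num) (by positivity)
  simpa using this

lemma eta_pos {η : ℝ} (hη : ∀ i < c.q, c.b i - c.a i ≤ η) : 0 < η := by
  linarith [hη 0 c.q_pos, c.lt 0 c.q_pos]

lemma strictMono_six {a b c d e g : ℝ} (h1 : a < b) (h2 : b < c) (h3 : c < d) (h4 : d < e)
    (h5 : e < g) : StrictMono ![a, b, c, d, e, g] := by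
  rw [Fin.strictMono_iff_lt_succ]
  intro i
  fin_cases i
  exacts [h1, h2, h3, h4, h5]

lemma strictAnti_six {a b c d e g : ℝ} (h1 : b < a) (h2 : c < b) (h3 : d < c) (h4 : e < d)
    (h5 : g < e) : StrictAnti ![a, b, c, d, e, g] := by
  rw [Fin.strictAnti_iff_succ_lt]
  intro i
  fin_cases i
  exacts [h1, h2, h3, h4, h5]

lemma mem_six {a b c d e g : ℝ} {S : Set ℝ} (h0 : a ∈ S) (h1 : b ∈ S) (h2 : c ∈ S) (h3 : d ∈ S)
    (h4 : e ∈ S) (h5 : g ∈ S) (l : Fin 6) : ![a, b, c, d, e, g] l ∈ S := by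
  fin_cases l
  exacts [h0, h1, h2, h3, h4, h5]

/-- Space below the first interval: there is `l` below `f P` at distance comparable with
`f 0 - f P` such that `(l, f 0]` surrounds no other hull. It is found by pulling back from the
shortest hull, around which there is space for trivial reasons. -/
lemma space_first (U : UMap f α K) (D : Deeper c c') {E η : ℝ}
    (hη : ∀ i < c.q, c.b i - c.a i ≤ η) (hE : DistBound K η E) :
    ∃ l, -1 ≤ l ∧ l < f c.P ∧ f 0 - f c.P ≤ 9 * E * (f c.P - l) ∧
      ∀ k, 1 ≤ k → k < c.q → ¬ (l < c.x k ∧ l < c.y k) := by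
  have hE1 : 1 ≤ E := hE.one_le (eta_pos hη).le
  have hq := c.one_lt
  obtain ⟨j, hj, hmin⟩ := Finset.exists_min_image (Finset.range c.q) (fun k => |c.x k - c.y k|)
    ⟨0, Finset.mem_range.2 c.q_pos⟩
  simp only [Finset.mem_range] at hj hmin
  have hP := c.fP_lt_f0 U
  have h0 : |c.x 0 - c.y 0| = f 0 - f c.P := by
    rw [c.x_zero, c.y_zero, abs_of_pos (by linarith)]
  have hxle : ∀ k, 1 ≤ k → k < c.q → c.x k ≤ f c.P := fun k h1 h2 => c.le_fP U h2 h1 (c.x_mem h2)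
  have hyle : ∀ k, 1 ≤ k → k < c.q → c.y k ≤ f c.P := fun k h1 h2 => c.le_fP U h2 h1 (c.y_mem h2)
  have hxu : ∀ k < c.q, c.x k ∈ Icc (-1 : ℝ) 1 := fun k h => c.mem_unit h (c.x_mem h)
  have hyu : ∀ k < c.q, c.y k ∈ Icc (-1 : ℝ) 1 := fun k h => c.mem_unit h (c.y_mem h)
  rcases Nat.eq_zero_or_pos j with rfl | hj1
  · -- the first hull is the shortest
    rw [h0] at hmin
    refine ⟨f c.P - (f 0 - f c.P), ?_, by linarith, by nlinarith, ?_⟩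
    · have h1 := hmin 1 hq
      have h2 := hxle 1 le_rfl hq
      have h3 := hyle 1 le_rfl hq
      have h4 := hxu 1 hq
      have h5 := hyu 1 hq
      have : |c.x 1 - c.y 1| ≤ f c.P + 1 := by
        rw [abs_le]; constructor <;> linarith [h4.1, h5.1]
      linarith
    · rintro k hk1 hk ⟨h1, h2⟩
      have h3 := hmin k hk
      have h4 := hxle k hk1 hk
      have h5 := hyle k hk1 hk
      have : |c.x k - c.y k| < f 0 - f c.P := by
        rw [abs_lt]; constructor <;> linarith
      linarith
  have hmin0 := hmin 0 c.q_pos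
  rw [h0] at hmin0
  by_cases hleft : ∃ i < c.q, i ≠ j ∧ c.b i ≤ c.a j
  · -- an interval on each side of `I_j`
    obtain ⟨i, hi, hij, hb⟩ := hleft
    set d := c.y j - c.x j with hd
    have hdne : d ≠ 0 := fun h => c.x_ne_y U hj (by linarith)
    have hdabs : |c.x j - c.y j| = |d| := by rw [hd, abs_sub_comm]
    rw [hdabs] at hmin hmin0
    have hxj := c.x_mem hj
    have hyj := c.y_mem hj
    have hyd : c.y j = c.x j + d := by rw [hd]; ring
    -- both entries of any other hull lie on one side
    have hside : ∀ k < c.q, k ≠ j → (c.x k ≤ c.a j ∧ c.y k ≤ c.a j) ∨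
        (c.b j ≤ c.x k ∧ c.b j ≤ c.y k) := by
      intro k hk hkj
      have h1 := c.x_mem hk
      have h2 := c.y_mem hk
      rcases c.order hk hj hkj with h | h
      · left; exact ⟨h1.2.trans h, h2.2.trans h⟩
      · right; exact ⟨h.trans h1.1, h.trans h2.1⟩
    have hlow : -1 ≤ c.a j - |d| := by
      have h1 := hmin i hi
      have h2 := c.x_mem hi
      have h3 := c.y_mem hi
      have h4 := hxu i hi
      have h5 := hyu i hi
      have : |c.x i - c.y i| ≤ c.a j + 1 := by
        rw [abs_le]; constructor <;> linarith [h4.1, h5.1, h2.2, h3.2]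
      linarith
    have hhigh : c.b j + |d| ≤ 1 := by
      have h1 := c.b_le_a0 U hj hj1
      have h2 := (c.y_mem c.q_pos).1
      rw [c.y_zero] at h2
      linarith [U.f_zero]
    have hxj1 := hxj.1
    have hxj2 := hxj.2
    have hyj1 := hyj.1
    have hyj2 := hyj.2
    -- space of size `|d|` on both sides; no other hull fits, as each has length at least `|d|`
    have hT : Tup c j (c.x j) (c.y j)
        ![c.x j - d, c.x j - d / 2, c.x j, c.y j, c.y j + d / 2, c.y j + d] := by
      rcases lt_or_gt_of_ne hdne with hneg | hpos
      · rw [abs_of_neg hneg] at *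
        refine ⟨Or.inr (strictAnti_six ?_ ?_ ?_ ?_ ?_), mem_six ?_ ?_ ?_ ?_ ?_ ?_, rfl, rfl, ?_⟩
        iterate 5 linarith
        iterate 6 exact ⟨by linarith, by linarith⟩
        intro k hk hkj ⟨hx, hy⟩
        have hk' := hmin k hk
        change Bt (c.x j - d) (c.y j + d) _ at hx hy
        unfold Bt at hx hy
        replace hx := hx.resolve_left (fun h => by linarith [h.1, h.2])
        replace hy := hy.resolve_left (fun h => by linarith [h.1, h.2])
        have : |c.x k - c.y k| < -d := by
          rcases hside k hk hkj with ⟨h1, h2⟩ | ⟨h1, h2⟩ <;> rw [abs_lt] <;> constructor <;>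
            linarith [hx.1, hx.2, hy.1, hy.2]
        linarith
      · rw [abs_of_pos hpos] at *
        refine ⟨Or.inl (strictMono_six ?_ ?_ ?_ ?_ ?_), mem_six ?_ ?_ ?_ ?_ ?_ ?_, rfl, rfl, ?_⟩
        iterate 5 linarith
        iterate 6 exact ⟨by linarith, by linarith⟩
        intro k hk hkj ⟨hx, hy⟩
        have hk' := hmin k hk
        change Bt (c.x j - d) (c.y j + d) _ at hx hy
        unfold Bt at hx hy
        replace hx := hx.resolve_right (fun h => by linarith [h.1, h.2])
        replace hy := hy.resolve_right (fun h => by linarith [h.1, h.2])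
        have : |c.x k - c.y k| < d := by
          rcases hside k hk hkj with ⟨h1, h2⟩ | ⟨h1, h2⟩ <;> rw [abs_lt] <;> constructor <;>
            linarith [hx.1, hx.2, hy.1, hy.2]
        linarith
    obtain ⟨m', T', -, h4, -⟩ := koebe U D hj (s := c.x) (e := c.y) (Y := 9)
      (fun i hi => c.x_mem (by omega)) (fun i hi => c.y_mem (by omega))
      (fun i _ => c.x_succ i) (fun i _ => c.y_succ i) (fun i _ => left_mem_uIcc)
      (fun i _ => right_mem_uIcc) hη hE hT
      (by
        change cr (c.x j - d) (c.x j - d / 2) (c.x j) (c.y j) ≤ 4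
        rw [hyd]; unfold cr
        rw [show (c.x j - (c.x j - d)) * (c.x j + d - (c.x j - d / 2)) = (3 / 2 * d ^ 2) by ring,
          show (c.x j - d / 2 - (c.x j - d)) * (c.x j + d - c.x j) = 1 / 2 * d ^ 2 by ring,
          mul_div_mul_right _ _ (pow_ne_zero 2 hdne)]
        norm_num)
      (by
        change cr (c.x j) (c.y j) (c.y j + d / 2) (c.y j + d) ≤ 4
        rw [hyd]; unfold cr
        rw [show (c.x j + d + d / 2 - c.x j) * (c.x j + d + d - (c.x j + d)) = (3 / 2 * d ^ 2)
            by ring,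
          show (c.x j + d - c.x j) * (c.x j + d + d - (c.x j + d + d / 2)) = 1 / 2 * d ^ 2 by ring,
          mul_div_mul_right _ _ (pow_ne_zero 2 hdne)]
        norm_num)
      (by
        change cr (c.x j - d / 2) (c.x j) (c.y j) (c.y j + d / 2) ≤ 9
        rw [hyd]; unfold cr
        rw [show (c.x j + d - (c.x j - d / 2)) * (c.x j + d + d / 2 - c.x j) = (9 / 4 * d ^ 2)
            by ring,
          show (c.x j - (c.x j - d / 2)) * (c.x j + d + d / 2 - (c.x j + d)) = 1 / 4 * d ^ 2
            by ring,
          mul_div_mul_right _ _ (pow_ne_zero 2 hdne)]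
        norm_num)
      (Nat.zero_le j)
    have ms := T'.ms
    have me := T'.me
    rw [c.x_zero] at ms
    rw [c.y_zero] at me
    have hanti : StrictAnti m' := by
      refine T'.mono.resolve_left fun h => ?_
      have : m' 2 < m' 3 := h (by decide)
      linarith
    have a1 : m' 4 < m' 3 := hanti (by decide)
    have a2 : m' 5 < m' 4 := hanti (by decide)
    have a3 : m' 2 < m' 0 := hanti (by decide)
    rw [h0, abs_of_neg (by linarith), me] at h4
    refine ⟨m' 4, (T'.mem 4).1, by linarith, by linarith, ?_⟩
    rintro k hk1 hk ⟨h1, h2⟩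
    have h5 := hxle k hk1 hk
    have h6 := hyle k hk1 hk
    exact T'.avoid k hk (by omega) ⟨Or.inr ⟨by linarith, by linarith⟩, Or.inr ⟨by linarith,
      by linarith⟩⟩
  · -- `I_j` is the leftmost interval
    push Not at hleft
    have hright : ∀ i < c.q, i ≠ j → c.b j ≤ c.a i := fun i hi hij =>
      (c.order hj hi hij.symm).resolve_right (not_le.2 (hleft i hi hij))
    obtain ⟨j', rfl⟩ : ∃ j', j = j' + 1 := ⟨j - 1, by omega⟩
    have hj' : j' < c.q := by omega
    have hba := hright j' hj' (by omega)
    rcases c.one_side U hj with hpos | hneg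
    · rcases Nat.eq_zero_or_pos j' with rfl | hj2
      · -- the leftmost interval is the second one
        have hf0 := U.f_zero
        have hfP0 : 0 ≤ f c.P := hpos.trans (c.y_mem c.q_pos).1
        have hx1 : c.x 1 = f (f 0) := by rw [c.x_succ 0, c.x_zero]
        have hy1 : c.y 1 = f (f c.P) := by rw [c.y_succ 0, c.y_zero]
        have hlt : c.x 1 < c.y 1 := by
          rw [hx1, hy1]
          exact U.anti ⟨hfP0, by linarith⟩ ⟨by linarith, hf0⟩ hP
        rw [zero_add] at hmin hmin0 hj
        have hd : |c.x 1 - c.y 1| = c.y 1 - c.x 1 := by rw [abs_of_neg (by linarith)]; ring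
        rw [hd] at hmin hmin0
        obtain ⟨l, hl, hfl⟩ := U.exists_inv (v := 2 * c.y 1 - c.x 1)
          (by linarith [(hyu 1 hj).1]) (by linarith [hyle 1 le_rfl hj])
        have hl2 : l < f c.P := by
          rw [← U.anti.lt_iff_gt ⟨hfP0, by linarith⟩ hl, hfl, ← hy1]
          linarith
        refine ⟨l, by linarith [hl.1], hl2, ?_, ?_⟩
        · have h1 := U.slope_step l (f c.P) (f 0) hl.1 hl2 hP hf0
          rw [hfl, ← hy1, ← hx1] at h1
          have h2 : Real.exp (K * (2 * c.y 1 - c.x 1 - c.x 1)) ≤ E := by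
            apply hE
            · linarith [(hyu 1 hj).2, (hxu 1 hj).1]
            · have h3 := hη 1 hj
              have h4 := (c.y_mem hj).2
              have h5 := (c.x_mem hj).1
              have h6 := Real.exp_pos (12 * K)
              have h7 := eta_pos hη
              nlinarith [mul_pos h6 h7]
          have h3 : (f 0 - f c.P) * (c.y 1 - c.x 1) ≤
              (E * (f c.P - l)) * (c.y 1 - c.x 1) := by
            calc _ = (f 0 - f c.P) * (2 * c.y 1 - c.x 1 - c.y 1) := by ring
              _ ≤ _ := h1
              _ ≤ E * ((f c.P - l) * (c.y 1 - c.x 1)) := by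
                gcongr
              _ = _ := by ring
          have h4 := le_of_mul_le_mul_right h3 (by linarith)
          nlinarith
        · rintro k hk1 hk ⟨h1, h2⟩
          by_cases hkq : k + 1 < c.q
          · have h3 := hmin (k + 1) hkq
            have h4 := hxle k hk1 hk
            have h5 := hyle k hk1 hk
            have hl1 := hl.1
            have key : ∀ z, l < z → z ≤ f c.P → c.y 1 ≤ f z ∧ f z < 2 * c.y 1 - c.x 1 := by
              intro z hz1 hz2
              rw [hy1]
              constructor
              · exact U.anti.antitoneOn ⟨by linarith, by linarith⟩ ⟨hfP0, by linarith⟩ hz2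
              · rw [← hy1, ← hfl]
                exact U.anti hl ⟨by linarith, by linarith⟩ hz1
            have k1 := key _ h1 h4
            have k2 := key _ h2 h5
            rw [← c.x_succ] at k1
            rw [← c.y_succ] at k2
            have : |c.x (k + 1) - c.y (k + 1)| < c.y 1 - c.x 1 := by
              rw [abs_lt]; constructor <;> linarith [k1.1, k1.2, k2.1, k2.2]
            linarith
          · obtain rfl : k = c.q - 1 := by omega
            have := hl.1
            rcases D.zero_between U with ⟨h3, h4⟩ | ⟨h3, h4⟩ <;> linarith
      · -- The leftmost interval lies to the right of `0`, where `f` is decreasing, so the image of the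
        -- rightmost interval, the one of index `0`, is further left than that of any other one.
        exfalso
        have hf0 := U.f_zero
        have h1q : 1 < c.q := hq
        have hb1 := hright 1 hq (by omega)
        have hx1 : c.x 1 = f (f 0) := by rw [c.x_succ 0, c.x_zero]
        have key : ∀ z ∈ Icc (c.a j') (c.b j'), c.x 1 ≤ f z := by
          intro z hz
          have h1 := c.le_fP U hj' hj2 hz
          have h2 := hpos.trans hz.1
          rw [hx1]
          exact U.anti.antitoneOn ⟨h2, by linarith⟩ ⟨by linarith, hf0⟩ (by linarith)
        have k1 := key _ (c.x_mem hj')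
        have k2 := key _ (c.y_mem hj')
        rw [← c.x_succ] at k1
        rw [← c.y_succ] at k2
        have h3 := (c.x_mem hj).2
        have h4 := (c.y_mem hj).2
        have h5 := (c.x_mem hq).1
        exact c.x_ne_y U hj (by linarith)
    · -- `f` is increasing on the left of `0` and moves the interval `j'` to the left, so the later
      -- orbit stays on the left of `0`, contradicting `zero_between`.
      exfalso
      have hab := c.lt j' hj'
      have ha1 := c.a_ge hj'
      have hfa : f (c.a j') ≤ c.a j' := by
        have : f (c.a j') ∈ Icc (c.a (j' + 1)) (c.b (j' + 1)) := by
          rw [← c.maps_img j' hj]; exact mem_image_of_mem f ⟨le_rfl, hab.le⟩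
        exact this.2.trans hba
      have key : ∀ z, z ∈ Icc (-1 : ℝ) 1 → z ≤ c.a j' → f z ≤ c.a j' := by
        intro z hz hza
        refine le_trans ?_ hfa
        exact U.mono_neg.monotoneOn ⟨hz.1, by linarith⟩ ⟨ha1, by linarith⟩ hza
      have hind : ∀ k, j' + 1 ≤ k → k < c.q → c.x k ≤ c.a j' ∧ c.y k ≤ c.a j' := by
        intro k hk
        induction k, hk using Nat.le_induction with
        | base => exact fun h => ⟨(c.x_mem h).2.trans hba, (c.y_mem h).2.trans hba⟩
        | succ k hk ih =>
          intro h
          obtain ⟨h1, h2⟩ := ih (by omega)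
          rw [c.x_succ, c.y_succ]
          exact ⟨key _ (hxu k (by omega)) h1, key _ (hyu k (by omega)) h2⟩
      obtain ⟨h1, h2⟩ := hind (c.q - 1) (by omega) c.q_pred_lt
      rcases D.zero_between U with ⟨h3, h4⟩ | ⟨h3, h4⟩ <;> linarith

/-- Space around the central interval: the space below the first interval, pulled back through
the critical point. -/
lemma space_central (U : UMap f α K) (D : Deeper c c') {E η τ : ℝ}
    (hη : ∀ i < c.q, c.b i - c.a i ≤ η) (hE : DistBound K η E) (hτ : 0 < τ)
    (hτE : (1 + τ) ^ α ≤ 1 + 1 / (9 * E ^ 2)) :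
    (1 + τ) * c.P ≤ 1 ∧ ∀ k, k + 1 < c.q →
      ¬ (|c.x k| < (1 + τ) * c.P ∧ |c.y k| < (1 + τ) * c.P) := by
  obtain ⟨l, hl1, hl2, hl3, hl4⟩ := space_first U D hη hE
  have hE1 : 1 ≤ E := hE.one_le (eta_pos hη).le
  have hP := c.fP_lt_f0 U
  have hPp := c.P_pos
  have hα : 0 < α := by linarith [U.one_lt]
  set l' := f c.P - (f 0 - f c.P) / (9 * E) with hl'
  have hll : l ≤ l' := by
    have : (f 0 - f c.P) / (9 * E) ≤ f c.P - l := by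
      rw [div_le_iff₀ (by positivity)]; linarith
    linarith
  have hdiv : 0 < (f 0 - f c.P) / (9 * E) := div_pos (by linarith) (by positivity)
  obtain ⟨P', hP', hfP'⟩ := U.exists_inv (v := l') (by linarith) (by linarith)
  have hPP : c.P < P' := by
    rw [← U.anti.lt_iff_gt hP' ⟨hPp.le, c.P_lt_one.le⟩, hfP']
    linarith
  have hfin := U.final c.P P' hPp hPP hP'.2
  rw [hfP'] at hfin
  have hexp : Real.exp (K * (f 0 - l')) ≤ E := by
    have h1 : (f 0 - f c.P) / (9 * E) ≤ f 0 - f c.P := by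
      rw [div_le_iff₀ (by positivity)]
      nlinarith
    have h2 := (c.mem_unit c.q_pos (c.y_mem c.q_pos)).1
    rw [c.y_zero] at h2
    have h3 := U.f_zero
    have h4 : f 0 - f c.P ≤ η := by
      have h5 := (c.y_mem c.q_pos).1
      have h6 := (c.x_mem c.q_pos).2
      rw [c.y_zero] at h5
      rw [c.x_zero] at h6
      linarith [hη 0 c.q_pos]
    apply hE
    · linarith
    · have h6 := Real.exp_pos (12 * K)
      have h7 := eta_pos hη
      nlinarith [mul_pos h6 h7]
  have hpow : c.P ^ α * (1 + 1 / (9 * E ^ 2)) ≤ P' ^ α := by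
    have hmono : c.P ^ α ≤ P' ^ α := Real.rpow_le_rpow hPp.le hPP.le hα.le
    have h1 : (f 0 - f c.P) * (c.P ^ α / (9 * E)) ≤ (f 0 - f c.P) * (E * (P' ^ α - c.P ^ α)) := by
      calc _ = (f c.P - l') * c.P ^ α := by rw [hl']; field_simp; ring
        _ ≤ _ := hfin
        _ ≤ E * ((f 0 - f c.P) * (P' ^ α - c.P ^ α)) := by
          gcongr
        _ = _ := by ring
    have h2 := le_of_mul_le_mul_left h1 (by linarith)
    have h3 : c.P ^ α / (9 * E ^ 2) ≤ P' ^ α - c.P ^ α := by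
      rw [div_le_iff₀ (by positivity)] at h2 ⊢
      nlinarith
    have h4 : c.P ^ α * (1 + 1 / (9 * E ^ 2)) = c.P ^ α + c.P ^ α / (9 * E ^ 2) := by ring
    linarith
  have hτP : (1 + τ) * c.P ≤ P' := by
    rw [← Real.rpow_le_rpow_iff (by positivity) hP'.1 hα, Real.mul_rpow (by positivity) hPp.le]
    calc _ ≤ (1 + 1 / (9 * E ^ 2)) * c.P ^ α := by gcongr
      _ ≤ _ := by linarith
  refine ⟨hτP.trans hP'.2, fun k hk ⟨h1, h2⟩ => ?_⟩
  have k1 := U.lt_of_abs_lt (h1.trans_le hτP) hP'.2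
  have k2 := U.lt_of_abs_lt (h2.trans_le hτP) hP'.2
  rw [hfP', ← c.x_succ] at k1
  rw [hfP', ← c.y_succ] at k2
  exact hl4 (k + 1) (by omega) hk ⟨by linarith, by linarith⟩

/-- The endpoints of the first interval are mapped to the endpoints of the interval `k`. -/
lemma ends (U : UMap f α K) (c : RenCycle f) {k : ℕ} (hk : k < c.q) :
    (f^[k] (c.a 0) = c.a k ∧ f^[k] (c.b 0) = c.b k) ∨
      (f^[k] (c.a 0) = c.b k ∧ f^[k] (c.b 0) = c.a k) := by
  induction k with
  | zero => left; exact ⟨rfl, rfl⟩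
  | succ k ih =>
    have hab := c.lt k (by omega)
    have ha : c.a k ∈ Icc (c.a k) (c.b k) := ⟨le_rfl, hab.le⟩
    have hb : c.b k ∈ Icc (c.a k) (c.b k) := ⟨hab.le, le_rfl⟩
    have hab' := c.lt (k + 1) hk
    have himg := c.maps_img k hk
    have hfa : f (c.a k) ∈ Icc (c.a (k + 1)) (c.b (k + 1)) := by
      rw [← himg]; exact mem_image_of_mem f ha
    have hfb : f (c.b k) ∈ Icc (c.a (k + 1)) (c.b (k + 1)) := by
      rw [← himg]; exact mem_image_of_mem f hb
    obtain ⟨z, hz, hz'⟩ : c.a (k + 1) ∈ f '' Icc (c.a k) (c.b k) := by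
      rw [himg]; exact ⟨le_rfl, hab'.le⟩
    obtain ⟨w, hw, hw'⟩ : c.b (k + 1) ∈ f '' Icc (c.a k) (c.b k) := by
      rw [himg]; exact ⟨hab'.le, le_rfl⟩
    have hcases : (f (c.a k) = c.a (k + 1) ∧ f (c.b k) = c.b (k + 1)) ∨
        (f (c.a k) = c.b (k + 1) ∧ f (c.b k) = c.a (k + 1)) := by
      rcases c.mono_or_anti U hk with h | h
      · left
        have h1 := h.monotoneOn ha hz hz.1
        have h2 := h.monotoneOn hw hb hw.2
        exact ⟨le_antisymm (by linarith) hfa.1, le_antisymm hfb.2 (by linarith)⟩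
      · right
        have h1 := h.antitoneOn ha hw hw.1
        have h2 := h.antitoneOn hz hb hz.2
        exact ⟨le_antisymm hfa.2 (by linarith), le_antisymm (by linarith) hfb.1⟩
    rw [Function.iterate_succ_apply', Function.iterate_succ_apply']
    rcases ih (by omega) with ⟨h1, h2⟩ | ⟨h1, h2⟩ <;> rw [h1, h2]
    · exact hcases
    · exact hcases.symm.imp And.symm And.symm

/-- Space around every interval of the cycle. -/
lemma space_all (U : UMap f α K) (D : Deeper c c') {E η τ X : ℝ}
    (hη : ∀ i < c.q, c.b i - c.a i ≤ η) (hE : DistBound K η E) (hτ : 0 < τ) (hτ1 : τ ≤ 1)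
    (hτE : (1 + τ) ^ α ≤ 1 + 1 / (9 * E ^ 2)) (hX : X = E * (1 + 4 / τ) ^ 2)
    {i : ℕ} (hi : i < c.q) :
    ∃ u v, u < c.a i ∧ c.b i < v ∧ c.b i - c.a i ≤ X * (c.a i - u) ∧
      c.b i - c.a i ≤ X * (v - c.b i) ∧
      (∀ k < c.q, k ≠ i → ¬ (c.x k ∈ Ioo u v ∧ c.y k ∈ Ioo u v)) ∧
      (i + 1 < c.q → 0 ≤ u ∨ v ≤ 0) := by
  obtain ⟨hP1, hav⟩ := space_central U D hη hE hτ hτE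
  have hq := c.one_lt
  have hPp := c.P_pos
  set s : ℕ → ℝ := fun k => f^[k] (c.a 0) with hs
  set e : ℕ → ℝ := fun k => f^[k] (c.b 0) with he
  have hends : ∀ k < c.q, (s k = c.a k ∧ e k = c.b k) ∨ (s k = c.b k ∧ e k = c.a k) :=
    fun k hk => c.ends U hk
  have hu : ∀ k < c.q, uIcc (s k) (e k) = Icc (c.a k) (c.b k) := by
    intro k hk
    rcases hends k hk with ⟨h1, h2⟩ | ⟨h1, h2⟩ <;> rw [h1, h2]
    · exact uIcc_of_le (c.lt k hk).le
    · exact uIcc_of_ge (c.lt k hk).le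
  set σ := e (c.q - 1) with hσ
  have hσs : s (c.q - 1) = -σ ∧ (σ = c.P ∨ σ = -c.P) := by
    rcases hends (c.q - 1) c.q_pred_lt with ⟨h1, h2⟩ | ⟨h1, h2⟩
    · rw [h1, hσ, h2, c.a_last, c.b_last]; exact ⟨rfl, Or.inl rfl⟩
    · rw [h1, hσ, h2, c.a_last, c.b_last]; exact ⟨(neg_neg _).symm, Or.inr rfl⟩
  obtain ⟨hsσ, hσP⟩ := hσs
  have hσne : σ ≠ 0 := by rcases hσP with h | h <;> rw [h] <;> linarith
  have hτP : 0 < τ * c.P := mul_pos hτ hPp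
  have hT : Tup c (c.q - 1) (s (c.q - 1)) σ
      ![-((1 + τ) * σ), -((1 + τ / 2) * σ), -σ, σ, (1 + τ / 2) * σ, (1 + τ) * σ] := by
    have hbt : ∀ z, Bt (-((1 + τ) * σ)) ((1 + τ) * σ) z → |z| < (1 + τ) * c.P := by
      intro z hz
      unfold Bt at hz
      rw [abs_lt]
      rcases hσP with h | h <;> rw [h] at hz <;> rcases hz with ⟨h1, h2⟩ | ⟨h1, h2⟩ <;>
        constructor <;> nlinarith
    refine ⟨?_, ?_, hsσ.symm, rfl, ?_⟩
    · rcases hσP with h | h <;> rw [h]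
      · left; apply strictMono_six <;> nlinarith
      · right; apply strictAnti_six <;> nlinarith
    · rcases hσP with h | h <;> rw [h] <;> refine mem_six ?_ ?_ ?_ ?_ ?_ ?_ <;>
        constructor <;> nlinarith
    · intro k hk hkq ⟨h1, h2⟩
      exact hav k (by omega) ⟨hbt _ h1, hbt _ h2⟩
  obtain ⟨m', T', h1, h2, h3⟩ := koebe U D c.q_pred_lt (s := s) (e := e) (Y := (1 + 4 / τ) ^ 2)
    (fun i hi => by rw [← hu i (by omega)]; exact left_mem_uIcc)
    (fun i hi => by rw [← hu i (by omega)]; exact right_mem_uIcc)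
    (fun i _ => Function.iterate_succ_apply' f i _) (fun i _ => Function.iterate_succ_apply' f i _)
    (fun i hi => by rw [hu i (by omega)]; exact c.x_mem (by omega))
    (fun i hi => by rw [hu i (by omega)]; exact c.y_mem (by omega)) hη hE hT
    (by
      change cr (-((1 + τ) * σ)) (-((1 + τ / 2) * σ)) (-σ) σ ≤ 4
      unfold cr
      rw [show (-σ - -((1 + τ) * σ)) * (σ - -((1 + τ / 2) * σ)) =
          (2 + τ / 2) * (τ * σ ^ 2) by ring,
        show (-((1 + τ / 2) * σ) - -((1 + τ) * σ)) * (σ - -σ) = 1 * (τ * σ ^ 2) by ring,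
        mul_div_mul_right _ _ (mul_ne_zero hτ.ne' (pow_ne_zero 2 hσne))]
      linarith)
    (by
      change cr (-σ) σ ((1 + τ / 2) * σ) ((1 + τ) * σ) ≤ 4
      unfold cr
      rw [show ((1 + τ / 2) * σ - -σ) * ((1 + τ) * σ - σ) =
          (2 + τ / 2) * (τ * σ ^ 2) by ring,
        show (σ - -σ) * ((1 + τ) * σ - (1 + τ / 2) * σ) = 1 * (τ * σ ^ 2) by ring,
        mul_div_mul_right _ _ (mul_ne_zero hτ.ne' (pow_ne_zero 2 hσne))]
      linarith)
    (by
      change cr (-((1 + τ / 2) * σ)) (-σ) σ ((1 + τ / 2) * σ) ≤ (1 + 4 / τ) ^ 2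
      unfold cr
      refine le_of_eq ?_
      rw [show (σ - -((1 + τ / 2) * σ)) * ((1 + τ / 2) * σ - -σ) =
          (2 + τ / 2) ^ 2 * σ ^ 2 by ring,
        show (-σ - -((1 + τ / 2) * σ)) * ((1 + τ / 2) * σ - σ) = (τ / 2) ^ 2 * σ ^ 2 by ring,
        mul_div_mul_right _ _ (pow_ne_zero 2 hσne)]
      field_simp
      ring)
    (show i ≤ c.q - 1 by omega)
  rw [← hX] at h1 h2
  have hlen : |s i - e i| = c.b i - c.a i := by
    have := c.lt i hi
    rcases hends i hi with ⟨h1, h2⟩ | ⟨h1, h2⟩ <;> rw [h1, h2]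
    · rw [abs_of_neg (by linarith)]; ring
    · rw [abs_of_pos (by linarith)]
  rw [hlen] at h1 h2
  have hab := c.lt i hi
  have ms := T'.ms
  have me := T'.me
  rcases T'.mono with h | h
  · have a0 : m' 0 < m' 1 := h (by decide)
    have a1 : m' 1 < m' 2 := h (by decide)
    have a2 : m' 2 < m' 3 := h (by decide)
    have a3 : m' 3 < m' 4 := h (by decide)
    have a4 : m' 4 < m' 5 := h (by decide)
    obtain ⟨hsi, hei⟩ := (hends i hi).resolve_right (fun h' => by
      rw [ms, me, h'.1, h'.2] at a2; linarith)
    rw [abs_of_neg (by linarith), ms, hsi] at h1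
    rw [abs_of_pos (by linarith), me, hei] at h2
    refine ⟨m' 1, m' 4, by linarith, by linarith, by linarith, by linarith, ?_, ?_⟩
    · intro k hk hki ⟨hx, hy⟩
      exact T'.avoid k hk hki ⟨Or.inl ⟨a0.trans hx.1, hx.2.trans a4⟩,
        Or.inl ⟨a0.trans hy.1, hy.2.trans a4⟩⟩
    · intro hiq
      exact (h3 (by omega)).imp (fun h => h 1) (fun h => h 4)
  · have a0 : m' 1 < m' 0 := h (by decide)
    have a1 : m' 2 < m' 1 := h (by decide)
    have a2 : m' 3 < m' 2 := h (by decide)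
    have a3 : m' 4 < m' 3 := h (by decide)
    have a4 : m' 5 < m' 4 := h (by decide)
    obtain ⟨hsi, hei⟩ := (hends i hi).resolve_left (fun h' => by
      rw [ms, me, h'.1, h'.2] at a2; linarith)
    rw [abs_of_pos (by linarith), ms, hsi] at h1
    rw [abs_of_neg (by linarith), me, hei] at h2
    refine ⟨m' 4, m' 1, by linarith, by linarith, by linarith, by linarith, ?_, ?_⟩
    · intro k hk hki ⟨hx, hy⟩
      exact T'.avoid k hk hki ⟨Or.inr ⟨a4.trans hx.1, hx.2.trans a0⟩,
        Or.inr ⟨a4.trans hy.1, hy.2.trans a0⟩⟩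
    · intro hiq
      exact (h3 (by omega)).imp (fun h => h 4) (fun h => h 1)

end RenCycle

/-! ### Geometric decay and distance to the critical point -/

namespace RenCycle
variable {f : ℝ → ℝ} {α K : ℝ} {c c' c'' : RenCycle f}

/-- Intervals of a deeper cycle are definitely shorter than the intervals containing them: each
interval of `c` holds at least two of `c'`, and there is space around each of those. -/
lemma shrink (U : UMap f α K) (D : Deeper c c') (D' : Deeper c' c'') {E η τ X : ℝ}
    (hη : ∀ i < c'.q, c'.b i - c'.a i ≤ η) (hE : DistBound K η E) (hτ : 0 < τ) (hτ1 : τ ≤ 1)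
    (hτE : (1 + τ) ^ α ≤ 1 + 1 / (9 * E ^ 2)) (hX : X = E * (1 + 4 / τ) ^ 2)
    {i : ℕ} (hi : i < c'.q) :
    ∃ j < c.q, (X + 1) * (c'.b i - c'.a i) ≤ X * (c.b j - c.a j) := by
  obtain ⟨j, hj, hsub⟩ := D.nest i hi
  refine ⟨j, hj, ?_⟩
  have hX0 : 0 ≤ X := by
    have := hE.one_le (eta_pos hη).le
    rw [hX]; positivity
  have hPP := D.P_le U
  have hP' := c'.P_pos
  have hP := c.P_pos
  have hxm : ∀ n, c'.x n ∈ Icc (c.a (n % c.q)) (c.b (n % c.q)) := fun n =>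
    c.iter_mem_mod ⟨by linarith, hP.le⟩ n
  have hym : ∀ n, c'.y n ∈ Icc (c.a (n % c.q)) (c.b (n % c.q)) := fun n =>
    c.iter_mem_mod ⟨by linarith, hPP⟩ n
  have hjm : i % c.q = j := by
    by_contra hne
    have h1 := hxm i
    have h2 := hym i
    have h3 := hsub (c'.x_mem hi)
    have h4 := hsub (c'.y_mem hi)
    apply c'.x_ne_y U hi
    rcases c.order (Nat.mod_lt i c.q_pos) hj hne with h | h
    · linarith [h1.2, h2.2, h3.1, h4.1]
    · linarith [h1.1, h2.1, h3.2, h4.2]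
  obtain ⟨i', hi', hne, hmod⟩ : ∃ i' < c'.q, i' ≠ i ∧ i' % c.q = j := by
    have hq := c.q_pos
    by_cases h : i + c.q < c'.q
    · exact ⟨i + c.q, h, by omega, by rw [Nat.add_mod_right, hjm]⟩
    · obtain ⟨s, hs⟩ := D.dvd
      have hlt := D.lt
      have hs2 : 2 ≤ s := by
        by_contra! h2
        interval_cases s <;> omega
      have : c.q * 2 ≤ c'.q := by rw [hs]; exact Nat.mul_le_mul_left _ hs2
      refine ⟨i - c.q, by omega, by omega, ?_⟩
      rw [← hjm, ← Nat.mod_eq_sub_mod (by omega)]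
  obtain ⟨u, v, hu, hv, h1, h2, h3, -⟩ := space_all U D' hη hE hτ hτ1 hτE hX hi
  have hab := c'.lt i hi
  have ha := (hsub (⟨le_rfl, hab.le⟩ : c'.a i ∈ Icc (c'.a i) (c'.b i))).1
  have hb := (hsub (⟨hab.le, le_rfl⟩ : c'.b i ∈ Icc (c'.a i) (c'.b i))).2
  have hx := hxm i'
  have hy := hym i'
  rw [hmod] at hx hy
  have hout : c.a j ≤ u ∨ v ≤ c.b j := by
    by_contra! h
    exact h3 i' hi' hne ⟨⟨h.1.trans_le hx.1, hx.2.trans_lt h.2⟩, ⟨h.1.trans_le hy.1,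
      hy.2.trans_lt h.2⟩⟩
  rcases hout with h | h <;> nlinarith

/-- Intervals away from the critical point are far from it relative to their length. -/
lemma away (U : UMap f α K) (D : Deeper c c') {E η τ X : ℝ}
    (hη : ∀ i < c.q, c.b i - c.a i ≤ η) (hE : DistBound K η E) (hτ : 0 < τ) (hτ1 : τ ≤ 1)
    (hτE : (1 + τ) ^ α ≤ 1 + 1 / (9 * E ^ 2)) (hX : X = E * (1 + 4 / τ) ^ 2)
    {i : ℕ} (hi : i + 1 < c.q) :
    c.b i - c.a i ≤ X * c.a i ∨ c.b i - c.a i ≤ X * (-c.b i) := by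
  have hX0 : 0 ≤ X := by
    have := hE.one_le (eta_pos hη).le
    rw [hX]; positivity
  obtain ⟨u, v, hu, hv, h1, h2, h3, h4⟩ := space_all U D hη hE hτ hτ1 hτE hX
    (show i < c.q by omega)
  rcases h4 hi with h | h
  · left; nlinarith
  · right; nlinarith

end RenCycle

/-- Geometric decay of the intervals of the renormalization cycles. -/
lemma IsRenTower.length_le {f : ℝ → ℝ} {α K B : ℝ} {M : ℕ} {T : ℕ → RenCycle f}
    (hT : IsRenTower f B M T) (U : UMap f α K) {τ X : ℝ} (hτ : 0 < τ) (hτ1 : τ ≤ 1)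
    (hτE : (1 + τ) ^ α ≤ 1 + 1 / (9 * Real.exp (12 * K) ^ 2))
    (hX : X = Real.exp (12 * K) * (1 + 4 / τ) ^ 2) (n : ℕ) (hn : n + 1 < M) :
    ∀ i < (T (n + 1)).q, (T (n + 1)).b i - (T (n + 1)).a i ≤ 2 * (X / (X + 1)) ^ n := by
  have hX0 : 0 < X := by rw [hX]; positivity
  have hD : ∀ k, 1 ≤ k → k < M → RenCycle.Deeper (T k) (T (k + 1)) := fun k h1 h2 =>
    ⟨(hT k h1 h2).1, (hT k h1 h2).2.1, (hT k h1 h2).2.2.2⟩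
  have h2 : ∀ k i, i < (T k).q → (T k).b i - (T k).a i ≤ 2 := fun k i hi => by
    linarith [(T k).a_ge hi, (T k).b_le hi]
  have hE : RenCycle.DistBound K 2 (Real.exp (12 * K)) := by
    intro u hu _
    have := U.K_nonneg
    rw [Real.exp_le_exp]
    nlinarith
  induction n with
  | zero => intro i hi; simpa using h2 _ i hi
  | succ n ih =>
    intro i hi
    obtain ⟨j, hj, h⟩ := RenCycle.shrink U (hD (n + 1) (by omega) (by omega))
      (hD (n + 1 + 1) (by omega) hn) (h2 _) hE hτ hτ1 hτE hX hi
    have h1 := ih (by omega) j hj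
    have h3 : (T (n + 1 + 1)).b i - (T (n + 1 + 1)).a i ≤
        X / (X + 1) * ((T (n + 1)).b j - (T (n + 1)).a j) := by
      rw [div_mul_eq_mul_div, le_div_iff₀ (by linarith)]
      linarith
    calc _ ≤ _ := h3
      _ ≤ X / (X + 1) * (2 * (X / (X + 1)) ^ n) := by gcongr
      _ = _ := by ring

/-! ### Univalent extensions of zooms -/

lemma mem_stadium {ε : ℝ} {z : ℂ} (hz : z ∈ stadium ε) :
    ∃ x ∈ Icc (-1 : ℝ) 1, ‖z - x‖ < ε := by
  have hne : realSeg.Nonempty := (Set.nonempty_Icc.2 (by norm_num)).image _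
  obtain ⟨w, ⟨x, hx, rfl⟩, h⟩ := (infDist_lt_iff hne).1 hz
  exact ⟨x, hx, by rwa [dist_eq_norm] at h⟩

lemma affine_image {u v : ℝ} (huv : u < v) :
    (fun y => 2 / (v - u) * y + -(u + v) / (v - u)) '' Icc u v = Icc (-1 : ℝ) 1 := by
  have h : 0 < v - u := by linarith
  rw [Set.image_affine_Icc' (by positivity)]
  congr 1 <;> field_simp <;> ring

/-- A zoom extends univalently to the `ε`-stadium as soon as the map extends univalently to a set
containing the correspondingly scaled neighbourhood of the interval. -/
lemma univZoomExt_of {g : ℝ → ℝ} {Ψ : ℂ → ℂ} {W : Set ℂ} {u v a b ε : ℝ} (huv : u < v)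
    (hab : a < b) (himg : g '' Icc u v = Icc a b) (hext : ∀ y ∈ Icc u v, Ψ (y : ℂ) = (g y : ℂ))
    (hd : DifferentiableOn ℂ Ψ W) (hi : InjOn Ψ W)
    (hW : ∀ w : ℂ, ∀ y ∈ Icc u v, ‖w - y‖ < (v - u) / 2 * ε → w ∈ W) :
    UnivZoomExt g (Icc u v) ε := by
  have h : 0 < v - u := by linarith
  have h' : 0 < b - a := by linarith
  set Q : ℂ → ℂ := fun ζ => ((v - u) / 2 : ℝ) * ζ + ((u + v) / 2 : ℝ) with hQ
  have hQW : MapsTo Q (stadium ε) W := by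
    intro ζ hζ
    obtain ⟨x, hx, hxζ⟩ := mem_stadium hζ
    refine hW _ ((v - u) / 2 * x + (u + v) / 2) ⟨?_, ?_⟩ ?_
    · nlinarith [hx.1]
    · nlinarith [hx.2]
    · have : Q ζ - (((v - u) / 2 * x + (u + v) / 2 : ℝ) : ℂ) = ((v - u) / 2 : ℝ) * (ζ - x) := by
        rw [hQ]; push_cast; ring
      rw [this, norm_mul, Complex.norm_real, Real.norm_of_nonneg (by linarith)]
      gcongr
  have hQi : Function.Injective Q := by
    intro z w hzw
    have h2 : (((v - u) / 2 : ℝ) : ℂ) ≠ 0 := by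
      rw [Complex.ofReal_ne_zero]; linarith
    exact mul_left_cancel₀ h2 (add_right_cancel hzw)
  refine ⟨fun ζ => ((2 / (b - a) : ℝ) : ℂ) * Ψ (Q ζ) + ((-(a + b) / (b - a) : ℝ) : ℂ),
    fun y => 2 / (v - u) * y + -(u + v) / (v - u), fun y => 2 / (b - a) * y + -(a + b) / (b - a),
    ⟨_, _, by positivity, rfl⟩, affine_image huv, ⟨_, _, by positivity, rfl⟩, ?_, ?_, ?_, ?_⟩
  · rw [himg]; exact affine_image hab
  · refine DifferentiableOn.add_const _ (DifferentiableOn.const_mul ?_ _)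
    refine hd.comp ?_ hQW
    rw [hQ]; fun_prop
  · intro z hz w hw hzw
    have h2 : ((2 / (b - a) : ℝ) : ℂ) ≠ 0 := by
      rw [Complex.ofReal_ne_zero]; positivity
    exact hQi (hi (hQW hz) (hQW hw) (mul_left_cancel₀ h2 (add_right_cancel hzw)))
  · intro y hy
    have hQy : Q ((2 / (v - u) * y + -(u + v) / (v - u) : ℝ) : ℂ) = (y : ℂ) := by
      rw [hQ]
      simp only
      norm_cast
      field_simp
      ring
    simp only [hQy]
    rw [hext y hy]
    push_cast
    rfl

/-- For an even map, reflecting the interval only changes the orientation of the affine chart. -/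
lemma UnivZoomExt.neg {g : ℝ → ℝ} {a b ε : ℝ} (hg : ∀ y, g (-y) = g y)
    (h : UnivZoomExt g (Icc (-b) (-a)) ε) : UnivZoomExt g (Icc a b) ε := by
  obtain ⟨G, A, B, ⟨c, d, hc, rfl⟩, hA, hB, hB', h1, h2, h3⟩ := h
  have hneg : (fun y : ℝ => -y) '' Icc a b = Icc (-b) (-a) := by
    rw [Set.image_neg_eq_neg, Set.neg_Icc]
  refine ⟨G, fun y => (-c) * y + d, B, ⟨-c, d, neg_ne_zero.2 hc, rfl⟩, ?_, hB, ?_, h1, h2, ?_⟩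
  · rw [← hA, ← hneg, image_image]
    exact image_congr fun y _ => by ring
  · rw [← hB', ← hneg, image_image _ (fun y : ℝ => -y)]
    simp only [hg]
  · intro y hy
    have := h3 (-y) ⟨by linarith [hy.2], by linarith [hy.1]⟩
    rw [hg] at this
    rw [← this]
    congr 2
    ring

lemma qmapR_neg (α t y : ℝ) : qmapR α t (-y) = qmapR α t y := by
  unfold qmapR; rw [abs_neg]

/-- The power map is univalent on a thin sector, so its zoom extends to a definite stadium on
intervals far from the origin. -/
lemma univZoomExt_qmap_pos {α t a b ε κ : ℝ} (hα : 1 < α) (ht : 0 < t) (ha : 0 < a) (hab : a < b)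
    (hκ : 0 < κ) (hκ2 : κ ≤ 1 / 2) (hκα : α * κ ≤ 1) (hε : (b - a) / 2 * ε ≤ κ * a) :
    UnivZoomExt (qmapR α t) (Icc a b) ε := by
  have hα0 : 0 < α := by linarith
  have hq : ∀ y ∈ Icc a b, qmapR α t y = -2 * t * y ^ α + 2 * t - 1 := fun y hy => by
    unfold qmapR; rw [abs_of_pos (ha.trans_le hy.1)]
  have hanti : StrictAntiOn (qmapR α t) (Icc a b) := by
    intro y hy z hz hyz
    rw [hq y hy, hq z hz]
    have := Real.rpow_lt_rpow (ha.le.trans hy.1) hyz hα0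
    nlinarith
  have hcont : ContinuousOn (qmapR α t) (Icc a b) := by
    have : Continuous (qmapR α t) := by
      unfold qmapR
      have : Continuous fun y : ℝ => |y| ^ α := continuous_abs.rpow_const fun _ => Or.inr hα0.le
      fun_prop
    exact this.continuousOn
  have hla : a ∈ Icc a b := ⟨le_rfl, hab.le⟩
  have hlb : b ∈ Icc a b := ⟨hab.le, le_rfl⟩
  have himg : qmapR α t '' Icc a b = Icc (qmapR α t b) (qmapR α t a) := by
    apply Subset.antisymm
    · rintro _ ⟨y, hy, rfl⟩
      exact ⟨hanti.antitoneOn hy hlb hy.2, hanti.antitoneOn hla hy hy.1⟩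
    · exact intermediate_value_Icc' hab.le hcont
  refine univZoomExt_of (Ψ := fun w => (-2 * t : ℝ) * w ^ (α : ℂ) + (2 * t - 1 : ℝ))
    (W := {w | 0 < w.re ∧ α * |w.arg| < Real.pi}) hab (hanti hla hlb hab) himg ?_ ?_ ?_ ?_
  · intro y hy
    rw [hq y hy]
    push_cast
    rw [Complex.ofReal_cpow (ha.le.trans hy.1)]
    ring
  · intro w hw
    refine DifferentiableAt.differentiableWithinAt ?_
    refine DifferentiableAt.add_const _ (DifferentiableAt.const_mul ?_ _)
    exact differentiableAt_id.cpow_const (Complex.mem_slitPlane_iff.2 (Or.inl hw.1))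
  · rintro z ⟨hz1, hz2⟩ w ⟨hw1, hw2⟩ hzw
    have h2 : ((-2 * t : ℝ) : ℂ) ≠ 0 := by
      rw [Complex.ofReal_ne_zero]; linarith
    have hz0 : z ≠ 0 := by rintro rfl; simp at hz1
    have hw0 : w ≠ 0 := by rintro rfl; simp at hw1
    have h3 : z ^ (α : ℂ) = w ^ (α : ℂ) := mul_left_cancel₀ h2 (add_right_cancel hzw)
    rw [Complex.cpow_def_of_ne_zero hz0, Complex.cpow_def_of_ne_zero hw0] at h3
    have him : ∀ v : ℂ, (Complex.log v * α).im = v.arg * α := by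
      intro v; rw [Complex.im_mul_ofReal, Complex.log_im]
    have hb : ∀ v : ℂ, α * |v.arg| < Real.pi → -Real.pi < v.arg * α ∧ v.arg * α ≤ Real.pi := by
      intro v hv
      have h4 := neg_abs_le v.arg
      have h5 := le_abs_self v.arg
      constructor <;> nlinarith
    have h4 := Complex.exp_inj_of_neg_pi_lt_of_le_pi
      (by rw [him]; exact (hb z hz2).1) (by rw [him]; exact (hb z hz2).2)
      (by rw [him]; exact (hb w hw2).1) (by rw [him]; exact (hb w hw2).2) h3
    have h5 : Complex.log z = Complex.log w :=
      mul_right_cancel₀ (Complex.ofReal_ne_zero.2 hα0.ne') h4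
    rw [← Complex.exp_log hz0, ← Complex.exp_log hw0, h5]
  · intro w y hy hwy
    have hy0 : 0 < y := ha.trans_le hy.1
    set ζ : ℂ := (w - y) / y with hζ
    have hyC : (y : ℂ) ≠ 0 := Complex.ofReal_ne_zero.2 hy0.ne'
    have hwe : w = (y : ℂ) * (1 + ζ) := by rw [hζ]; field_simp; ring
    have hζn : ‖ζ‖ < κ := by
      rw [hζ, norm_div, Complex.norm_real, Real.norm_of_nonneg hy0.le, div_lt_iff₀ hy0]
      nlinarith [hy.1]
    have hre : 0 < (1 + ζ).re := by
      have := (abs_le.1 (Complex.abs_re_le_norm ζ)).1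
      simp only [Complex.add_re, Complex.one_re]
      linarith
    refine ⟨?_, ?_⟩
    · rw [hwe, Complex.re_ofReal_mul]; exact mul_pos hy0 hre
    · rw [hwe, Complex.arg_real_mul _ hy0, ← Complex.log_im]
      have h1 := Complex.abs_im_le_norm (Complex.log (1 + ζ))
      have h2 := Complex.norm_log_one_add_half_le_self (z := ζ) (by linarith)
      have h3 : |(Complex.log (1 + ζ)).im| ≤ 3 / 2 * κ := by linarith
      have := Real.pi_gt_three
      nlinarith

lemma univZoomExt_qmap {α t a b ε κ X : ℝ} (hα : 1 < α) (ht : 0 < t) (hab : a < b)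
    (hX : 0 < X) (h : b - a ≤ X * a ∨ b - a ≤ X * (-b))
    (hκ : 0 < κ) (hκ2 : κ ≤ 1 / 2) (hκα : α * κ ≤ 1) (hε : 0 ≤ ε) (hεX : ε * X ≤ 2 * κ) :
    UnivZoomExt (qmapR α t) (Icc a b) ε := by
  have key : ∀ z, b - a ≤ X * z → 0 < z ∧ (b - a) / 2 * ε ≤ κ * z := by
    intro z hz
    have hz0 : 0 < z := by
      by_contra! h; nlinarith
    exact ⟨hz0, by nlinarith⟩
  rcases h with h | h
  · obtain ⟨h1, h2⟩ := key _ h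
    exact univZoomExt_qmap_pos hα ht h1 hab hκ hκ2 hκα h2
  · obtain ⟨h1, h2⟩ := key _ h
    refine UnivZoomExt.neg (qmapR_neg α t) ?_
    refine univZoomExt_qmap_pos hα ht h1 (by linarith) hκ hκ2 hκα ?_
    rwa [show -a - -b = b - a by ring]

/-- Zooms of the diffeomorphic factor on short intervals extend because the scaled stadium stays
inside `V`. -/
lemma UnivExt.univZoomExt {φ : ℝ → ℝ} {Φ : ℂ → ℂ} {V : Set ℂ} {r C m a b ε : ℝ}
    (H : UnivExt φ Φ V r C)
    (hlow : ∀ x ∈ Icc (-1 : ℝ) 1, ∀ y ∈ Icc (-1 : ℝ) 1, x ≤ y → m * (y - x) ≤ φ y - φ x)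
    (hm : 0 < m) (hε : 0 ≤ ε) (hab : a < b) (ha : -1 ≤ a) (hb : b ≤ 1)
    (hlen : (b - a) * ε ≤ 2 * m * r) :
    UnivZoomExt φ (Icc (-1 : ℝ) 1 ∩ φ ⁻¹' Icc a b) ε := by
  obtain ⟨u, hu, rfl⟩ : a ∈ φ '' Icc (-1 : ℝ) 1 := by rw [H.surj]; exact ⟨ha, by linarith⟩
  obtain ⟨v, hv, rfl⟩ : b ∈ φ '' Icc (-1 : ℝ) 1 := by rw [H.surj]; exact ⟨by linarith, hb⟩
  have huv : u < v := (H.mono.lt_iff_lt hu hv).1 hab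
  have hsub : Icc u v ⊆ Icc (-1 : ℝ) 1 := Icc_subset_Icc hu.1 hv.2
  have hsrc : Icc (-1 : ℝ) 1 ∩ φ ⁻¹' Icc (φ u) (φ v) = Icc u v := by
    ext z
    constructor
    · rintro ⟨hz, h1, h2⟩
      exact ⟨(H.mono.le_iff_le hu hz).1 h1, (H.mono.le_iff_le hz hv).1 h2⟩
    · intro hz
      exact ⟨hsub hz, H.mono.monotoneOn hu (hsub hz) hz.1, H.mono.monotoneOn (hsub hz) hv hz.2⟩
  have himg : φ '' Icc u v = Icc (φ u) (φ v) := by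
    rw [← hsrc, image_inter_preimage, H.surj, inter_eq_right]
    exact Icc_subset_Icc ha hb
  rw [hsrc]
  refine univZoomExt_of huv hab himg (fun y hy => H.ext y (hsub hy)) H.hol H.inj ?_
  intro w y hy hw
  apply H.ball_sub y (hsub hy)
  rw [mem_ball, dist_eq_norm]
  refine hw.trans_le ?_
  have h1 := hlow u hu v hv huv.le
  have h2 : m * ((v - u) / 2 * ε) ≤ m * r := by nlinarith
  exact le_of_mul_le_mul_left h2 hm

/-- A choice of `τ` that serves all exponents `α ≤ β`. -/
lemma exists_tau {β E : ℝ} (hE : 0 < E) :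
    ∃ τ, 0 < τ ∧ τ ≤ 1 ∧ ∀ α ≤ β, (1 + τ) ^ α ≤ 1 + 1 / (9 * E ^ 2) := by
  have hc : ContinuousAt (fun τ : ℝ => (1 + τ) ^ β) 0 :=
    (continuousAt_const.add continuousAt_id).rpow_const (Or.inl (by simp))
  have h1 : (fun τ : ℝ => (1 + τ) ^ β) 0 < 1 + 1 / (9 * E ^ 2) := by
    simp only [add_zero, Real.one_rpow]
    have : 0 < 1 / (9 * E ^ 2) := by positivity
    linarith
  have h2 := hc.eventually (gt_mem_nhds h1)
  obtain ⟨ρ, hρ, h3⟩ := Metric.eventually_nhds_iff.1 h2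
  refine ⟨min 1 (ρ / 2), by positivity, min_le_left _ _, fun α hα => ?_⟩
  have hτ : 0 < min 1 (ρ / 2) := by positivity
  have h4 : min 1 (ρ / 2) ≤ ρ / 2 := min_le_right _ _
  refine (Real.rpow_le_rpow_of_exponent_le (by linarith) hα).trans (h3 ?_).le
  rw [Real.dist_eq, sub_zero, abs_of_pos hτ]
  linarith

/-- A Lipschitz bound from the bound on the first derivative. -/
lemma lip_of_C3Bound {φ : ℝ → ℝ} {C : ℝ} (hd : DifferentiableOn ℝ φ (Icc (-1 : ℝ) 1))
    (hb : C3Bound φ C) :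
    ∀ x ∈ Icc (-1 : ℝ) 1, ∀ y ∈ Icc (-1 : ℝ) 1, |φ x - φ y| ≤ C * |x - y| := by
  intro x hx y hy
  have := Convex.norm_image_sub_le_of_norm_derivWithin_le (C := C) hd (fun z hz => by
    have := hb 1 (by norm_num) z hz
    rwa [iteratedDerivWithin_one] at this) (convex_Icc (-1 : ℝ) 1) hy hx
  simpa using this

/-- **Common domains of univalent extension for the zoomed maps (Theorem 4.3).**
Let `B > 0`, `α > 1`, `C > 0`.  There exist `δ > 0` and `ε > 0` such that for each open
`V ⊇ [-1,1]` there is `N ≥ 1` with: if `(φ, t)` is a unimodal pair, `M`-times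
renormalizable with combinatorics bounded by `B` (witnessed by the tower `T` of cycles
`I^n` of `f = φ ∘ q_t`) for some `M > N`, of critical order `α'` with `|α - α'| < δ`, if
`φ` extends to a univalent map `Φ` on `V` real on the real line, and
`|φ|_{C³([-1,1])} ≤ C`, then for all `N ≤ n < M` the zoomed maps
`φ₀ⁿ = Z_{φ⁻¹(I₁ⁿ)}(φ)`, `q_jⁿ = Z_{I_jⁿ}(q_t)` and `φ_jⁿ = Z_{φ⁻¹(I_{j+1}ⁿ)}(φ)`,
`j = 1, …, q_n - 1`, have univalent extensions to the `ε`-stadium `D_ε`. -/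
theorem stmt10 (B α C : ℝ) (hB : 0 < B) (hα : 1 < α) (hC : 0 < C) :
    ∃ δ > 0, ∃ ε > 0, ∀ V : Set ℂ, IsOpen V → realSeg ⊆ V →
      ∃ N : ℕ, 1 ≤ N ∧
        ∀ (α' t : ℝ) (φ : ℝ → ℝ) (Φ : ℂ → ℂ) (M : ℕ)
          (T : ℕ → RenCycle (fun x => φ (qmapR α' t x))),
          1 < α' → |α - α'| < δ →
          UnimodalPair φ t → C3Bound φ C →
          DifferentiableOn ℂ Φ V → Set.InjOn Φ V →
          (∀ x ∈ Set.Icc (-1 : ℝ) 1, Φ ((x : ℝ) : ℂ) = ((φ x : ℝ) : ℂ)) →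
          (∀ x : ℝ, ((x : ℝ) : ℂ) ∈ V → (Φ ((x : ℝ) : ℂ)).im = 0) →
          IsRenTower (fun x => φ (qmapR α' t x)) B M T →
          N < M →
          ∀ n, N ≤ n → n < M →
            UnivZoomExt φ
              (Set.Icc (-1 : ℝ) 1 ∩ φ ⁻¹' Set.Icc ((T n).a 0) ((T n).b 0)) ε ∧
            ∀ k, k + 1 < (T n).q →
              UnivZoomExt (qmapR α' t) (Set.Icc ((T n).a k) ((T n).b k)) ε ∧
              UnivZoomExt φ
                (Set.Icc (-1 : ℝ) 1 ∩ φ ⁻¹' Set.Icc ((T n).a (k + 1)) ((T n).b (k + 1))) ε := by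
  obtain ⟨τ, hτ, hτ1, hτE⟩ := exists_tau (β := α + 1) (Real.exp_pos 1)
  set X := Real.exp 1 * (1 + 4 / τ) ^ 2 with hX
  have hX0 : 0 < X := by positivity
  set κ := min (1 / 2) (1 / (α + 1)) with hκ
  have hκ0 : 0 < κ := by positivity
  set ε := 2 * κ / X with hε
  have hε0 : 0 < ε := by positivity
  have hεX : ε * X ≤ 2 * κ := by rw [hε, div_mul_cancel₀ _ hX0.ne']
  refine ⟨1, one_pos, ε, hε0, fun V hV hseg => ?_⟩
  have hcomp : IsCompact realSeg := isCompact_Icc.image Complex.continuous_ofReal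
  obtain ⟨r₀, hr₀, hthick⟩ := hcomp.exists_thickening_subset_open hV hseg
  set r := min r₀ (1 / (4 * C)) with hr
  have hr0 : 0 < r := by positivity
  have hrC : C * r ≤ 1 / 4 := by
    calc C * r ≤ C * (1 / (4 * C)) := by gcongr; exact min_le_right _ _
      _ = 1 / 4 := by field_simp
  -- lower bound for the derivative of `φ`
  set m := (UnivExt.step' r)^[⌈8 / r⌉₊] 1 with hm
  have hm0 : 0 < m := UnivExt.iterate_step_pos r _
  set K := 10 * C ^ 2 / m ^ 4 + C / m ^ 2 with hK
  have hK0 : 0 < K := by positivity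
  -- constants giving the rate of decay, for distortion at most `exp (12 * K)` at any scale
  obtain ⟨τ₁, hτ₁, hτ₁1, hτ₁E⟩ := exists_tau (β := α + 1) (Real.exp_pos (12 * K))
  set X₁ := Real.exp (12 * K) * (1 + 4 / τ₁) ^ 2 with hX₁
  have hX₁0 : 0 < X₁ := by positivity
  -- the scale below which distortion is at most `e` and the scaled stadium fits into `V`
  set η := min (1 / (K * (6 * (8 * Real.exp (12 * K) + 1)))) (2 * m * r / ε) with hη
  have hη0 : 0 < η := by positivity
  obtain ⟨N, hN⟩ := exists_pow_lt_of_lt_one (show 0 < η / 2 by positivity)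
    (show X₁ / (X₁ + 1) < 1 by rw [div_lt_one (by positivity)]; linarith)
  refine ⟨N + 1, by omega, ?_⟩
  intro α' t φ Φ M T hα' hαα ⟨ht, hl, hr1, hmono, hcd, hsurj⟩ hC3 hhol hinj hext _ hT hNM n hn hnM
  have hα'β : α' ≤ α + 1 := by linarith [(abs_lt.1 hαα).1]
  have ht0 : 0 < t := by
    refine lt_of_le_of_ne ht.1 fun h => ?_
    have hab := (T n).lt 0 (T n).q_pos
    have := (T n).maps_inj 0 (T n).one_lt (⟨le_rfl, hab.le⟩ : (T n).a 0 ∈ Icc _ _)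
      (⟨hab.le, le_rfl⟩ : (T n).b 0 ∈ Icc _ _) (by simp [qmapR, ← h])
    linarith
  have H : UnivExt φ Φ V r C :=
    { r_pos := hr0
      small := hrC
      ball_sub := fun x hx => by
        refine Subset.trans ?_ hthick
        refine (ball_subset_ball (min_le_left _ _)).trans ?_
        exact ball_subset_thickening (mem_image_of_mem _ hx) _
      hol := hhol
      inj := hinj
      ext := hext
      left := hl
      right := hr1
      mono := hmono
      surj := hsurj
      lip := lip_of_C3Bound (hcd.differentiableOn one_ne_zero) hC3 }
  have HD := H.c3data hC.le hC3
  have U : UMap (fun x => φ (qmapR α' t x)) α' K := umap_of HD hα' ht0 ht.2 hl hr1 hmono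
  have hlen : ∀ i < (T n).q, (T n).b i - (T n).a i ≤ η := by
    obtain ⟨n', rfl⟩ : ∃ n', n = n' + 1 := ⟨n - 1, by omega⟩
    intro i hi
    refine (hT.length_le U hτ₁ hτ₁1 (hτ₁E α' hα'β) hX₁ n' hnM i hi).trans ?_
    have : (X₁ / (X₁ + 1)) ^ n' ≤ (X₁ / (X₁ + 1)) ^ N :=
      pow_le_pow_of_le_one (by positivity) (by rw [div_le_one (by positivity)]; linarith)
        (by omega)
    linarith
  have hE : RenCycle.DistBound K η (Real.exp 1) := by
    intro u _ hu
    rw [Real.exp_le_exp]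
    have h1 : η * (K * (6 * (8 * Real.exp (12 * K) + 1))) ≤ 1 := by
      rw [← le_div_iff₀ (by positivity)]; exact min_le_left _ _
    nlinarith
  have hφ : ∀ k < (T n).q, UnivZoomExt φ
      (Set.Icc (-1 : ℝ) 1 ∩ φ ⁻¹' Set.Icc ((T n).a k) ((T n).b k)) ε := by
    intro k hk
    refine H.univZoomExt (fun x hx y hy hxy => HD.lower hx hy hxy) hm0 hε0.le ((T n).lt k hk)
      ((T n).a_ge hk) ((T n).b_le hk) ?_
    rw [← le_div_iff₀ hε0]
    exact (hlen k hk).trans (min_le_right _ _)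
  have hn1 : 1 ≤ n := by omega
  have D : RenCycle.Deeper (T n) (T (n + 1)) :=
    ⟨(hT n hn1 hnM).1, (hT n hn1 hnM).2.1, (hT n hn1 hnM).2.2.2⟩
  refine ⟨hφ 0 (T n).q_pos, fun k hk => ⟨?_, hφ (k + 1) hk⟩⟩
  have hκα : α' * κ ≤ 1 := by
    calc α' * κ ≤ (α + 1) * (1 / (α + 1)) := by gcongr; exact min_le_right _ _
      _ = 1 := by field_simp
  exact univZoomExt_qmap hα' ht0 ((T n).lt k (by omega)) hX0
    (RenCycle.away U D hlen hE hτ hτ1 (hτE α' hα'β) hX hk) hκ0 (min_le_left _ _) hκα hε0.le hεX
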